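/- arXiv:0910.2055 — 2 statements merged into one kernel-verified Lean document; each statement's English description precedes it below -/
import Mathlib

section
/- Let V be a 24-dimensional real inner product space and Υ a lattice in V such that √2·Υ is even unimodular with minimum norm 4 (a Leech lattice). Then there exists a polarization M, N of Υ (integral sublattices with M + N = Υ and M ∩ N = 2Υ) such that both M and N are even unimodular lattices with minimum norm 4 (copies of the Leech lattice). -/
noncomputable section

open scoped RealInnerProductSpace Pointwise
open Module

variable {V : Type*} [NormedAddCommGroup V] [InnerProductSpace ℝ V]

/-- `L` is a (full) lattice in `V`: a finitely generated `ℤ`-submodule spanning `V` over `ℝ`. -/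
def IsLat (L : Submodule ℤ V) : Prop :=
  L.FG ∧ Submodule.span ℝ (L : Set V) = ⊤

/-- The lattice `L` is integral: all inner products of lattice vectors are integers. -/
def IsIntegralLat (L : Submodule ℤ V) : Prop :=
  ∀ x ∈ L, ∀ y ∈ L, ∃ n : ℤ, ⟪x, y⟫ = (n : ℝ)

/-- The lattice `L` is even: it is integral and all norms are even integers. -/
def IsEvenLat (L : Submodule ℤ V) : Prop :=
  IsIntegralLat L ∧ ∀ x ∈ L, ∃ n : ℤ, ⟪x, x⟫ = 2 * (n : ℝ)

/-- The lattice `L` is unimodular: the Gram matrix of some `ℤ`-basis has determinant 1. -/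
def IsUnimodularLat (L : Submodule ℤ V) : Prop :=
  ∃ (n : ℕ) (b : Basis (Fin n) ℤ L),
    (Matrix.of fun i j : Fin n => ⟪(b i : V), (b j : V)⟫).det = 1

/-- The minimum norm `μ(L)` of a lattice. -/
def minNorm (L : Submodule ℤ V) : ℝ :=
  sInf {r : ℝ | ∃ x ∈ L, x ≠ 0 ∧ ⟪x, x⟫ = r}

/-- `√2·Υ` is an even unimodular lattice: all norms of `Υ` are integers, all doubled inner
products are integers, and the Gram matrix of the form `2⟪·,·⟫` on a `ℤ`-basis of `Υ` has
determinant 1. -/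
def SqrtTwoEvenUnimod (Υ : Submodule ℤ V) : Prop :=
  (∀ x ∈ Υ, ∃ n : ℤ, ⟪x, x⟫ = (n : ℝ)) ∧
  (∀ x ∈ Υ, ∀ y ∈ Υ, ∃ n : ℤ, 2 * ⟪x, y⟫ = (n : ℝ)) ∧
  ∃ (n : ℕ) (b : Basis (Fin n) ℤ Υ),
    (Matrix.of fun i j : Fin n => 2 * ⟪(b i : V), (b j : V)⟫).det = 1

/-- `M, N` is a polarization of `Υ`: a pair of integral sublattices with
`M + N = Υ` and `M ∩ N = 2Υ`. -/
def IsPolarization (Υ M N : Submodule ℤ V) : Prop :=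
  M ≤ Υ ∧ N ≤ Υ ∧ IsIntegralLat M ∧ IsIntegralLat N ∧ M ⊔ N = Υ ∧ M ⊓ N = (2 : ℤ) • Υ

/-- The sublattice `L_M = {(x_1,…,x_k) ∈ M^k : x_1+⋯+x_k ∈ M ∩ N}` of `V^k`. -/
def LsubM (M N : Submodule ℤ V) (k : ℕ) : Submodule ℤ (PiLp 2 fun _ : Fin k => V) where
  carrier := {v | (∀ i, v i ∈ M) ∧ (∑ i, v i) ∈ M ⊓ N}
  add_mem' := fun {a b} ha hb =>
    ⟨fun i => M.add_mem (ha.1 i) (hb.1 i), by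
      have h : (∑ i, (a + b) i) = (∑ i, a i) + ∑ i, b i :=
        (Finset.sum_congr rfl fun i _ => rfl).trans Finset.sum_add_distrib
      rw [h]; exact (M ⊓ N).add_mem ha.2 hb.2⟩
  zero_mem' := ⟨fun _ => M.zero_mem, by
      have h : (∑ i : Fin k, (0 : PiLp 2 fun _ : Fin k => V) i) = 0 :=
        Finset.sum_eq_zero fun _ _ => rfl
      rw [h]; exact (M ⊓ N).zero_mem⟩
  smul_mem' := fun c a ha =>
    ⟨fun i => M.smul_mem c (ha.1 i), by
      have h : (∑ i, (c • a) i) = c • ∑ i, a i := by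
        show (∑ i, c • a i) = c • ∑ i, a i
        exact Finset.smul_sum.symm
      rw [h]; exact (M ⊓ N).smul_mem c ha.2⟩

/-- The diagonal sublattice `L^N = {(y,…,y) : y ∈ N}` of `V^k`. -/
def LsupN (N : Submodule ℤ V) (k : ℕ) : Submodule ℤ (PiLp 2 fun _ : Fin k => V) where
  carrier := {v | ∃ y ∈ N, ∀ i, v i = y}
  add_mem' := fun {a b} ha hb => by
    obtain ⟨ya, hya, ha⟩ := ha
    obtain ⟨yb, hyb, hb⟩ := hb
    exact ⟨ya + yb, N.add_mem hya hyb, fun i => by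
      show a i + b i = ya + yb
      rw [ha i, hb i]⟩
  zero_mem' := ⟨0, N.zero_mem, fun _ => rfl⟩
  smul_mem' := fun c a ha => by
    obtain ⟨y, hy, h⟩ := ha
    exact ⟨c • y, N.smul_mem c hy, fun i => by
      show c • a i = c • y
      rw [h i]⟩

/-- The lattice `L(M,N,k) = L_M + L^N ⊆ V^k`. -/
def LMN (M N : Submodule ℤ V) (k : ℕ) : Submodule ℤ (PiLp 2 fun _ : Fin k => V) :=
  LsubM M N k ⊔ LsupN N k

/-- The Leech polarization setup: `V` is 24-dimensional, `√2·Υ` is even unimodular with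
minimum norm 4, and `M, N` is a polarization of `Υ` by two copies of the Leech lattice. -/
def LeechSetup (Υ M N : Submodule ℤ V) : Prop :=
  Module.finrank ℝ V = 24 ∧ IsLat Υ ∧ SqrtTwoEvenUnimod Υ ∧
  (∀ v ∈ Υ, v ≠ 0 → 4 ≤ 2 * ⟪v, v⟫) ∧
  IsPolarization Υ M N ∧
  IsLat M ∧ IsEvenLat M ∧ IsUnimodularLat M ∧ minNorm M = 4 ∧
  IsLat N ∧ IsEvenLat N ∧ IsUnimodularLat N ∧ minNorm N = 4

/-- `(w,x,y,z) ∈ N × M × M × M` is admissible if `x + y + z ∈ M ∩ N`. -/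
def Admissible (M N : Submodule ℤ V) (w x y z : V) : Prop :=
  w ∈ N ∧ x ∈ M ∧ y ∈ M ∧ z ∈ M ∧ x + y + z ∈ M ⊓ N

/-- An offender is an admissible quadruple all three of whose associated vectors
`w+x, w+y, w+z` have norm 2. -/
def Offender (M N : Submodule ℤ V) (w x y z : V) : Prop :=
  Admissible M N w x y z ∧
  ⟪w + x, w + x⟫ = 2 ∧ ⟪w + y, w + y⟫ = 2 ∧ ⟪w + z, w + z⟫ = 2

/-- A super offender is an offender with `⟪w,w⟫ = 4` whose multiset of norms
`{⟪x,x⟫, ⟪y,y⟫, ⟪z,z⟫}` equals `{6,6,4}`. -/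
def SuperOffender (M N : Submodule ℤ V) (w x y z : V) : Prop :=
  Offender M N w x y z ∧ ⟪w, w⟫ = 4 ∧
  ({⟪x, x⟫, ⟪y, y⟫, ⟪z, z⟫} : Multiset ℝ) = ({6, 6, 4} : Multiset ℝ)

/-!
The theta series of a Leech lattice `L` is a modular form of weight `12`, which yields the numbers
of vectors of norm `4`, `6` and `8`. Comparing them with the index of `2L` in `L`, one finds a class
modulo `2L` containing `24` mutually orthogonal pairs `±f i` of vectors of norm `8`. In the
coordinates given by suitably signed `f i`, the vectors of `L` with even coordinates reduce to the
binary Golay code, and a trio of octads brings this code into Turyn's form. For `d` in `(ℤ/2)³`, the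
word with support `{0, d}` on each octad lies in the code up to a linear form `ℓ d`; the characters
`(-1) ^ ℓ d` are, up to signs, the columns of a Hadamard matrix `B` with `B + Bᵀ = 2` and
`Bᵀ B = 8`. Acting by `B / 2` on each of the three octads preserves `L` and defines an endomorphism
`φ` with `φ² = φ - 2` and `⟪φ x, φ y⟫ = 2 ⟪x, y⟫`. Hence `φ Υ` and `(1 - φ) Υ` are Leech lattices;
their sum is `Υ` since `φ + (1 - φ) = 1`, and their intersection is `2 Υ` since `φ (1 - φ) = 2`.
-/

section Poisson

open MeasureTheory Set TopologicalSpace UnitAddTorus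
open scoped Real

variable {d : Type*}

/-- The integer vector `m`, as a point of the real coordinate space. -/
def intPoint (m : d → ℤ) : d → ℝ := fun i ↦ m i

lemma intPoint_add (m n : d → ℤ) : intPoint (m + n) = intPoint m + intPoint n := by
  ext i
  simp [intPoint]

/-- The half-open unit cube with lower corner `m`; the integer translates of one cube tile the
space. -/
def unitCube (m : d → ℤ) : Set (d → ℝ) := {x | ∀ i, x i ∈ Ioc (m i : ℝ) (m i + 1)}

lemma unitCube_eq_preimage_ceil (m : d → ℤ) :
    unitCube m = (fun (x : d → ℝ) i ↦ ⌈x i⌉ - 1) ⁻¹' {m} := by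
  ext x
  simp only [unitCube, mem_ofPred_eq, mem_preimage, mem_singleton_iff, funext_iff, mem_Ioc,
    sub_eq_iff_eq_add, Int.ceil_eq_iff]
  push_cast
  simp only [add_sub_cancel_right]

lemma pairwise_disjoint_unitCube : Pairwise (Function.onFun Disjoint (unitCube (d := d))) := by
  intro m n hmn
  simp only [Function.onFun, unitCube_eq_preimage_ceil]
  exact (disjoint_singleton.2 hmn).preimage _

lemma iUnion_unitCube : ⋃ m : d → ℤ, unitCube m = univ := by
  simp only [unitCube_eq_preimage_ceil, ← preimage_iUnion, iUnion_of_singleton, preimage_univ]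

lemma unitCube_zero_subset_Icc : unitCube (0 : d → ℤ) ⊆ Icc 0 1 := fun x hx ↦
  ⟨fun i ↦ by simpa using (hx i).1.le, fun i ↦ by simpa using (hx i).2⟩

lemma add_right_preimage_unitCube (m : d → ℤ) :
    (· + intPoint m) ⁻¹' unitCube m = unitCube 0 := by
  ext x
  simp [unitCube, intPoint, add_comm _ (1 : ℝ)]

lemma measurableSet_unitCube [Countable d] (m : d → ℤ) : MeasurableSet (unitCube m) := by
  have : unitCube m = univ.pi fun i ↦ Ioc (m i : ℝ) (m i + 1) := by
    ext x
    simp [unitCube]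
  rw [this]
  exact .univ_pi fun i ↦ measurableSet_Ioc

/-- The projection of the coordinate space onto the torus. -/
def toTorus : C(d → ℝ, UnitAddTorus d) := ⟨fun x i ↦ x i, by fun_prop⟩

lemma isQuotientMap_toTorus : Topology.IsQuotientMap (toTorus (d := d)) :=
  (IsOpenQuotientMap.piMap fun _ ↦ QuotientAddGroup.isOpenQuotientMap_mk).isQuotientMap

lemma exists_eq_add_intPoint {x y : d → ℝ} (hxy : toTorus x = toTorus y) :
    ∃ m : d → ℤ, y = x + intPoint m := by
  have (i : d) : ∃ k : ℤ, k • (1 : ℝ) = y i - x i := by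
    rw [← AddCircle.coe_eq_zero_iff, AddCircle.coe_sub, sub_eq_zero]
    exact (congrFun hxy i).symm
  choose m hm using this
  refine ⟨m, funext fun i ↦ ?_⟩
  simpa [intPoint, sub_eq_iff_eq_add', eq_comm] using (hm i).symm

lemma toTorus_add_intPoint (x : d → ℝ) (m : d → ℤ) : toTorus (x + intPoint m) = toTorus x := by
  ext i
  simp [toTorus, intPoint]

/-- The sum of the integer translates of `f` converges absolutely, locally uniformly. -/
def SummableTranslates (f : C(d → ℝ, ℂ)) : Prop :=
  ∀ K : Compacts (d → ℝ),
    Summable fun m : d → ℤ ↦ ‖(f.comp (ContinuousMap.addRight (intPoint m))).restrict K‖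

lemma SummableTranslates.tsum_apply [Finite d] {f : C(d → ℝ, ℂ)} (hf : SummableTranslates f)
    (x : d → ℝ) : (∑' m : d → ℤ, f.comp (ContinuousMap.addRight (intPoint m))) x =
      ∑' m, f (x + intPoint m) :=
  (ContinuousMap.tsum_apply (ContinuousMap.summable_of_locally_summable_norm hf) x).symm

lemma SummableTranslates.factorsThrough_tsum [Finite d] {f : C(d → ℝ, ℂ)}
    (hf : SummableTranslates f) : Function.FactorsThrough
      (⇑(∑' m : d → ℤ, f.comp (ContinuousMap.addRight (intPoint m)))) toTorus := by
  intro x y hxy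
  obtain ⟨k, rfl⟩ := exists_eq_add_intPoint hxy
  rw [hf.tsum_apply, hf.tsum_apply, ← (Equiv.addLeft k).tsum_eq]
  simp only [Equiv.coe_addLeft, intPoint_add, add_assoc]

/-- The sum of the integer translates of `f`, as a function on the torus. -/
def SummableTranslates.periodization [Finite d] {f : C(d → ℝ, ℂ)} (hf : SummableTranslates f) :
    C(UnitAddTorus d, ℂ) :=
  isQuotientMap_toTorus.lift (∑' m, f.comp (ContinuousMap.addRight (intPoint m)))
    hf.factorsThrough_tsum

lemma SummableTranslates.periodization_toTorus [Finite d] {f : C(d → ℝ, ℂ)}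
    (hf : SummableTranslates f) (x : d → ℝ) :
    hf.periodization (toTorus x) = ∑' m, f (x + intPoint m) := by
  rw [periodization, ← ContinuousMap.comp_apply, Topology.IsQuotientMap.lift_comp, hf.tsum_apply]

variable [Fintype d]

lemma setIntegral_unitCube {E : Type*} [NormedAddCommGroup E] [NormedSpace ℝ E]
    (f : (d → ℝ) → E) (m : d → ℤ) :
    ∫ x in unitCube m, f x = ∫ x in unitCube 0, f (x + intPoint m) := by
  rw [← add_right_preimage_unitCube m]
  exact ((measurePreserving_add_right volume (intPoint m)).setIntegral_preimage_emb
    (MeasurableEquiv.addRight _).measurableEmbedding f (unitCube m)).symm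

lemma integrableOn_unitCube_iff {f : (d → ℝ) → ℂ} (m : d → ℤ) :
    IntegrableOn f (unitCube m) ↔ IntegrableOn (fun x ↦ f (x + intPoint m)) (unitCube 0) := by
  rw [← add_right_preimage_unitCube m]
  exact ((measurePreserving_add_right volume (intPoint m)).integrableOn_comp_preimage
    (MeasurableEquiv.addRight _).measurableEmbedding).symm

theorem integral_tsum_translates {f : C(d → ℝ, ℂ)} (hf : SummableTranslates f) :
    ∫ x in unitCube (0 : d → ℤ), ∑' m, f (x + intPoint m) = ∫ x, f x := by
  let K : Compacts (d → ℝ) := ⟨Icc 0 1, isCompact_Icc⟩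
  have volume_lt : volume (unitCube (0 : d → ℤ)) < ⊤ :=
    (measure_mono unitCube_zero_subset_Icc).trans_lt K.isCompact.measure_lt_top
  have le_norm (m : d → ℤ) : ∀ x ∈ unitCube (0 : d → ℤ), ‖f (x + intPoint m)‖ ≤
      ‖(f.comp (ContinuousMap.addRight (intPoint m))).restrict K‖ := fun x hx ↦ by
    have hxK : x ∈ (K : Set (d → ℝ)) := unitCube_zero_subset_Icc hx
    simpa using! ((f.comp (ContinuousMap.addRight (intPoint m))).restrict K).norm_coe_le_norm
      ⟨x, hxK⟩
  have int_translate (m : d → ℤ) :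
      IntegrableOn (fun x ↦ f (x + intPoint m)) (unitCube 0) :=
    .of_bound volume_lt (by fun_prop) _
      ((ae_restrict_mem (measurableSet_unitCube 0)).mono (le_norm m))
  have summable_norm : Summable fun m : d → ℤ ↦ ∫ x in unitCube 0, ‖f (x + intPoint m)‖ := by
    refine .of_nonneg_of_le (fun m ↦ integral_nonneg fun x ↦ norm_nonneg _) (fun m ↦ ?_)
      ((hf K).mul_right (volume.real (unitCube (0 : d → ℤ))))
    refine (Real.le_norm_self _).trans ?_
    refine norm_setIntegral_le_of_norm_le_const volume_lt fun x hx ↦ ?_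
    simpa only [norm_norm] using le_norm m x hx
  have int_f : Integrable f := by
    rw [← integrableOn_univ, ← iUnion_unitCube]
    refine integrableOn_iUnion_of_summable_integral_norm
      (fun m ↦ (integrableOn_unitCube_iff m).2 (int_translate m)) ?_
    simpa only [setIntegral_unitCube (fun x ↦ ‖f x‖)] using summable_norm
  rw [← integral_tsum_of_summable_integral_norm int_translate summable_norm, ← setIntegral_univ,
    ← iUnion_unitCube, integral_iUnion measurableSet_unitCube pairwise_disjoint_unitCube
      int_f.integrableOn]
  simp_rw [setIntegral_unitCube f]

lemma norm_mFourier_apply (n : d → ℤ) (z : UnitAddTorus d) : ‖mFourier n z‖ = 1 := by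
  simp only [mFourier, ContinuousMap.coe_mk, norm_prod, fourier_apply, Circle.norm_coe,
    Finset.prod_const_one]

lemma SummableTranslates.mFourier_mul {f : C(d → ℝ, ℂ)} (hf : SummableTranslates f) (n : d → ℤ) :
    SummableTranslates ((mFourier n).comp toTorus * f) := by
  refine fun K ↦ (hf K).congr fun m ↦ ?_
  simp_rw [ContinuousMap.norm_eq_iSup_norm, ContinuousMap.restrict_apply, ContinuousMap.comp_apply,
    ContinuousMap.mul_apply, norm_mul, ContinuousMap.comp_apply, norm_mFourier_apply, one_mul]

local instance : MeasureSpace UnitAddCircle := ⟨AddCircle.haarAddCircle⟩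

theorem SummableTranslates.mFourierCoeff_periodization {f : C(d → ℝ, ℂ)}
    (hf : SummableTranslates f) (n : d → ℤ) :
    mFourierCoeff hf.periodization n = ∫ x, mFourier (-n) (toTorus x) * f x := by
  have cube_eq : {x : d → ℝ | ∀ i, x i ∈ Ioc ((0 : d → ℝ) i) ((0 : d → ℝ) i + 1)} =
      unitCube 0 := by
    simp [unitCube]
  calc mFourierCoeff hf.periodization n
      = ∫ x in unitCube 0, mFourier (-n) (toTorus x) * hf.periodization (toTorus x) := by
        rw [mFourierCoeff_eq_integral _ _ 0, cube_eq]
        rfl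
    _ = ∫ x in unitCube 0, ∑' m, ((mFourier (-n)).comp toTorus * f) (x + intPoint m) := by
        simp only [hf.periodization_toTorus, ← tsum_mul_left, ContinuousMap.mul_apply,
          ContinuousMap.comp_apply, toTorus_add_intPoint]
    _ = ∫ x, mFourier (-n) (toTorus x) * f x := integral_tsum_translates (hf.mFourier_mul (-n))

theorem SummableTranslates.tsum_eq_tsum_integral_mFourier {f : C(d → ℝ, ℂ)}
    (hf : SummableTranslates f)
    (hs : Summable fun n : d → ℤ ↦ ∫ x, mFourier (-n) (toTorus x) * f x) :
    ∑' m : d → ℤ, f (intPoint m) = ∑' n : d → ℤ, ∫ x, mFourier (-n) (toTorus x) * f x := by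
  simp only [← hf.mFourierCoeff_periodization] at hs ⊢
  have hasSum := hasSum_mFourier_series_apply_of_summable hs (toTorus 0)
  have mFourier_zero (n : d → ℤ) : mFourier n (toTorus (0 : d → ℝ)) = 1 := by
    simp [mFourier, toTorus]
  simpa only [mFourier_zero, smul_eq_mul, mul_one, hf.periodization_toTorus, zero_add]
    using hasSum.tsum_eq.symm

end Poisson

section UnimodularBasis

open MeasureTheory Set Submodule
open scoped Real FourierTransform

variable {ι : Type*} [Fintype ι] [DecidableEq ι] {b : Basis ι ℝ V}

/-- `b` is a basis of an integral unimodular lattice, namely of its `ℤ`-span. -/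
structure IsUnimodularBasis (b : Basis ι ℝ V) : Prop where
  exists_inner_eq_intCast : ∀ i j, ∃ k : ℤ, ⟪b i, b j⟫ = k
  det_gram : (Matrix.gram ℝ b).det = 1

lemma IsUnimodularLat.exists_isUnimodularBasis {L : Submodule ℤ V} (hu : IsUnimodularLat L)
    (hL : IsLat L) (hi : IsIntegralLat L) :
    ∃ (n : ℕ) (b : Basis (Fin n) ℝ V), IsUnimodularBasis b ∧ span ℤ (range b) = L := by
  obtain ⟨n, e, he⟩ := hu
  have span_eq : span ℤ (range fun i ↦ (e i : V)) = L := by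
    rw [range_comp' Subtype.val e, ← L.coe_subtype, ← map_span, e.span_eq, Submodule.map_top,
      range_subtype]
  have det_gram : (Matrix.gram ℝ fun i ↦ (e i : V)).det = 1 := he
  have linearIndependent : LinearIndependent ℝ fun i ↦ (e i : V) :=
    Matrix.linearIndependent_of_det_gram_ne_zero (by simp [det_gram])
  let b : Basis (Fin n) ℝ V := .mk linearIndependent <| by
    rw [← hL.2, span_le]
    exact span_eq.symm.le.trans (span_le_restrictScalars ℤ ℝ _)
  have coe_b : ⇑b = fun i ↦ (e i : V) := Basis.coe_mk _ _
  refine ⟨n, b, ⟨fun i j ↦ ?_, by rwa [coe_b]⟩, by rwa [coe_b]⟩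
  simpa only [coe_b] using hi _ (e i).2 _ (e j).2

namespace IsUnimodularBasis

variable (hb : IsUnimodularBasis b)
include hb

lemma exists_inner_eq (k : ι → ℤ) : ∃ w ∈ span ℤ (range b), ∀ i, ⟪b i, w⟫ = k i := by
  choose G hG using hb.exists_inner_eq_intCast
  have det_G : (Matrix.of G).det = 1 := by
    have gram_eq : Matrix.gram ℝ b = (Matrix.of G).map Int.cast := by
      ext i j
      simp [Matrix.gram_apply, hG]
    have det_gram := hb.det_gram
    rw [gram_eq, ← Int.cast_det] at det_gram
    exact_mod_cast det_gram
  let c := (Matrix.of G)⁻¹.mulVec k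
  have mulVec_c : (Matrix.of G).mulVec c = k := by
    rw [Matrix.mulVec_mulVec, Matrix.mul_nonsing_inv _ (by simp [det_G]), Matrix.one_mulVec]
  refine ⟨∑ j, c j • b j, sum_mem fun j _ ↦ smul_mem _ _ (subset_span ⟨j, rfl⟩), fun i ↦ ?_⟩
  rw [← mulVec_c]
  simp [inner_sum, inner_smul_right_eq_smul, Matrix.mulVec, dotProduct, hG, mul_comm]

lemma mem_span_of_forall_inner {x : V} (hx : ∀ i, ∃ k : ℤ, ⟪b i, x⟫ = k) :
    x ∈ span ℤ (range b) := by
  choose k hk using hx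
  obtain ⟨w, hw, inner_w⟩ := hb.exists_inner_eq k
  rwa [InnerProductSpace.ext_inner_left_basis b fun i ↦ (hk i).trans (inner_w i).symm]

/-- The vector of the unimodular lattice spanned by `b` whose inner products with `b` are `k`. -/
def dualVector (k : ι → ℤ) : span ℤ (range b) :=
  ⟨(hb.exists_inner_eq k).choose, (hb.exists_inner_eq k).choose_spec.1⟩

lemma inner_dualVector (k : ι → ℤ) (i : ι) : ⟪b i, hb.dualVector k⟫ = k i :=
  (hb.exists_inner_eq k).choose_spec.2 i

lemma exists_inner_eq_intCast_of_mem {w : V} (hw : w ∈ span ℤ (range b)) (i : ι) :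
    ∃ k : ℤ, ⟪b i, w⟫ = k := by
  induction hw using span_induction with
  | mem x hx => obtain ⟨j, rfl⟩ := hx; exact hb.exists_inner_eq_intCast i j
  | zero => exact ⟨0, by simp⟩
  | add x y _ _ hx hy =>
    obtain ⟨⟨k, hk⟩, l, hl⟩ := hx, hy
    exact ⟨k + l, by simp [inner_add_right, hk, hl]⟩
  | smul n x _ hx =>
    obtain ⟨k, hk⟩ := hx
    exact ⟨n * k, by simp [inner_smul_right_eq_smul, hk]⟩

lemma bijective_dualVector : Function.Bijective hb.dualVector := by
  refine ⟨fun k l hkl ↦ funext fun i ↦ ?_, fun w ↦ ?_⟩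
  · have inner_eq : ⟪b i, (hb.dualVector k : V)⟫ = ⟪b i, (hb.dualVector l : V)⟫ := by rw [hkl]
    simpa only [inner_dualVector, Int.cast_inj] using inner_eq
  · choose k hk using hb.exists_inner_eq_intCast_of_mem w.2
    exact ⟨k, Subtype.ext <| InnerProductSpace.ext_inner_left_basis b fun i ↦ by
      rw [inner_dualVector, hk]⟩

end IsUnimodularBasis

lemma IsUnimodularBasis.measurePreserving_equivFunL_symm [MeasurableSpace V] [BorelSpace V]
    [FiniteDimensional ℝ V]
    (hb : IsUnimodularBasis b) : MeasurePreserving b.equivFunL.symm := by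
  let o : OrthonormalBasis ι ℝ V := (stdOrthonormalBasis ℝ V).reindex
    (Fintype.equivOfCardEq (by simp [finrank_eq_card_basis b]))
  have addHaar_eq : b.addHaar = volume := by
    have gram_eq := Matrix.gram_eq_conjTranspose_mul o b
    have det_sq : o.toBasis.det b ^ 2 = 1 := by
      rw [← hb.det_gram, gram_eq, Matrix.det_mul, Matrix.det_conjTranspose, sq]
      rfl
    rw [← o.addHaar_eq_volume, Basis.addHaar_eq_iff, Basis.coe_parallelepiped,
      Measure.addHaar_parallelepiped,
      (pow_eq_one_iff_of_nonneg (abs_nonneg _) two_ne_zero).1 ((sq_abs _).trans det_sq),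
      ENNReal.ofReal_one]
  refine ⟨b.equivFunL.symm.continuous.measurable, ?_⟩
  rw [← addHaarMeasure_eq_volume_pi, ← Basis.parallelepiped_basisFun, ← Basis.addHaar,
    Basis.map_addHaar, ← addHaar_eq]
  congr 1
  ext i
  change b.equivFun.symm (Pi.basisFun ℝ ι i) = b i
  simp [Basis.equivFun_symm_apply, Pi.single_apply]

end UnimodularBasis

section LatticeDecay

open MeasureTheory Set Submodule TopologicalSpace

variable {ι : Type*} [Finite ι]

lemma equivFunL_symm_intPoint [FiniteDimensional ℝ V] (b : Basis ι ℝ V) (m : ι → ℤ) :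
    b.equivFunL.symm (intPoint m) = (b.restrictScalars ℤ).equivFun.symm m := by
  cases nonempty_fintype ι
  change b.equivFun.symm (intPoint m) = _
  simp [Basis.equivFun_symm_apply, intPoint, Int.cast_smul_eq_zsmul]

/-- `f` decays fast enough for its sum over any lattice to converge. -/
def HasLatticeDecay (f : V → ℂ) : Prop :=
  ∃ C : ℝ, ∀ x, ‖f x‖ ≤ C * ((1 + ‖x‖) ^ (finrank ℝ V + 1))⁻¹

lemma hasLatticeDecay_gaussian {c : ℂ} (hc : 0 < c.re) :
    HasLatticeDecay fun x : V ↦ Complex.exp (-c * ‖x‖ ^ 2) := by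
  set k := finrank ℝ V + 1
  refine ⟨Real.exp (k ^ 2 / (4 * c.re)), fun x ↦ ?_⟩
  have one_add_pow_le : (1 + ‖x‖) ^ k ≤ Real.exp (k * ‖x‖) := by
    rw [Real.exp_nat_mul]
    gcongr
    linarith [Real.add_one_le_exp ‖x‖]
  have norm_exp : ‖Complex.exp (-c * ‖x‖ ^ 2)‖ = Real.exp (-c.re * ‖x‖ ^ 2) := by
    rw [Complex.norm_exp]
    simp [← Complex.ofReal_pow]
  rw [norm_exp, ← div_eq_mul_inv, le_div_iff₀ (by positivity)]
  refine (mul_le_mul_of_nonneg_left one_add_pow_le (Real.exp_nonneg _)).trans ?_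
  rw [← Real.exp_add, Real.exp_le_exp, le_div_iff₀ (by positivity)]
  nlinarith [sq_nonneg (2 * c.re * ‖x‖ - k)]

variable [FiniteDimensional ℝ V] {f : V → ℂ}

lemma summable_one_add_norm_pow_inv (b : Basis ι ℝ V) :
    Summable fun x : span ℤ (range b) ↦ ((1 + ‖(x : V)‖) ^ (finrank ℝ V + 1))⁻¹ := by
  have rank_lt : finrank ℤ (span ℤ (range b)) < finrank ℝ V + 1 := by
    rw [ZLattice.rank ℝ]
    exact Nat.lt_succ_self _
  refine .of_norm_bounded_eventually (ZLattice.summable_norm_pow_inv _ _ rank_lt) ?_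
  filter_upwards [(finite_singleton 0).compl_mem_cofinite] with x hx
  have : 0 < ‖x‖ := norm_pos_iff.2 hx
  rw [Real.norm_of_nonneg (by positivity), inv_pow]
  gcongr
  exact le_add_of_nonneg_left zero_le_one

lemma HasLatticeDecay.summable (hf : HasLatticeDecay f) (b : Basis ι ℝ V) :
    Summable fun x : span ℤ (range b) ↦ f x :=
  let ⟨_, hC⟩ := hf
  .of_norm_bounded ((summable_one_add_norm_pow_inv b).mul_left _) fun x ↦ hC x

lemma HasLatticeDecay.summableTranslates (hf : HasLatticeDecay f) (hc : Continuous f)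
    (b : Basis ι ℝ V) :
    SummableTranslates ⟨fun x ↦ f (b.equivFunL.symm x), by fun_prop⟩ := by
  obtain ⟨C, hC⟩ := hf
  have C_nonneg : 0 ≤ C := by simpa using (norm_nonneg _).trans (hC 0)
  intro K
  obtain ⟨R, hR⟩ := (K.isCompact.image b.equivFunL.symm.continuous).isBounded.exists_norm_le
  have peetre (x y : V) (hx : ‖x‖ ≤ R) : 1 + ‖y‖ ≤ (1 + |R|) * (1 + ‖x + y‖) := by
    have : ‖y‖ ≤ ‖x + y‖ + ‖x‖ := by simpa using norm_sub_le (x + y) x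
    nlinarith [le_abs_self R, norm_nonneg (x + y), abs_nonneg R]
  have summable_bound :=
    (summable_one_add_norm_pow_inv b).mul_left (C * (1 + |R|) ^ (finrank ℝ V + 1))
  refine .of_norm_bounded
    ((b.restrictScalars ℤ).equivFun.symm.toEquiv.summable_iff.2 summable_bound) fun m ↦ ?_
  rw [norm_norm]
  refine (ContinuousMap.norm_le _ (by simp only [Function.comp_apply]; positivity)).2 fun x ↦ ?_
  set y := ((b.restrictScalars ℤ).equivFun.symm m : V)
  calc ‖f (b.equivFunL.symm (x + intPoint m))‖
      ≤ C * ((1 + ‖b.equivFunL.symm x + y‖) ^ (finrank ℝ V + 1))⁻¹ := by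
        rw [map_add, equivFunL_symm_intPoint]
        exact hC _
    _ ≤ C * ((1 + ‖y‖) ^ (finrank ℝ V + 1) / (1 + |R|) ^ (finrank ℝ V + 1))⁻¹ := by
        gcongr
        rw [div_le_iff₀ (by positivity), mul_comm, ← mul_pow]
        gcongr
        exact peetre _ _ (hR _ ⟨x, x.2, rfl⟩)
    _ = C * (1 + |R|) ^ (finrank ℝ V + 1) * ((1 + ‖y‖) ^ (finrank ℝ V + 1))⁻¹ := by
        rw [inv_div, div_eq_mul_inv, mul_assoc]

end LatticeDecay

section LatticePoisson

open MeasureTheory Set Submodule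
open scoped Real FourierTransform

variable {ι : Type*} [Fintype ι] {b : Basis ι ℝ V} [FiniteDimensional ℝ V] {f : V → ℂ}
  [MeasurableSpace V] [BorelSpace V]

theorem IsUnimodularBasis.tsum_eq_tsum_fourier [DecidableEq ι] (hb : IsUnimodularBasis b)
    (hc : Continuous f) (hf : HasLatticeDecay f) (hf' : HasLatticeDecay (𝓕 f)) :
    ∑' x : span ℤ (range b), f x = ∑' x : span ℤ (range b), 𝓕 f x := by
  let g : C(ι → ℝ, ℂ) := ⟨fun x ↦ f (b.equivFunL.symm x), by fun_prop⟩
  have integral_eq (n : ι → ℤ) :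
      ∫ x, UnitAddTorus.mFourier (-n) (toTorus x) * g x = 𝓕 f (hb.dualVector n : V) := by
    rw [Real.fourier_eq', ← hb.measurePreserving_equivFunL_symm.integral_comp
      b.equivFunL.symm.toHomeomorph.measurableEmbedding]
    refine integral_congr_ae (.of_forall fun x ↦ ?_)
    have inner_eq : ⟪b.equivFunL.symm x, hb.dualVector n⟫ = ∑ i, x i * n i := by
      change ⟪b.equivFun.symm x, (hb.dualVector n : V)⟫ = _
      simp [Basis.equivFun_symm_apply, sum_inner, inner_smul_left, hb.inner_dualVector]
    simp only [g, toTorus, UnitAddTorus.mFourier, ContinuousMap.coe_mk, fourier_coe_apply,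
      ← Complex.exp_sum, inner_eq, smul_eq_mul]
    congr 2
    push_cast [Finset.mul_sum, Finset.sum_mul, Pi.neg_apply]
    exact Finset.sum_congr rfl fun i _ ↦ by ring
  have summable_integral :
      Summable fun n : ι → ℤ ↦ ∫ x, UnitAddTorus.mFourier (-n) (toTorus x) * g x := by
    simp only [integral_eq]
    exact (hf'.summable b).comp_injective hb.bijective_dualVector.1
  have poisson : ∑' m, g (intPoint m) = ∑' n, 𝓕 f (hb.dualVector n : V) :=
    ((hf.summableTranslates hc b).tsum_eq_tsum_integral_mFourier summable_integral).trans
      (tsum_congr integral_eq)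
  calc ∑' x : span ℤ (range b), f x
      = ∑' m : ι → ℤ, f ((b.restrictScalars ℤ).equivFun.symm m) :=
        ((b.restrictScalars ℤ).equivFun.symm.toEquiv.tsum_eq fun x : span ℤ (range b) ↦ f x).symm
    _ = ∑' n, 𝓕 f (hb.dualVector n : V) := by
        simpa only [g, ContinuousMap.coe_mk, equivFunL_symm_intPoint] using poisson
    _ = ∑' x : span ℤ (range b), 𝓕 f x :=
        (Equiv.ofBijective _ hb.bijective_dualVector).tsum_eq fun x : span ℤ (range b) ↦ 𝓕 f x

end LatticePoisson

section Theta

open MeasureTheory Set Submodule Complex ModularForm SlashInvariantForm MatrixGroups OnePoint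
  Function
open UpperHalfPlane hiding I
open scoped Real FourierTransform

/-- `L` is an even unimodular lattice. -/
structure IsEvenUnimodularLat (L : Submodule ℤ V) : Prop where
  isLat : IsLat L
  isEvenLat : IsEvenLat L
  isUnimodularLat : IsUnimodularLat L

/-- The vectors of norm `r` of the lattice `L`. -/
def shell (L : Submodule ℤ V) (r : ℝ) : Set V := {x | x ∈ L ∧ ⟪x, x⟫ = r}

/-- The theta series of a lattice, normalised so that a vector of norm `2k` contributes `q ^ k`. -/
def thetaSeries (L : Submodule ℤ V) (z : ℂ) : ℂ := ∑' x : L, cexp (-(-π * I * z) * ‖(x : V)‖ ^ 2)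

lemma re_neg_pi_mul_I_mul (z : ℂ) : (-π * I * z).re = π * z.im := by simp

lemma tsum_gaussian [FiniteDimensional ℝ V] {ι : Type*} [Fintype ι] [DecidableEq ι]
    {b : Basis ι ℝ V} (hb : IsUnimodularBasis b) {c : ℂ} (hc : 0 < c.re) :
    ∑' x : span ℤ (range b), cexp (-c * ‖(x : V)‖ ^ 2) =
      (π / c) ^ (finrank ℝ V / 2 : ℂ) *
        ∑' x : span ℤ (range b), cexp (-(π ^ 2 / c) * ‖(x : V)‖ ^ 2) := by
  borelize V
  have c_ne : c ≠ 0 := by rintro rfl; simp at hc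
  have re_pos : 0 < (π ^ 2 / c).re := by
    have : 0 < (π ^ 2 : ℝ) * c⁻¹.re := by
      rw [inv_re]
      have := normSq_pos.2 c_ne
      positivity
    rwa [div_eq_mul_inv, ← ofReal_pow, re_ofReal_mul]
  have fourier_eq : 𝓕 (fun x : V ↦ cexp (-c * ‖x‖ ^ 2)) =
      fun x ↦ (π / c) ^ (finrank ℝ V / 2 : ℂ) * cexp (-(π ^ 2 / c) * ‖x‖ ^ 2) := by
    ext x
    rw [fourier_gaussian_innerProductSpace hc]
    ring_nf
  rw [hb.tsum_eq_tsum_fourier (by fun_prop) (hasLatticeDecay_gaussian hc), fourier_eq,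
    tsum_mul_left]
  rw [fourier_eq]
  obtain ⟨C, hC⟩ := hasLatticeDecay_gaussian (V := V) re_pos
  refine ⟨‖((π / c) ^ (finrank ℝ V / 2 : ℂ) : ℂ)‖ * C, fun x ↦ ?_⟩
  rw [norm_mul, mul_assoc]
  exact mul_le_mul_of_nonneg_left (hC x) (norm_nonneg _)

namespace IsEvenUnimodularLat

variable {L : Submodule ℤ V} (hL : IsEvenUnimodularLat L)
include hL

lemma exists_isUnimodularBasis :
    ∃ (n : ℕ) (b : Basis (Fin n) ℝ V), IsUnimodularBasis b ∧ span ℤ (range b) = L :=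
  hL.isUnimodularLat.exists_isUnimodularBasis hL.isLat hL.isEvenLat.1

lemma mem_of_forall_inner {x : V} (hx : ∀ y ∈ L, ∃ k : ℤ, ⟪y, x⟫ = k) : x ∈ L := by
  obtain ⟨n, b, hb, rfl⟩ := hL.exists_isUnimodularBasis
  exact hb.mem_span_of_forall_inner fun i ↦ hx _ (subset_span ⟨i, rfl⟩)

lemma exists_norm_sq_eq (x : L) : ∃ k : ℕ, ‖(x : V)‖ ^ 2 = 2 * k := by
  obtain ⟨k, hk⟩ := hL.isEvenLat.2 x x.2
  rw [real_inner_self_eq_norm_sq] at hk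
  have : 0 ≤ k := by exact_mod_cast (by nlinarith [sq_nonneg ‖(x : V)‖] : (0 : ℝ) ≤ k)
  lift k to ℕ using this
  exact ⟨k, by simpa using hk⟩

variable [FiniteDimensional ℝ V]

lemma summable_gaussian {c : ℂ} (hc : 0 < c.re) :
    Summable fun x : L ↦ cexp (-c * ‖(x : V)‖ ^ 2) := by
  obtain ⟨n, b, -, rfl⟩ := hL.exists_isUnimodularBasis
  exact (hasLatticeDecay_gaussian hc).summable b

lemma hasSum_thetaSeries {z : ℂ} (hz : 0 < z.im) :
    HasSum (fun k : ℕ ↦ ((shell L (2 * k)).ncard : ℂ) • Periodic.qParam 1 z ^ k)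
      (thetaSeries L z) := by
  choose q hq using hL.exists_norm_sq_eq
  have card_fiber (k : ℕ) : Nat.card (q ⁻¹' {k}) = (shell L (2 * k)).ncard := by
    have : shell L (2 * k) = (↑) '' (q ⁻¹' {k}) := by
      ext x
      simp only [shell, mem_ofPred_eq, mem_image, mem_preimage, mem_singleton_iff]
      constructor
      · rintro ⟨hx, hk⟩
        rw [real_inner_self_eq_norm_sq, hq ⟨x, hx⟩] at hk
        exact ⟨⟨x, hx⟩, by simpa using hk, rfl⟩
      · rintro ⟨y, rfl, rfl⟩
        exact ⟨y.2, by rw [real_inner_self_eq_norm_sq, hq]⟩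
    rw [this, ncard_image_of_injective _ Subtype.val_injective, Nat.card_coe_set_eq]
  have exp_eq (x : L) :
      cexp (-(-π * I * z) * ‖(x : V)‖ ^ 2) = Periodic.qParam 1 z ^ q x := by
    rw [Periodic.qParam, ← exp_nat_mul, ← ofReal_pow, hq]
    push_cast
    ring_nf
  have hasSum := (hL.summable_gaussian (c := -π * I * z)
    (by rw [re_neg_pi_mul_I_mul]; positivity)).hasSum.tsum_fiberwise q
  refine hasSum.congr_fun fun k ↦ ?_
  calc ((shell L (2 * k)).ncard : ℂ) • Periodic.qParam 1 z ^ k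
      = ∑' _ : q ⁻¹' {k}, Periodic.qParam 1 z ^ k := by
        rw [tsum_const, card_fiber, Nat.cast_smul_eq_nsmul]
    _ = ∑' x : q ⁻¹' {k}, cexp (-(-π * I * z) * ‖((x : L) : V)‖ ^ 2) :=
        tsum_congr fun x ↦ by rw [exp_eq, x.2]

lemma differentiableOn_thetaSeries : DifferentiableOn ℂ (thetaSeries L) {z | 0 < z.im} := by
  intro z (hz : 0 < z.im)
  have isOpen : IsOpen {w : ℂ | z.im / 2 < w.im} := isOpen_lt continuous_const continuous_im
  have summable_bound := (hL.summable_gaussian (c := -π * I * (z / 2))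
    (by rw [re_neg_pi_mul_I_mul]; simpa using by positivity)).norm
  have differentiableOn := differentiableOn_tsum_of_summable_norm
    (F := fun (x : L) w ↦ cexp (-(-π * I * w) * ‖(x : V)‖ ^ 2)) summable_bound
    (fun x ↦ by fun_prop) isOpen fun x w (hw : z.im / 2 < w.im) ↦ by
      rw [norm_exp, norm_exp, Real.exp_le_exp, ← ofReal_pow, re_mul_ofReal, re_mul_ofReal, neg_re,
        neg_re, re_neg_pi_mul_I_mul, re_neg_pi_mul_I_mul]
      have : (z / 2).im = z.im / 2 := by simp
      rw [this]
      gcongr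
  exact (differentiableOn.differentiableAt
    (isOpen.mem_nhds (half_lt_self hz))).differentiableWithinAt

lemma thetaSeries_neg_inv {w : ℤ} (hV : finrank ℝ V = 2 * w) (hw : 4 ∣ w) {z : ℂ}
    (hz : 0 < z.im) : thetaSeries L (-z⁻¹) = z ^ w * thetaSeries L z := by
  have z_ne : z ≠ 0 := by rintro rfl; simp at hz
  obtain ⟨k, rfl⟩ := hw
  obtain ⟨n, b, hb, rfl⟩ := hL.exists_isUnimodularBasis
  have transform := tsum_gaussian hb (c := -π * I * z) (by rw [re_neg_pi_mul_I_mul]; positivity)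
  have rank_div_two : (finrank ℝ V / 2 : ℂ) = (4 * k : ℤ) := by
    rw [div_eq_iff two_ne_zero, ← Int.cast_natCast, hV]
    push_cast
    ring
  have factor_eq : (π / (-π * I * z)) ^ (4 * k) = (z ^ (4 * k))⁻¹ := by
    have : (π : ℂ) / (-π * I * z) = I / z := by
      have : (π : ℂ) ≠ 0 := by exact_mod_cast Real.pi_ne_zero
      field_simp
      simp
    rw [this, div_zpow, zpow_mul I]
    norm_cast
    simp
  rw [rank_div_two, cpow_intCast, factor_eq, eq_inv_mul_iff_mul_eq₀ (zpow_ne_zero _ z_ne)]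
    at transform
  rw [thetaSeries, thetaSeries, transform]
  refine tsum_congr fun x ↦ ?_
  congr 2
  have : (π : ℂ) ≠ 0 := by exact_mod_cast Real.pi_ne_zero
  field_simp
  simp

lemma thetaSeries_slash_S {w : ℤ} (hV : finrank ℝ V = 2 * w) (hw : 4 ∣ w) :
    ((fun z : ℍ ↦ thetaSeries L z) ∣[w] ModularGroup.S) = fun z : ℍ ↦ thetaSeries L z := by
  ext z
  rw [SL_slash_apply, modular_S_smul, ModularGroup.denom_S, zpow_neg, mul_inv_eq_iff_eq_mul₀
    (zpow_ne_zero _ z.ne_zero), mul_comm, ← hL.thetaSeries_neg_inv hV hw z.im_pos, ← inv_neg]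

lemma thetaSeries_slash_T (w : ℤ) :
    ((fun z : ℍ ↦ thetaSeries L z) ∣[w] ModularGroup.T) = fun z : ℍ ↦ thetaSeries L z := by
  ext z
  rw [SL_slash_apply, ModularGroup.denom_apply, modular_T_smul]
  have periodic : Periodic.qParam 1 ((1 : ℝ) + z) = Periodic.qParam 1 z := by
    simp [Periodic.qParam, mul_add, exp_add]
  have thetaSeries_eq : thetaSeries L ((1 : ℝ) + z) = thetaSeries L z := by
    rw [← (hL.hasSum_thetaSeries (z := (1 : ℝ) + z) (by simpa using z.im_pos)).tsum_eq,
      ← (hL.hasSum_thetaSeries z.im_pos).tsum_eq, periodic]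
  rw [coe_vadd, thetaSeries_eq]
  simp [ModularGroup.T]

/-- The theta series of an even unimodular lattice as a modular form of weight half its rank. -/
def thetaForm {w : ℤ} (hV : finrank ℝ V = 2 * w) (hw : 4 ∣ w) : ModularForm 𝒮ℒ w where
  toFun z := thetaSeries L z
  slash_action_eq' A hA := by
    obtain ⟨A, rfl⟩ := hA
    exact slash_action_generators_SL2Z (hL.thetaSeries_slash_S hV hw) (hL.thetaSeries_slash_T w) A
  holo' := by
    rw [UpperHalfPlane.mdifferentiable_iff]
    exact hL.differentiableOn_thetaSeries.congr fun z hz ↦ by simp [ofComplex_apply_of_im_pos hz]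
  bdd_at_cusps' hc := by
    rw [Subgroup.IsArithmetic.isCusp_iff_isCusp_SL2Z] at hc
    rw [OnePoint.isBoundedAt_iff_forall_SL2Z hc]
    intro γ _
    rw [slash_action_generators_SL2Z (hL.thetaSeries_slash_S hV hw) (hL.thetaSeries_slash_T w)]
    exact isBoundedAtImInfty_of_hasSum_qExpansion one_pos fun z ↦ hL.hasSum_thetaSeries z.im_pos

lemma coeff_qExpansion_thetaForm {w : ℤ} (hV : finrank ℝ V = 2 * w) (hw : 4 ∣ w) (k : ℕ) :
    (qExpansion 1 (hL.thetaForm hV hw)).coeff k = (shell L (2 * k)).ncard :=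
  (ModularFormClass.qExpansion_coeff_unique (f := hL.thetaForm hV hw) one_pos
    one_mem_strictPeriods_SL (fun z ↦ hL.hasSum_thetaSeries z.im_pos) k).symm

end IsEvenUnimodularLat

end Theta

section LeechCounts

open ModularForm MatrixGroups UpperHalfPlane
open scoped ArithmeticFunction.sigma

lemma coeff_qExpansion_E₄ {m : ℕ} (hm : m ≠ 0) : (qExpansion 1 E₄).coeff m = 240 * (σ 3 m : ℂ) := by
  norm_num [EisensteinSeries.E_qExpansion_coeff _ ⟨2, rfl⟩, hm,
    show bernoulli 4 = -1 / 30 by decide +kernel]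

lemma coeff_qExpansion_E₆ {m : ℕ} (hm : m ≠ 0) :
    (qExpansion 1 E₆).coeff m = -504 * (σ 5 m : ℂ) := by
  norm_num [EisensteinSeries.E_qExpansion_coeff _ ⟨3, rfl⟩, hm,
    show bernoulli 6 = 1 / 42 by decide +kernel]

/-- The modular form `(7 E₄³ + 5 E₆²) / 12`, the unique one of weight `12` whose `q`-expansion
starts with `1 + 0 q`. -/
def leechForm : ModularForm 𝒮ℒ 12 :=
  (7 / 12 : ℂ) • ModularForm.mcast (by decide) (E₄.pow 3) +
    (5 / 12 : ℂ) • ModularForm.mcast (by decide) (E₆.pow 2)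

lemma qExpansion_leechForm : qExpansion 1 leechForm =
    (7 / 12 : ℂ) • (qExpansion 1 E₄) ^ 3 + (5 / 12 : ℂ) • (qExpansion 1 E₆) ^ 2 := by
  have coe_leechForm : ⇑leechForm =
      ⇑((7 / 12 : ℂ) • (ModularForm.mcast (by decide) (E₄.pow 3) : ModularForm 𝒮ℒ 12)) +
      ⇑((5 / 12 : ℂ) • (ModularForm.mcast (by decide) (E₆.pow 2) : ModularForm 𝒮ℒ 12)) := rfl
  rw [coe_leechForm, ModularForm.qExpansion_add one_pos one_mem_strictPeriods_SL]
  simp only [FunLike.coe_smul, ModularForm.qExpansion_smul one_pos one_mem_strictPeriods_SL,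
    coe_mcast, ModularForm.qExpansion_pow one_pos one_mem_strictPeriods_SL]

lemma coeff_qExpansion_leechForm :
    (qExpansion 1 leechForm).coeff 0 = 1 ∧ (qExpansion 1 leechForm).coeff 1 = 0 ∧
    (qExpansion 1 leechForm).coeff 2 = 196560 ∧ (qExpansion 1 leechForm).coeff 3 = 16773120 ∧
    (qExpansion 1 leechForm).coeff 4 = 398034000 := by
  have sigma_three : σ 3 1 = 1 ∧ σ 3 2 = 9 ∧ σ 3 3 = 28 ∧ σ 3 4 = 73 := by decide
  have sigma_five : σ 5 1 = 1 ∧ σ 5 2 = 33 ∧ σ 5 3 = 244 ∧ σ 5 4 = 1057 := by decide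
  have E₄_zero : (qExpansion 1 E₄).coeff 0 = 1 :=
    EisensteinSeries.E_qExpansion_coeff_zero _ ⟨2, rfl⟩
  have E₆_zero : (qExpansion 1 E₆).coeff 0 = 1 :=
    EisensteinSeries.E_qExpansion_coeff_zero _ ⟨3, rfl⟩
  rw [qExpansion_leechForm, pow_succ, pow_two, pow_two]
  refine ⟨?_, ?_, ?_, ?_, ?_⟩ <;>
  norm_num [PowerSeries.coeff_smul, PowerSeries.coeff_mul, Finset.Nat.antidiagonal_succ,
    E₄_zero, E₆_zero, coeff_qExpansion_E₄, coeff_qExpansion_E₆, sigma_three, sigma_five,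
    -PowerSeries.coeff_zero_eq_constantCoeff]

lemma eq_leechForm {f : ModularForm 𝒮ℒ 12} (h0 : (qExpansion 1 f).coeff 0 = 1)
    (h1 : (qExpansion 1 f).coeff 1 = 0) : f = leechForm := by
  refine sub_eq_zero.1 (ModularForm.sturm_bound_levelOne ?_)
  have qExpansion_sub : qExpansion 1 ⇑(f - leechForm) = qExpansion 1 f - qExpansion 1 leechForm :=
    ModularForm.qExpansion_sub one_pos one_mem_strictPeriods_SL f leechForm
  have two_le : ((2 : ℕ) : ℕ∞) ≤ (qExpansion 1 ⇑(f - leechForm)).order := by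
    refine PowerSeries.nat_le_order _ _ fun i hi ↦ ?_
    rw [qExpansion_sub, map_sub, sub_eq_zero]
    obtain ⟨l0, l1, -⟩ := coeff_qExpansion_leechForm
    interval_cases i
    · rw [h0, l0]
    · rw [h1, l1]
  exact lt_of_lt_of_le (Nat.cast_lt.2 (by decide)) two_le

/-- `L` is a Leech lattice: even, unimodular, of rank `24` and without vectors of norm `2`. -/
structure IsLeechLat (L : Submodule ℤ V) : Prop extends IsEvenUnimodularLat L where
  finrank_eq : finrank ℝ V = 24
  four_le_inner_self {x : V} : x ∈ L → x ≠ 0 → 4 ≤ ⟪x, x⟫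

variable {L : Submodule ℤ V} [FiniteDimensional ℝ V]

theorem IsLeechLat.ncard_shell (hL : IsLeechLat L) :
    (shell L 4).ncard = 196560 ∧ (shell L 6).ncard = 16773120 ∧
      (shell L 8).ncard = 398034000 := by
  have coeff := hL.coeff_qExpansion_thetaForm (w := 12) (by simp [hL.finrank_eq]) (by decide)
  have shell_zero : shell L 0 = {0} := by
    ext x
    simp only [shell, Set.mem_ofPred_eq, inner_self_eq_zero, Set.mem_singleton_iff]
    exact ⟨And.right, by rintro rfl; simp⟩
  have shell_two : shell L 2 = ∅ := by
    refine Set.eq_empty_of_forall_notMem fun x ⟨hx, norm_eq⟩ ↦ ?_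
    have := hL.four_le_inner_self hx (by rintro rfl; simp at norm_eq)
    linarith
  rw [eq_leechForm (f := hL.thetaForm _ _) (by simp [coeff, shell_zero])
    (by simp [coeff, shell_two])] at coeff
  obtain ⟨-, -, l2, l3, l4⟩ := coeff_qExpansion_leechForm
  rw [coeff] at l2 l3 l4
  norm_num at l2 l3 l4
  exact ⟨mod_cast l2, mod_cast l3, mod_cast l4⟩

end LeechCounts

section Frame

open Set Submodule

variable {L : Submodule ℤ V}

lemma image_mkQ_two_smul_span_subset {M ι : Type*} [AddCommGroup M] [Finite ι] (b : ι → M) :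
    ((2 : ℤ) • span ℤ (range b)).mkQ '' span ℤ (range b) ⊆ range fun s : Finset ι ↦
      ((2 : ℤ) • span ℤ (range b)).mkQ (∑ i ∈ s, b i) := by
  cases nonempty_fintype ι
  rintro - ⟨x, hx, rfl⟩
  obtain ⟨m, rfl⟩ := (mem_span_range_iff_exists_fun ℤ).1 hx
  refine ⟨Finset.univ.filter (m · % 2 = 1), (Submodule.Quotient.eq' _).2 <|
    (mem_smul_pointwise_iff_exists _ _ _).2 ⟨∑ i, (m i / 2) • b i,
      sum_mem fun i _ ↦ smul_mem _ _ (subset_span ⟨i, rfl⟩), ?_⟩⟩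
  rw [eq_neg_add_iff_add_eq, Finset.smul_sum, Finset.sum_filter, ← Finset.sum_add_distrib]
  refine Finset.sum_congr rfl fun i _ ↦ ?_
  have parity : (if m i % 2 = 1 then b i else 0) = (m i % 2) • b i := by
    rcases Int.emod_two_eq_zero_or_one (m i) with h | h <;> simp [h]
  rw [parity, smul_smul, ← add_smul, Int.emod_add_mul_ediv]

namespace IsLeechLat

variable (hL : IsLeechLat L)
include hL

lemma eq_or_eq_neg_or_orthogonal {x y : V} (hxy : x - y ∈ (2 : ℤ) • L)
    (hy : y ∈ L) (hx8 : ⟪x, x⟫ ≤ 8) (hy8 : ⟪y, y⟫ ≤ 8) :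
    x = y ∨ x = -y ∨ (⟪x, x⟫ = 8 ∧ ⟪y, y⟫ = 8 ∧ ⟪x, y⟫ = 0) := by
  obtain ⟨z, hz, hxyz⟩ := (Submodule.mem_smul_pointwise_iff_exists _ _ _).1 hxy
  obtain rfl : x = y + (2 : ℝ) • z := by
    rw [← sub_eq_iff_eq_add', ← hxyz, two_smul, two_smul]
  by_cases z_ne : z = 0
  · simp [z_ne]
  by_cases yz_ne : y + z = 0
  · right; left
    rw [eq_neg_of_add_eq_zero_right yz_ne]
    module
  right; right
  have := hL.four_le_inner_self hz z_ne
  have := hL.four_le_inner_self (L.add_mem hy hz) yz_ne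
  simp only [inner_add_left, inner_add_right, inner_smul_left, inner_smul_right,
    real_inner_comm y z, conj_trivial] at *
  refine ⟨?_, ?_, ?_⟩ <;> linarith

open Classical in
lemma card_image_mkQ_two_smul_le (s : Finset V) (hs : (s : Set V) ⊆ L) :
    (s.image ((2 : ℤ) • L).mkQ).card ≤ 2 ^ 24 := by
  obtain ⟨n, b, -, rfl⟩ := hL.exists_isUnimodularBasis
  have subset : s.image ((2 : ℤ) • span ℤ (range b)).mkQ ⊆
      Finset.univ.image fun t ↦ ((2 : ℤ) • span ℤ (range b)).mkQ (∑ i ∈ t, b i) := by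
    rw [← Finset.coe_subset]
    push_cast
    rw [image_univ]
    exact (image_mono hs).trans (image_mkQ_two_smul_span_subset b)
  calc _ ≤ _ := Finset.card_le_card subset
    _ ≤ _ := Finset.card_image_le
    _ = 2 ^ 24 := by simp [← hL.finrank_eq, finrank_eq_card_basis b]

open Classical in
lemma card_le_two_mul_card_image_mkQ {s : Finset V} (hs : ∀ x ∈ s, x ∈ L ∧ ⟪x, x⟫ < 8) :
    s.card ≤ 2 * (s.image ((2 : ℤ) • L).mkQ).card := by
  refine Finset.card_le_mul_card_image _ _ fun a ha ↦ ?_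
  obtain ⟨y, hy, rfl⟩ := Finset.mem_image.1 ha
  refine (Finset.card_le_card fun x hx ↦ ?_).trans (Finset.card_le_two (a := y) (b := -y))
  obtain ⟨hx, hxy⟩ := Finset.mem_filter.1 hx
  rcases hL.eq_or_eq_neg_or_orthogonal ((Submodule.Quotient.eq _).1 hxy) (hs y hy).1
    (hs x hx).2.le (hs y hy).2.le with h | h | h
  · simp [h]
  · simp [h]
  · exact absurd h.1 (hs x hx).2.ne

open Classical in
lemma disjoint_image_mkQ {s t : Finset V} (hs : ∀ x ∈ s, x ∈ L ∧ ⟪x, x⟫ < 8)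
    (ht : ∀ x ∈ t, ⟪x, x⟫ = 8) :
    Disjoint (s.image ((2 : ℤ) • L).mkQ) (t.image ((2 : ℤ) • L).mkQ) := by
  refine Finset.disjoint_left.2 fun a ha ha' ↦ ?_
  obtain ⟨x, hx, rfl⟩ := Finset.mem_image.1 ha
  obtain ⟨y, hy, hxy⟩ := Finset.mem_image.1 ha'
  obtain ⟨hxL, hx⟩ := hs x hx
  rcases hL.eq_or_eq_neg_or_orthogonal ((Submodule.Quotient.eq _).1 hxy) hxL (ht y hy).le hx.le
    with rfl | rfl | h
  · exact hx.ne (ht _ hy)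
  · exact hx.ne (by simpa using ht _ hy)
  · exact hx.ne h.2.1

open Classical in
lemma exists_congruent_of_forty_eight_le_card [FiniteDimensional ℝ V] :
    ∃ s : Finset V, 48 ≤ s.card ∧ (s : Set V) ⊆ shell L 8 ∧
      ∀ x ∈ s, ∀ y ∈ s, x - y ∈ (2 : ℤ) • L := by
  obtain ⟨card_four, card_six, card_eight⟩ := hL.ncard_shell
  have finite (r : ℝ) (n : ℕ) [NeZero n] (h : (shell L r).ncard = n) : (shell L r).Finite :=
    Set.finite_of_ncard_ne_zero (h ▸ NeZero.ne n)
  lift shell L 4 to Finset V using finite 4 _ card_four with S₄ hS₄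
  lift shell L 6 to Finset V using finite 6 _ card_six with S₆ hS₆
  lift shell L 8 to Finset V using finite 8 _ card_eight with S₈ hS₈
  simp only [Set.ext_iff, Finset.mem_coe] at hS₄ hS₆ hS₈
  rw [Set.ncard_coe_finset] at card_four card_six card_eight
  have short (x : V) (hx : x ∈ S₄ ∪ S₆) : x ∈ L ∧ ⟪x, x⟫ < 8 := by
    rcases Finset.mem_union.1 hx with hx | hx
    · obtain ⟨hx, norm_eq⟩ := (hS₄ x).1 hx
      exact ⟨hx, by linarith⟩
    · obtain ⟨hx, norm_eq⟩ := (hS₆ x).1 hx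
      exact ⟨hx, by linarith⟩
  have card_short : (S₄ ∪ S₆).card = 196560 + 16773120 := by
    rw [Finset.card_union_of_disjoint, card_four, card_six]
    refine Finset.disjoint_left.2 fun x hx hx' ↦ ?_
    linarith [((hS₄ x).1 hx).2, ((hS₆ x).1 hx').2]
  by_contra! small
  have long_le : S₈.card ≤ 47 * (S₈.image ((2 : ℤ) • L).mkQ).card := by
    refine Finset.card_le_mul_card_image _ _ fun a _ ↦ ?_
    by_contra! large
    obtain ⟨x, hx, y, hy, hxy⟩ := small _ large (Finset.filter_subset _ _)
    exact hxy <| (Submodule.Quotient.eq _).1 <|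
      (Finset.mem_filter.1 hx).2.trans (Finset.mem_filter.1 hy).2.symm
  have total := hL.card_image_mkQ_two_smul_le (S₄ ∪ S₆ ∪ S₈) fun x hx ↦ by
    rcases Finset.mem_union.1 hx with hx | hx
    exacts [(short x hx).1, ((hS₈ x).1 hx).1]
  rw [Finset.image_union, Finset.card_union_of_disjoint
    (hL.disjoint_image_mkQ short fun x hx ↦ ((hS₈ x).1 hx).2)] at total
  have short_le := hL.card_le_two_mul_card_image_mkQ short
  omega

end IsLeechLat

/-- `f` is a frame of `L`: orthogonal vectors of norm `8` in a single class of `L / 2L`. -/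
structure IsFrame (L : Submodule ℤ V) {ι : Type*} [DecidableEq ι] (f : ι → V) : Prop where
  mem (i : ι) : f i ∈ L
  inner_eq (i j : ι) : ⟪f i, f j⟫ = if i = j then 8 else 0
  sub_mem (i j : ι) : f i - f j ∈ (2 : ℤ) • L

lemma IsFrame.linearIndependent {ι : Type*} [DecidableEq ι] {f : ι → V} (hf : IsFrame L f) :
    LinearIndependent ℝ f :=
  linearIndependent_of_ne_zero_of_inner_eq_zero
    (fun i hi ↦ by simpa [hi] using hf.inner_eq i i) fun i j hij ↦ by simp [hf.inner_eq, hij]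

lemma IsFrame.units_smul {ι : Type*} [DecidableEq ι] {f : ι → V} (hf : IsFrame L f) (ε : ι → ℤˣ) :
    IsFrame L fun i ↦ ε i • f i where
  mem i := L.smul_mem (ε i : ℤ) (hf.mem i)
  inner_eq i j := by
    rw [Units.smul_def, Units.smul_def, ← Int.cast_smul_eq_zsmul ℝ, ← Int.cast_smul_eq_zsmul ℝ,
      real_inner_smul_left, real_inner_smul_right, hf.inner_eq]
    split_ifs with h
    · rcases Int.units_eq_one_or (ε j) with h' | h' <;> simp [h, h']
    · simp
  sub_mem i j := by
    have sub_self_mem (i : ι) : ε i • f i - f i ∈ (2 : ℤ) • L := by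
      rcases Int.units_eq_one_or (ε i) with h | h
      · simp [h]
      · refine (Submodule.mem_smul_pointwise_iff_exists _ _ _).2 ⟨-f i, neg_mem (hf.mem i), ?_⟩
        simp [h, two_smul, sub_eq_add_neg]
    have decomposition :
        ε i • f i - ε j • f j = f i - f j + (ε i • f i - f i - (ε j • f j - f j)) := by abel
    rw [decomposition]
    exact add_mem (hf.sub_mem i j) (Submodule.sub_mem _ (sub_self_mem i) (sub_self_mem j))

open Classical in
theorem IsLeechLat.exists_isFrame [FiniteDimensional ℝ V] (hL : IsLeechLat L) :
    ∃ f : Fin 24 → V, IsFrame L f := by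
  obtain ⟨s, card_le, hs, sub_mem⟩ := hL.exists_congruent_of_forty_eight_le_card
  obtain ⟨t, hts, bijOn⟩ := exists_subset_bijOn (s : Set V) fun x ↦ s(x, -x)
  lift t to Finset V using s.finite_toSet.subset hts
  have card_t : 24 ≤ t.card := by
    have : s.card ≤ 2 * (s.image fun x ↦ s(x, -x)).card := by
      refine Finset.card_le_mul_card_image _ _ fun a ha ↦ ?_
      obtain ⟨y, -, rfl⟩ := Finset.mem_image.1 ha
      refine (Finset.card_le_card fun x hx ↦ ?_).trans (Finset.card_le_two (a := y) (b := -y))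
      rcases Sym2.eq_iff.1 (Finset.mem_filter.1 hx).2 with h | h <;> simp [h.1]
    have image_eq : s.image (fun x ↦ s(x, -x)) = t.image fun x ↦ s(x, -x) := by
      rw [← Finset.coe_inj]
      push_cast
      exact bijOn.image_eq.symm
    have := image_eq ▸ t.card_image_le (f := fun x ↦ s(x, -x))
    lia
  obtain ⟨u, hut, card_u⟩ := Finset.exists_subset_card_eq card_t
  have mem (x : u) : (x : V) ∈ s := hts (hut x.2)
  let e := (Finset.equivFinOfCardEq card_u).symm
  refine ⟨fun i ↦ e i, fun i ↦ (hs (mem _)).1, fun i j ↦ ?_, fun i j ↦ sub_mem _ (mem _) _ (mem _)⟩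
  split_ifs with h
  · rw [h, (hs (mem _)).2]
  have ne : (e i : V) ≠ e j := fun h' ↦ h (e.injective (Subtype.ext h'))
  rcases hL.eq_or_eq_neg_or_orthogonal (sub_mem _ (mem (e i)) _ (mem (e j))) (hs (mem _)).1
    (hs (mem _)).2.le (hs (mem _)).2.le with h | h | h
  · exact absurd h ne
  · exact absurd (bijOn.injOn (hut (e i).2) (hut (e j).2) (by simp [h])) ne
  · exact h.2.2

end Frame

section CoordinateLattice

open Matrix

variable {ι : Type*} [Fintype ι]

/-- The vector whose coordinates, in units of `1 / 8`, with respect to `f` are given. -/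
def ofCoord (f : ι → V) : (ι → ℤ) →ₗ[ℤ] V := Fintype.linearCombination ℤ fun i ↦ (8⁻¹ : ℝ) • f i

/-- The lattice of the coordinate vectors of the elements of `L` with respect to `f`. -/
def coordLat (L : Submodule ℤ V) (f : ι → V) : Submodule ℤ (ι → ℤ) := L.comap (ofCoord f)

lemma ofCoord_apply (f : ι → V) (x : ι → ℤ) : ofCoord f x = (8⁻¹ : ℝ) • ∑ i, (x i : ℝ) • f i := by
  simp only [ofCoord, Fintype.linearCombination_apply, Finset.smul_sum, ← Int.cast_smul_eq_zsmul ℝ,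
    smul_comm (8⁻¹ : ℝ)]

lemma mem_coordLat_comp_equiv {κ : Type*} [Fintype κ] {L : Submodule ℤ V} {f : ι → V} (e : κ ≃ ι)
    {x : κ → ℤ} : x ∈ coordLat L (f ∘ e) ↔ x ∘ e.symm ∈ coordLat L f := by
  have : ofCoord (f ∘ e) x = ofCoord f (x ∘ e.symm) := by
    rw [ofCoord_apply, ofCoord_apply, ← e.sum_comp]
    simp
  simp [coordLat, this]

lemma mem_coordLat_units_smul {L : Submodule ℤ V} {f : ι → V} {ε : ι → ℤˣ} {x : ι → ℤ} :
    x ∈ coordLat L (fun i ↦ ε i • f i) ↔ (fun i ↦ ε i * x i) ∈ coordLat L f := by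
  have : ofCoord (fun i ↦ ε i • f i) x = ofCoord f fun i ↦ ε i * x i := by
    rw [ofCoord_apply, ofCoord_apply]
    congr! 2 with i
    simp [Units.smul_def, ← Int.cast_smul_eq_zsmul ℝ, smul_smul, mul_comm]
  simp [coordLat, this]

variable [DecidableEq ι]

/-- The lattices of coordinate vectors of Leech lattices: in units of `1 / 8`, they are even,
self-dual and without vectors of norm `2`, and their standard basis is a frame. -/
structure IsLeechCoordLat (K : Submodule ℤ (ι → ℤ)) : Prop where
  dvd_dotProduct {x y : ι → ℤ} : x ∈ K → y ∈ K → 8 ∣ x ⬝ᵥ y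
  dvd_dotProduct_self {x : ι → ℤ} : x ∈ K → 16 ∣ x ⬝ᵥ x
  le_dotProduct_self {x : ι → ℤ} : x ∈ K → x ≠ 0 → 32 ≤ x ⬝ᵥ x
  mem_of_forall_dvd {x : ι → ℤ} : (∀ y ∈ K, 8 ∣ x ⬝ᵥ y) → x ∈ K
  single_sub_single_mem (i j : ι) : Pi.single i 4 - Pi.single j 4 ∈ K

namespace IsFrame

variable {L : Submodule ℤ V} {f : ι → V} (hf : IsFrame L f)
include hf

lemma inner_ofCoord_left (x : ι → ℤ) (i : ι) : ⟪ofCoord f x, f i⟫ = x i := by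
  simp [ofCoord_apply, inner_smul_left, sum_inner, hf.inner_eq, mul_comm (8⁻¹ : ℝ)]

lemma inner_ofCoord (x y : ι → ℤ) : ⟪ofCoord f x, ofCoord f y⟫ = ((x ⬝ᵥ y : ℤ) : ℝ) / 8 := by
  conv_lhs => rw [ofCoord_apply f y]
  simp only [inner_smul_right, inner_sum, hf.inner_ofCoord_left, dotProduct]
  push_cast
  simp only [mul_comm]
  ring

lemma exists_ofCoord_eq [FiniteDimensional ℝ V] (card_eq : Fintype.card ι = finrank ℝ V)
    {v : V} (hv : ∀ i, ∃ n : ℤ, ⟪v, f i⟫ = n) : ∃ x, ofCoord f x = v := by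
  choose x hx using hv
  refine ⟨x, InnerProductSpace.ext_inner_right_basis
    (basisOfLinearIndependentOfCardEqFinrank' f hf.linearIndependent card_eq) fun i ↦ ?_⟩
  simp [hf.inner_ofCoord_left, hx]

lemma isLeechCoordLat_coordLat [FiniteDimensional ℝ V] (hL : IsLeechLat L)
    (card_eq : Fintype.card ι = 24) :
    IsLeechCoordLat (coordLat L f) where
  dvd_dotProduct {x y} hx hy := by
    obtain ⟨k, hk⟩ := hL.isEvenLat.1 _ hx _ hy
    rw [hf.inner_ofCoord, div_eq_iff (by norm_num), mul_comm] at hk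
    exact ⟨k, mod_cast hk⟩
  dvd_dotProduct_self {x} hx := by
    obtain ⟨k, hk⟩ := hL.isEvenLat.2 _ hx
    rw [hf.inner_ofCoord, div_eq_iff (by norm_num)] at hk
    exact ⟨k, by push_cast [← @Int.cast_inj ℝ]; linarith⟩
  le_dotProduct_self {x} hx x_ne := by
    have norm_ge := hL.four_le_inner_self hx fun h ↦ x_ne <| by
      ext i
      simpa [h, eq_comm (a := (0 : ℝ))] using hf.inner_ofCoord_left x i
    rw [hf.inner_ofCoord, le_div_iff₀ (by norm_num)] at norm_ge
    norm_num1 at norm_ge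
    exact_mod_cast norm_ge
  mem_of_forall_dvd {x} hx := by
    refine hL.mem_of_forall_inner fun v hv ↦ ?_
    obtain ⟨y, rfl⟩ := hf.exists_ofCoord_eq (card_eq.trans hL.finrank_eq.symm) fun i ↦
      hL.isEvenLat.1 v hv _ (hf.mem i)
    obtain ⟨k, hk⟩ := hx y hv
    refine ⟨k, ?_⟩
    rw [real_inner_comm, hf.inner_ofCoord, hk]
    push_cast
    ring
  single_sub_single_mem i j := by
    obtain ⟨v, hv, half⟩ := (Submodule.mem_smul_pointwise_iff_exists _ _ _).1 (hf.sub_mem i j)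
    suffices ofCoord f (Pi.single i 4 - Pi.single j 4) = v by simpa [coordLat, this]
    rw [← Int.cast_smul_eq_zsmul ℝ, Int.cast_ofNat, ← eq_inv_smul_iff₀ two_ne_zero] at half
    simp only [ofCoord, map_sub, Fintype.linearCombination_apply_single,
      ← Int.cast_smul_eq_zsmul ℝ, Int.cast_ofNat, half]
    module

end IsFrame

end CoordinateLattice

section CodeOfLattice

open Matrix

variable {ι : Type*} {K : Submodule ℤ (ι → ℤ)}

/-- The binary code of the reductions modulo `2` of the vectors `w` with `2 • w ∈ K`. -/
def code (K : Submodule ℤ (ι → ℤ)) : Submodule (ZMod 2) (ι → ZMod 2) :=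
  AddSubgroup.toZModSubmodule 2 <|
    (K.comap ((2 : ℤ) • LinearMap.id)).toAddSubgroup.map ((Int.castAddHom (ZMod 2)).compLeft ι)

lemma mem_code {c : ι → ZMod 2} :
    c ∈ code K ↔ ∃ w, (2 : ℤ) • w ∈ K ∧ (fun i ↦ (w i : ZMod 2)) = c :=
  Iff.rfl

/-- The integral vector with entries `0` and `1` which reduces modulo `2` to a given word. -/
def wordLift (c : ι → ZMod 2) (i : ι) : ℤ := (c i).val

lemma cast_wordLift (c : ι → ZMod 2) (i : ι) : (wordLift c i : ZMod 2) = c i := by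
  simp [wordLift]

variable [Fintype ι]

lemma sum_wordLift (c : ι → ZMod 2) : ∑ i, wordLift c i = hammingNorm c := by
  have (a : ZMod 2) : (a.val : ℤ) = if a ≠ 0 then 1 else 0 := by revert a; decide
  simp only [wordLift, this, hammingNorm, Finset.sum_boole]

lemma wordLift_dotProduct_self (c : ι → ZMod 2) : wordLift c ⬝ᵥ wordLift c = hammingNorm c := by
  have (a : ZMod 2) : (a.val * a.val : ℤ) = a.val := by revert a; decide
  simp only [← sum_wordLift, dotProduct, wordLift, this]

lemma four_dvd_dotProduct_self_sub (w : ι → ℤ) :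
    4 ∣ w ⬝ᵥ w - hammingNorm fun i ↦ (w i : ZMod 2) := by
  rw [← sum_wordLift, dotProduct, ← Finset.sum_sub_distrib]
  refine Finset.dvd_sum fun i _ ↦ ?_
  have val_eq : wordLift (fun i ↦ (w i : ZMod 2)) i = w i % 2 := ZMod.val_intCast _
  rw [val_eq]
  rcases Int.even_or_odd' (w i) with ⟨k, hk | hk⟩
  · exact ⟨k * k, by rw [show w i % 2 = 0 by lia, hk]; ring⟩
  · exact ⟨k * k + k, by rw [show w i % 2 = 1 by lia, hk]; ring⟩

variable [DecidableEq ι]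

/-- The extended binary Golay codes, as self-dual doubly even codes without words of weight `4`. -/
structure IsGolayCode (C : Submodule (ZMod 2) (ι → ZMod 2)) : Prop where
  card_eq : Fintype.card ι = 24
  four_dvd_hammingNorm {c : ι → ZMod 2} : c ∈ C → 4 ∣ hammingNorm c
  eight_le_hammingNorm {c : ι → ZMod 2} : c ∈ C → c ≠ 0 → 8 ≤ hammingNorm c
  mem_of_forall_dotProduct {c : ι → ZMod 2} : (∀ d ∈ C, c ⬝ᵥ d = 0) → c ∈ C
  one_mem : 1 ∈ C

namespace IsLeechCoordLat

variable (hK : IsLeechCoordLat K)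
include hK

lemma even_sub {x : ι → ℤ} (hx : x ∈ K) (i j : ι) : 2 ∣ x i - x j := by
  have := hK.dvd_dotProduct hx (hK.single_sub_single_mem i j)
  simp only [dotProduct_sub, dotProduct_single] at this
  lia

lemma four_smul_mem {z : ι → ℤ} (hz : 2 ∣ ∑ i, z i) : (4 : ℤ) • z ∈ K := by
  refine hK.mem_of_forall_dvd fun y hy ↦ ?_
  suffices 2 ∣ z ⬝ᵥ y by
    rw [smul_dotProduct, smul_eq_mul]
    lia
  rcases isEmpty_or_nonempty ι with _ | ⟨⟨j⟩⟩
  · simp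
  have decomposition : z ⬝ᵥ y = ∑ i, z i * (y i - y j) + (∑ i, z i) * y j := by
    simp [dotProduct, mul_sub, Finset.sum_mul]
  rw [decomposition]
  exact dvd_add (Finset.dvd_sum fun i _ ↦ (hK.even_sub hy i j).mul_left _) (hz.mul_right _)

lemma exists_odd [Nonempty ι] : ∃ x ∈ K, ∀ i, x i % 2 = 1 := by
  let i := Classical.arbitrary ι
  by_contra! h
  have single_mem : Pi.single i 4 ∈ K := by
    refine hK.mem_of_forall_dvd fun y hy ↦ ?_
    obtain ⟨j, hj⟩ := h y hy
    have := hK.even_sub hy i j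
    rw [single_dotProduct]
    lia
  have := hK.le_dotProduct_self single_mem (by simp)
  simp at this

lemma one_sub_single_mem_of_mod_four (card_eq : Fintype.card ι = 24) {x : ι → ℤ} (hx : x ∈ K)
    (mod_four : ∀ i, x i % 4 = 1) (i : ι) : 1 - Pi.single i 4 ∈ K := by
  let z (i : ι) : ℤ := x i / 4
  have x_eq : x = 1 + (4 : ℤ) • z := by
    ext i
    have := mod_four i
    simp only [Pi.add_apply, Pi.one_apply, Pi.smul_apply, smul_eq_mul, z]
    lia
  have sum_odd : ¬ 2 ∣ ∑ i, z i := fun even ↦ by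
    have one_mem : (1 : ι → ℤ) ∈ K := by simpa [x_eq] using sub_mem hx (hK.four_smul_mem even)
    have : Nonempty ι := Fintype.card_pos_iff.1 (by lia)
    have := hK.le_dotProduct_self one_mem one_ne_zero
    simp [card_eq] at this
  have even : 2 ∣ ∑ j, (z + Pi.single i 1 : ι → ℤ) j := by
    simp only [Pi.add_apply, Finset.sum_add_distrib, Fintype.sum_pi_single']
    lia
  convert! sub_mem hx (hK.four_smul_mem even) using 1
  rw [x_eq, smul_add, ← Pi.single_smul, smul_eq_mul, mul_one]
  abel

end IsLeechCoordLat

open Classical in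
lemma IsLeechLat.exists_isFrame_one_sub_single_mem [FiniteDimensional ℝ V] {L : Submodule ℤ V}
    (hL : IsLeechLat L) :
    ∃ f : Fin 24 → V, IsFrame L f ∧ ∀ i, 1 - Pi.single i 4 ∈ coordLat L f := by
  obtain ⟨f, hf⟩ := hL.exists_isFrame
  obtain ⟨x, hx, odd⟩ := (hf.isLeechCoordLat_coordLat hL (by simp)).exists_odd
  let ε (i : Fin 24) : ℤˣ := if x i % 4 = 1 then 1 else -1
  have hεf := hf.units_smul ε
  refine ⟨_, hεf, (hεf.isLeechCoordLat_coordLat hL (by simp)).one_sub_single_mem_of_mod_four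
    (by simp) (x := fun i ↦ ε i * x i) (mem_coordLat_units_smul.2 ?_) fun i ↦ ?_⟩
  · simpa [← mul_assoc, ← Units.val_mul] using hx
  · have := odd i
    by_cases h : x i % 4 = 1
    · simp [ε, h]
    · simp only [ε, h, if_false, Units.val_neg, Units.val_one]
      lia

namespace IsLeechCoordLat

variable (hK : IsLeechCoordLat K) (h_one : ∀ i, 1 - Pi.single i 4 ∈ K)
include hK h_one

lemma eight_dvd_sum_sub {x : ι → ℤ} (hx : x ∈ K) (i : ι) : 8 ∣ ∑ j, x j - 4 * x i := by
  simpa [dotProduct_sub, dotProduct_one, mul_comm] using hK.dvd_dotProduct hx (h_one i)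

lemma two_smul_mem_iff [Nonempty ι] {w : ι → ℤ} :
    (2 : ℤ) • w ∈ K ↔ (fun i ↦ (w i : ZMod 2)) ∈ code K ∧ 4 ∣ ∑ i, w i := by
  have four_dvd {w : ι → ℤ} (hw : (2 : ℤ) • w ∈ K) : 4 ∣ ∑ i, w i := by
    have := hK.eight_dvd_sum_sub h_one hw (Classical.arbitrary ι)
    simp only [Pi.smul_apply, smul_eq_mul, ← Finset.mul_sum] at this
    lia
  refine ⟨fun hw ↦ ⟨⟨w, hw, rfl⟩, four_dvd hw⟩, fun ⟨h_mem, hw⟩ ↦ ?_⟩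
  obtain ⟨w', hw', mod_two⟩ := mem_code.1 h_mem
  choose z hz using fun i ↦
    (ZMod.intCast_eq_intCast_iff_dvd_sub (w' i) (w i) 2).1 (congrFun mod_two i)
  have w_eq : w = w' + (2 : ℤ) • z := by
    ext i
    simpa [sub_eq_iff_eq_add'] using hz i
  have even : 2 ∣ ∑ i, z i := by
    have := four_dvd hw'
    simp only [w_eq, Pi.add_apply, Pi.smul_apply, Finset.sum_add_distrib, smul_eq_mul,
      ← Finset.mul_sum] at hw
    lia
  rw [w_eq, smul_add, smul_smul]
  exact add_mem hw' (hK.four_smul_mem even)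

lemma code_mem_of_forall_dotProduct [Nonempty ι] {c : ι → ZMod 2}
    (hc : ∀ d ∈ code K, c ⬝ᵥ d = 0) (one_mem : 1 ∈ code K) : c ∈ code K := by
  let j := Classical.arbitrary ι
  have dotProduct_cast (x y : ι → ℤ) :
      (fun i ↦ (x i : ZMod 2)) ⬝ᵥ (fun i ↦ (y i : ZMod 2)) = ((x ⬝ᵥ y : ℤ) : ZMod 2) := by
    simp [dotProduct]
  have two_dvd {x y : ι → ℤ} (h : (fun i ↦ (x i : ZMod 2)) ⬝ᵥ (fun i ↦ (y i : ZMod 2)) = 0) :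
      2 ∣ x ⬝ᵥ y := (ZMod.intCast_zmod_eq_zero_iff_dvd _ 2).1 (dotProduct_cast x y ▸ h)
  obtain ⟨w, rfl, four_dvd⟩ : ∃ w : ι → ℤ, (fun i ↦ (w i : ZMod 2)) = c ∧ 4 ∣ ∑ i, w i := by
    have sum_even : 2 ∣ ∑ i, wordLift c i := by
      rw [← dotProduct_one]
      exact two_dvd (by simpa [cast_wordLift, dotProduct] using hc _ one_mem)
    by_cases h : 4 ∣ ∑ i, wordLift c i
    · exact ⟨_, funext (cast_wordLift c), h⟩
    · refine ⟨wordLift c + Pi.single j 2, funext fun i ↦ ?_, ?_⟩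
      · rcases eq_or_ne i j with rfl | hij <;> simp [cast_wordLift, CharTwo.two_eq_zero, *]
      · simp only [Pi.add_apply, Finset.sum_add_distrib, Fintype.sum_pi_single']
        lia
  refine mem_code.2 ⟨w, hK.mem_of_forall_dvd fun y hy ↦ ?_, rfl⟩
  suffices 4 ∣ w ⬝ᵥ y by
    rw [smul_dotProduct, smul_eq_mul]
    lia
  have of_even {y : ι → ℤ} (hy : y ∈ K) (even : 2 ∣ y j) : 4 ∣ w ⬝ᵥ y := by
    choose u hu using fun i ↦ (dvd_sub_left even).1 (hK.even_sub hy i j)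
    obtain rfl : y = (2 : ℤ) • u := funext hu
    have := two_dvd (hc _ ⟨u, hy, rfl⟩)
    rw [dotProduct_smul, smul_eq_mul]
    lia
  by_cases even : 2 ∣ y j
  · exact of_even hy even
  · have := of_even (sub_mem hy (h_one j)) (by simp; lia)
    simp only [dotProduct_sub, dotProduct_one, dotProduct_single] at this
    lia

theorem isGolayCode_code (card_eq : Fintype.card ι = 24) : IsGolayCode (code K) := by
  have : Nonempty ι := Fintype.card_pos_iff.1 (by lia)
  have one_mem : 1 ∈ code K := by
    let j := Classical.arbitrary ι
    refine ⟨1 - Pi.single j 4, K.smul_mem 2 (h_one j), funext fun i ↦ ?_⟩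
    rcases eq_or_ne i j with rfl | hij <;> simp [*]
    rfl
  have four_dvd {c : ι → ZMod 2} (hc : c ∈ code K) : 4 ∣ hammingNorm c := by
    obtain ⟨w, hw, rfl⟩ := mem_code.1 hc
    have := hK.dvd_dotProduct_self hw
    have := four_dvd_dotProduct_self_sub w
    simp only [smul_dotProduct, dotProduct_smul,
      smul_eq_mul] at *
    lia
  refine ⟨card_eq, four_dvd, fun {c} hc c_ne ↦ ?_,
    fun hc ↦ hK.code_mem_of_forall_dotProduct h_one hc one_mem, one_mem⟩
  have mem : (2 : ℤ) • wordLift c ∈ K := (hK.two_smul_mem_iff h_one).2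
    ⟨by simpa only [cast_wordLift] using hc, by rw [sum_wordLift]; exact_mod_cast four_dvd hc⟩
  have := hK.le_dotProduct_self mem fun h ↦ c_ne <| funext fun i ↦ by
    have : wordLift c i = 0 := by simpa using congrFun h i
    simpa [this] using (cast_wordLift c i).symm
  rw [smul_dotProduct, dotProduct_smul, wordLift_dotProduct_self] at this
  simp only [smul_eq_mul] at this
  lia

end IsLeechCoordLat

end CodeOfLattice

section GolayCode

open Matrix

variable {ι : Type*}

/-- The number of nonzero entries of the word `c` at the positions in `s`. -/
def weightOn (s : Finset ι) (c : ι → ZMod 2) : ℕ := (s.filter fun i ↦ c i ≠ 0).card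

lemma weightOn_le_card (s : Finset ι) (c : ι → ZMod 2) : weightOn s c ≤ s.card :=
  Finset.card_filter_le _ _

lemma weightOn_congr {s : Finset ι} {c d : ι → ZMod 2} (h : ∀ i ∈ s, c i = d i) :
    weightOn s c = weightOn s d :=
  congrArg Finset.card <| Finset.filter_congr fun i hi ↦ by rw [h i hi]

lemma weightOn_eq_zero_iff {s : Finset ι} {c : ι → ZMod 2} :
    weightOn s c = 0 ↔ ∀ i ∈ s, c i = 0 := by
  simp [weightOn, Finset.card_eq_zero, Finset.filter_eq_empty_iff]

lemma weightOn_eq_card_iff {s : Finset ι} {c : ι → ZMod 2} :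
    weightOn s c = s.card ↔ ∀ i ∈ s, c i = 1 := by
  have (a : ZMod 2) : a ≠ 0 ↔ a = 1 := by revert a; decide
  simp [weightOn, Finset.card_filter_eq_iff, this]

lemma weightOn_add (s : Finset ι) (c d : ι → ZMod 2) :
    weightOn s (c + d) + 2 * weightOn s (c * d) = weightOn s c + weightOn s d := by
  have (a b : ZMod 2) : (if a + b ≠ 0 then 1 else 0) + 2 * (if a * b ≠ 0 then 1 else 0) =
      (if a ≠ 0 then 1 else 0) + if b ≠ 0 then 1 else 0 := by revert a b; decide
  simp only [weightOn, Finset.card_filter, Finset.mul_sum, ← Finset.sum_add_distrib, Pi.add_apply,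
    Pi.mul_apply, this]

lemma weightOn_add_of_eq_one {s : Finset ι} {c d : ι → ZMod 2} (hd : ∀ i ∈ s, d i = 1) :
    weightOn s (c + d) + weightOn s c = s.card := by
  have := weightOn_add s c d
  rw [weightOn_congr (c := c * d) (d := c) fun i hi ↦ by simp [hd i hi],
    weightOn_eq_card_iff.2 hd] at this
  lia

lemma sum_eq_weightOn (s : Finset ι) (c : ι → ZMod 2) : ∑ i ∈ s, c i = weightOn s c := by
  have (a : ZMod 2) : a = if a ≠ 0 then 1 else 0 := by revert a; decide
  rw [weightOn, Finset.natCast_card_filter]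
  exact Finset.sum_congr rfl fun i _ ↦ this (c i)

variable [Fintype ι]

lemma weightOn_univ (c : ι → ZMod 2) : weightOn Finset.univ c = hammingNorm c := rfl

lemma weightOn_add_weightOn_compl [DecidableEq ι] (s : Finset ι) (c : ι → ZMod 2) :
    weightOn s c + weightOn sᶜ c = hammingNorm c := by
  simp only [weightOn, hammingNorm, Finset.card_filter, Finset.sum_add_sum_compl]

lemma mem_of_forall_dotProduct_eq_zero {F : Type*} [Field F] {U : Submodule F (ι → F)}
    {v : ι → F}
    (hv : ∀ d, (∀ u ∈ U, d ⬝ᵥ u = 0) → d ⬝ᵥ v = 0) : v ∈ U := by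
  classical
  by_contra v_notMem
  obtain ⟨f, fv_ne, hf⟩ := Submodule.exists_le_ker_of_notMem v_notMem
  have f_eq (u : ι → F) : (fun i ↦ f fun j ↦ if i = j then 1 else 0) ⬝ᵥ u = f u := by
    rw [f.pi_apply_eq_sum_univ u]
    simp [dotProduct, mul_comm]
  exact fv_ne (f_eq v ▸ hv _ fun u hu ↦ (f_eq u).trans (hf hu))

variable {C : Submodule (ZMod 2) (ι → ZMod 2)}

namespace IsGolayCode

variable (hC : IsGolayCode C)
include hC

lemma dotProduct_eq_zero {c d : ι → ZMod 2} (hc : c ∈ C) (hd : d ∈ C) : c ⬝ᵥ d = 0 := by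
  have := weightOn_add Finset.univ c d
  have := hC.four_dvd_hammingNorm (C.add_mem hc hd)
  have := hC.four_dvd_hammingNorm hc
  have := hC.four_dvd_hammingNorm hd
  simp only [weightOn_univ] at *
  change ∑ i, (c * d) i = 0
  rw [sum_eq_weightOn, weightOn_univ, ZMod.natCast_eq_zero_iff]
  lia

/-- Dually, `C` and the words supported in `s` generate the words orthogonal to the words of `C`
vanishing on `s`. -/
lemma exists_mem_eq_of_notMem (s : Finset ι) {v : ι → ZMod 2}
    (hv : ∀ c ∈ C, (∀ i ∈ s, c i = 0) → c ⬝ᵥ v = 0) : ∃ c ∈ C, ∀ i ∉ s, c i = v i := by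
  let U := C ⊔ LinearMap.ker
    (LinearMap.funLeft (ZMod 2) (ZMod 2) (Subtype.val : {i // i ∉ s} → ι))
  classical
  have v_mem : v ∈ U := mem_of_forall_dotProduct_eq_zero fun d hd ↦
    hv d (hC.mem_of_forall_dotProduct fun c hc ↦ hd c (Submodule.mem_sup_left hc)) fun i hi ↦ by
      simpa using hd (Pi.single i 1) <| Submodule.mem_sup_right <| LinearMap.mem_ker.2 <|
        funext fun j ↦ Pi.single_eq_of_ne (ne_of_mem_of_not_mem hi j.2).symm _
  obtain ⟨c, hc, u, hu, rfl⟩ := Submodule.mem_sup.1 v_mem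
  exact ⟨c, hc, fun i hi ↦ by simpa using congrFun hu ⟨i, hi⟩⟩

lemma exists_weightOn_eq_of_card_eq_eleven [DecidableEq ι]
    (twelve_le : ∀ c ∈ C, c ≠ 0 → 12 ≤ hammingNorm c) {s : Finset ι} (card_s : s.card = 11) {p : ι}
    (hp : p ∈ s) :
    ∃ c ∈ C, (∀ i ∈ s, c i = (Pi.single p 1 : ι → ZMod 2) i) ∧ weightOn s c = 1 ∧
      weightOn sᶜ c = 11 := by
  have card_compl : sᶜ.card = 13 := by rw [Finset.card_compl, hC.card_eq, card_s]
  obtain ⟨c, hc, c_eq⟩ := hC.exists_mem_eq_of_notMem sᶜ (v := Pi.single p 1) fun d hd hd0 ↦ by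
    by_contra d_ne
    have := twelve_le d hd (by rintro rfl; simp at d_ne)
    have := weightOn_add_weightOn_compl s d
    have := weightOn_le_card s d
    have := weightOn_eq_zero_iff.2 hd0
    lia
  simp only [Finset.mem_compl, not_not] at c_eq
  have weight_s : weightOn s c = 1 := by
    rw [weightOn_congr c_eq, weightOn, Finset.card_eq_one]
    exact ⟨p, by ext i; simp +contextual [Pi.single_apply, hp]⟩
  refine ⟨c, hc, c_eq, weight_s, ?_⟩
  have := hC.four_dvd_hammingNorm hc
  have := twelve_le c hc (by rintro rfl; simpa using c_eq p hp)
  have := weightOn_add_weightOn_compl s c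
  have := weightOn_le_card sᶜ c
  lia

/-- Without octads the minimum weight would be `12`, and two words extending unit words of an
`11`-set would be too close to each other. -/
lemma exists_octad : ∃ o ∈ C, hammingNorm o = 8 := by
  classical
  by_contra! no_octad
  have twelve_le (c) (hc : c ∈ C) (c_ne : c ≠ 0) : 12 ≤ hammingNorm c := by
    have := hC.four_dvd_hammingNorm hc
    have := hC.eight_le_hammingNorm hc c_ne
    have := no_octad c hc
    lia
  obtain ⟨s, -, card_s⟩ := Finset.exists_subset_card_eq (s := (Finset.univ : Finset ι)) (n := 11)
    (by simp [hC.card_eq])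
  have card_compl : sᶜ.card = 13 := by rw [Finset.card_compl, hC.card_eq, card_s]
  obtain ⟨p, hp, q, hq, hpq⟩ := Finset.one_lt_card.1 (show 1 < s.card by lia)
  obtain ⟨c, hc, c_eq, _, _⟩ := hC.exists_weightOn_eq_of_card_eq_eleven twelve_le card_s hp
  obtain ⟨d, hd, d_eq, _, _⟩ := hC.exists_weightOn_eq_of_card_eq_eleven twelve_le card_s hq
  have := twelve_le _ (C.add_mem hc hd) fun h ↦ by
    simpa [c_eq p hp, d_eq p hp, hpq] using congrFun h p
  have := weightOn_add_weightOn_compl s (c + d)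
  have := weightOn_add s c d
  have weight_add := weightOn_add sᶜ (c + 1) (d + 1)
  rw [add_add_add_comm, one_add_one_eq_two, show (2 : ι → ZMod 2) = 0 from rfl, add_zero]
    at weight_add
  have := weightOn_add_of_eq_one (s := sᶜ) (c := c) (d := 1) (by simp)
  have := weightOn_add_of_eq_one (s := sᶜ) (c := d) (d := 1) (by simp)
  lia

lemma exists_ne_of_octad {o : ι → ZMod 2} (ho : o ∈ C) (weight_o : hammingNorm o = 8) {p q : ι}
    (hpq : p ≠ q) (hp : o p = 0) (hq : o q = 0) :
    ∃ c ∈ C, (∀ i, o i = 1 → c i = 0) ∧ c p ≠ c q := by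
  classical
  by_contra! h
  let s := Finset.univ.filter (o · ≠ 0)
  have mem_s (i) : i ∈ s ↔ o i = 1 := by
    have (a : ZMod 2) : a ≠ 0 ↔ a = 1 := by revert a; decide
    simp [s, this]
  obtain ⟨c, hc, c_eq⟩ := hC.exists_mem_eq_of_notMem s (v := Pi.single p 1 + Pi.single q 1)
    fun c hc hc0 ↦ by
      simp [h c hc fun i hi ↦ hc0 i ((mem_s i).2 hi), CharTwo.add_self_eq_zero]
  have weight_compl : weightOn sᶜ c = 2 := by
    refine Finset.card_eq_two.2 ⟨p, q, hpq, Finset.ext fun i ↦ ?_⟩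
    by_cases hi : i ∈ s
    · have ip : i ≠ p := by rintro rfl; simp [s, hp] at hi
      have iq : i ≠ q := by rintro rfl; simp [s, hq] at hi
      simp [hi, ip, iq]
    · rcases eq_or_ne i p with rfl | ip
      · simp [hi, c_eq, hpq]
      · simp [hi, c_eq, ip, Pi.single_apply]
  have := hC.eight_le_hammingNorm hc (by rintro rfl; simp [weightOn] at weight_compl)
  have := hC.eight_le_hammingNorm (C.add_mem hc ho) fun h ↦ by
    simpa [hp, c_eq p (by simp [s, hp]), hpq] using congrFun h p
  have := weightOn_add_weightOn_compl s c
  have := weightOn_add_weightOn_compl s (c + o)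
  have := weightOn_add_of_eq_one (c := c) fun i hi ↦ (mem_s i).1 hi
  have : weightOn sᶜ (c + o) = weightOn sᶜ c := weightOn_congr fun i hi ↦ by
    simpa [s] using hi
  have card_s : s.card = 8 := weight_o
  lia

end IsGolayCode

/-- The set of positions in the `k`-th block of a partition `t` of the positions into three
blocks. -/
def block (t : ι → Fin 3) (k : Fin 3) : Finset ι := Finset.univ.filter (t · = k)

lemma mem_block {t : ι → Fin 3} {k : Fin 3} {i : ι} : i ∈ block t k ↔ t i = k := by simp [block]

lemma sum_weightOn_block (t : ι → Fin 3) (c : ι → ZMod 2) :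
    ∑ k, weightOn (block t k) c = hammingNorm c := by
  classical
  simp only [weightOn, block, hammingNorm, Finset.card_filter, Finset.sum_filter]
  rw [Finset.sum_comm]
  simp

/-- The word supported on the `k`-th block of the partition `t`, with all entries `1` there. -/
def blockWord (t : ι → Fin 3) (k : Fin 3) (i : ι) : ZMod 2 := if t i = k then 1 else 0

/-- The trios of octads of the code `C`: partitions of the positions into three octads. -/
structure IsTrio (C : Submodule (ZMod 2) (ι → ZMod 2)) (t : ι → Fin 3) : Prop where
  card_block (k : Fin 3) : (block t k).card = 8
  blockWord_mem (k : Fin 3) : blockWord t k ∈ C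

lemma IsGolayCode.exists_disjoint_octads (hC : IsGolayCode C) :
    ∃ o ∈ C, ∃ c ∈ C, hammingNorm o = 8 ∧ hammingNorm c = 8 ∧ ∀ i, o i ≠ 0 → c i = 0 := by
  classical
  have eq_one_iff (a : ZMod 2) : a = 1 ↔ a ≠ 0 := by revert a; decide
  obtain ⟨o, ho, weight_o⟩ := hC.exists_octad
  let s := Finset.univ.filter (o · ≠ 0)
  have card_s : s.card = 8 := weight_o
  have card_compl : sᶜ.card = 16 := by rw [Finset.card_compl, hC.card_eq, card_s]
  obtain ⟨p, hp, q, hq, hpq⟩ := Finset.one_lt_card.1 (show 1 < sᶜ.card by lia)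
  simp only [s, Finset.mem_compl, Finset.mem_filter, Finset.mem_univ, true_and, not_not] at hp hq
  obtain ⟨c, hc, c_eq, c_ne⟩ := hC.exists_ne_of_octad ho weight_o hpq hp hq
  simp only [eq_one_iff] at c_eq
  refine ⟨o, ho, c, hc, weight_o, ?_, c_eq⟩
  let c' := c + (1 + o)
  have hc' : c' ∈ C := C.add_mem hc (C.add_mem hC.one_mem ho)
  have := weightOn_add_weightOn_compl s c
  have := weightOn_add_weightOn_compl s c'
  have : weightOn s c = 0 := weightOn_eq_zero_iff.2 fun i hi ↦ c_eq i (by simpa [s] using hi)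
  have : weightOn s c' = 0 := weightOn_eq_zero_iff.2 fun i hi ↦ by
    have : o i = 1 := by simpa [s, eq_one_iff] using hi
    simp [c', this, c_eq, CharTwo.add_self_eq_zero]
  have : weightOn sᶜ c' + weightOn sᶜ c = sᶜ.card := weightOn_add_of_eq_one fun i hi ↦ by
    simpa [s] using hi
  have := hC.four_dvd_hammingNorm hc
  have := hC.eight_le_hammingNorm hc fun h ↦ by simp [h] at c_ne
  have := hC.eight_le_hammingNorm hc' fun h ↦ c_ne <| by
    have := congrFun h p
    have := congrFun h q
    simp_all [c', add_eq_zero_iff_eq_neg]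
  lia

lemma IsGolayCode.exists_isTrio (hC : IsGolayCode C) : ∃ t, IsTrio C t := by
  have eq_zero_or_eq_one (a : ZMod 2) : a = 0 ∨ a = 1 := by revert a; decide
  obtain ⟨o, ho, c, hc, weight_o, weight_c, c_eq⟩ := hC.exists_disjoint_octads
  let t (i : ι) : Fin 3 := if o i ≠ 0 then 0 else if c i ≠ 0 then 1 else 2
  have word_zero : blockWord t 0 = o := funext fun i ↦ by
    rcases eq_zero_or_eq_one (o i) with h | h <;> rcases eq_zero_or_eq_one (c i) with h' | h' <;>
      simp [blockWord, t, h, h']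
  have word_one : blockWord t 1 = c := funext fun i ↦ by
    have := c_eq i
    rcases eq_zero_or_eq_one (o i) with h | h <;> rcases eq_zero_or_eq_one (c i) with h' | h' <;>
      simp_all [blockWord, t]
  have word_two : blockWord t 2 = 1 + (o + c) := funext fun i ↦ by
    have := c_eq i
    rcases eq_zero_or_eq_one (o i) with h | h <;> rcases eq_zero_or_eq_one (c i) with h' | h' <;>
      simp_all [blockWord, t, CharTwo.add_self_eq_zero]
  have card_block (k) : (block t k).card = hammingNorm (blockWord t k) := by
    simp [block, hammingNorm, blockWord]
  have sum_card : ∑ k, (block t k).card = 24 := by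
    simpa [weightOn, hammingNorm, hC.card_eq] using sum_weightOn_block t 1
  simp only [Fin.sum_univ_three, card_block 0, card_block 1, word_zero, word_one] at sum_card
  refine ⟨t, fun k ↦ ?_, fun k ↦ ?_⟩
  · fin_cases k
    · simp [card_block, word_zero, weight_o]
    · simp [card_block, word_one, weight_c]
    · simp only [Fin.reduceFinMk]
      lia
  · fin_cases k
    · simpa [word_zero] using ho
    · simpa [word_one] using hc
    · simpa [word_two] using C.add_mem hC.one_mem (C.add_mem ho hc)

end GolayCode

section SignChar

/-- The nontrivial sign character `a ↦ (-1) ^ a`. -/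
def signChar : AddChar (ZMod 2) ℤ := AddChar.zmodChar 2 (ζ := -1) (by norm_num)

lemma signChar_eq (a : ZMod 2) : signChar a = if a ≠ 0 then -1 else 1 := by
  fin_cases a <;> rfl

lemma sum_signChar {ι : Type*} (s : Finset ι) (c : ι → ZMod 2) :
    ∑ i ∈ s, signChar (c i) = s.card - 2 * weightOn s c := by
  have signChar_eq_sub (a : ZMod 2) : signChar a = 1 - 2 * if a ≠ 0 then 1 else 0 := by
    rw [signChar_eq]
    split_ifs <;> rfl
  simp only [signChar_eq_sub, Finset.sum_sub_distrib, ← Finset.mul_sum, Finset.sum_boole,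
    Finset.sum_const, weightOn, nsmul_eq_mul, mul_one]

lemma sum_signChar_dual {W : Type*} [AddCommGroup W] [Module (ZMod 2) W] [Fintype W]
    (h : Dual (ZMod 2) W) [Decidable (h = 0)] :
    ∑ w, signChar (h w) = if h = 0 then (Fintype.card W : ℤ) else 0 := by
  split_ifs with h_eq
  · simp [h_eq]
  · let ψ := signChar.compAddMonoidHom h.toAddMonoidHom
    refine AddChar.sum_eq_zero_iff_ne_zero.2 (AddChar.ne_zero_iff.2 ?_ : ψ ≠ 0)
    obtain ⟨w, hw⟩ := DFunLike.ne_iff.1 h_eq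
    exact ⟨w, by simpa [ψ, signChar_eq] using hw⟩

end SignChar

section Labelling

open Matrix

variable {ι : Type*}

/-- The projection erasing the entries of a word in the `k`-th block of the partition `t`. -/
def eraseBlock (t : ι → Fin 3) (k : Fin 3) : (ι → ZMod 2) →ₗ[ZMod 2] ι → ZMod 2 where
  toFun c i := if t i = k then 0 else c i
  map_add' c d := by ext i; by_cases h : t i = k <;> simp [h]
  map_smul' a c := by ext i; by_cases h : t i = k <;> simp [h]

lemma eraseBlock_apply (t : ι → Fin 3) (k : Fin 3) (c : ι → ZMod 2) (i : ι) :
    eraseBlock t k c i = if t i = k then 0 else c i := rfl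

/-- Turyn's code of a trio: the words all of whose projections to two blocks lie in `C`. -/
def turynCode (C : Submodule (ZMod 2) (ι → ZMod 2)) (t : ι → Fin 3) :
    Submodule (ZMod 2) (ι → ZMod 2) :=
  ⨅ k, C.comap (eraseBlock t k)

variable {C : Submodule (ZMod 2) (ι → ZMod 2)} {t : ι → Fin 3}

lemma mem_turynCode {c : ι → ZMod 2} : c ∈ turynCode C t ↔ ∀ k, eraseBlock t k c ∈ C := by
  simp [turynCode]

/-- The words of Turyn's code of a trio `t` which vanish at the points `b 0`, `b 1`, `b 2`. It will
serve as the space of linear functions on each block, with `b k` as the zero of the `k`-th one. -/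
def pointedCode (C : Submodule (ZMod 2) (ι → ZMod 2)) (t : ι → Fin 3) (b : Fin 3 → ι) :
    Submodule (ZMod 2) (ι → ZMod 2) :=
  turynCode C t ⊓ ⨅ k, LinearMap.ker (LinearMap.proj (b k))

lemma mem_pointedCode {b : Fin 3 → ι} {c : ι → ZMod 2} :
    c ∈ pointedCode C t b ↔ c ∈ turynCode C t ∧ ∀ k, c (b k) = 0 := by
  simp [pointedCode]

/-- The value at the position `i`, as a linear form on `pointedCode C t b`. -/
def pointEval (C : Submodule (ZMod 2) (ι → ZMod 2)) (t : ι → Fin 3) (b : Fin 3 → ι) (i : ι) :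
    Dual (ZMod 2) (pointedCode C t b) :=
  (LinearMap.proj i).domRestrict _

lemma pointEval_apply {b : Fin 3 → ι} (i : ι) (c : pointedCode C t b) :
    pointEval C t b i c = c.1 i := rfl

lemma pointEval_base {b : Fin 3 → ι} (k : Fin 3) : pointEval C t b (b k) = 0 :=
  LinearMap.ext fun c ↦ (mem_pointedCode.1 c.2).2 k

variable [Fintype ι]

lemma IsGolayCode.hammingNorm_eq_zero_or (hC : IsGolayCode C) {c : ι → ZMod 2} (hc : c ∈ C) :
    hammingNorm c = 0 ∨ 8 ≤ hammingNorm c :=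
  (eq_or_ne c 0).imp hammingNorm_eq_zero.2 (hC.eight_le_hammingNorm hc)

lemma IsTrio.hammingNorm_add_blockWord (ht : IsTrio C t) (c : ι → ZMod 2) (k : Fin 3) :
    hammingNorm (c + blockWord t k) + 2 * weightOn (block t k) c = hammingNorm c + 8 := by
  classical
  have on_block := weightOn_add_of_eq_one (s := block t k) (c := c) (d := blockWord t k)
    fun i hi ↦ by simp [blockWord, mem_block.1 hi]
  have off_block : weightOn (block t k)ᶜ (c + blockWord t k) = weightOn (block t k)ᶜ c :=
    weightOn_congr fun i hi ↦ by
      rw [Finset.mem_compl, mem_block] at hi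
      simp [blockWord, hi]
  have := weightOn_add_weightOn_compl (block t k) c
  have := weightOn_add_weightOn_compl (block t k) (c + blockWord t k)
  rw [ht.card_block] at on_block
  lia

lemma IsGolayCode.four_dvd_weightOn_block (hC : IsGolayCode C) (ht : IsTrio C t) {c : ι → ZMod 2}
    (hc : c ∈ C) {k : Fin 3} (hk : ∀ i, t i = k → c i = 0) (j : Fin 3) :
    4 ∣ weightOn (block t j) c := by
  have weight_k : weightOn (block t k) c = 0 :=
    weightOn_eq_zero_iff.2 fun i hi ↦ hk i (mem_block.1 hi)
  have weight_le (l) : weightOn (block t l) c ≤ 8 := ht.card_block l ▸ weightOn_le_card _ _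
  have flip (l) : weightOn (block t l) c = 8 ∨ 2 * weightOn (block t l) c ≤ hammingNorm c := by
    have := hC.hammingNorm_eq_zero_or (C.add_mem hc (ht.blockWord_mem l))
    have := ht.hammingNorm_add_blockWord c l
    have : weightOn (block t l) c ≤ hammingNorm c :=
      Finset.card_le_card (Finset.filter_subset_filter _ (Finset.subset_univ _))
    have := weight_le l
    lia
  have flip_compl : hammingNorm c = 16 ∨ hammingNorm c ≤ 8 := by
    have hd := C.add_mem hc (ht.blockWord_mem k)
    have := hC.hammingNorm_eq_zero_or (C.add_mem hd hC.one_mem)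
    have := ht.hammingNorm_add_blockWord c k
    have := weightOn_add_of_eq_one (s := Finset.univ) (c := c + blockWord t k) (d := 1) (by simp)
    simp only [weightOn_univ, Finset.card_univ, hC.card_eq] at this
    lia
  have := hC.hammingNorm_eq_zero_or hc
  have weight_eq := sum_weightOn_block t c
  rw [Fin.sum_univ_three] at weight_eq
  have := flip 0
  have := flip 1
  have := flip 2
  have := weight_le 0
  have := weight_le 1
  have := weight_le 2
  fin_cases k <;> fin_cases j <;> simp only [Fin.reduceFinMk] at * <;> lia

lemma IsGolayCode.sum_block_mul_eq_zero (hC : IsGolayCode C) (ht : IsTrio C t) {c d : ι → ZMod 2}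
    {k : Fin 3} (hc : c ∈ C) (hck : ∀ i, t i = k → c i = 0) (hd : d ∈ C)
    (hdk : ∀ i, t i = k → d i = 0) (j : Fin 3) : ∑ i ∈ block t j, c i * d i = 0 := by
  have := weightOn_add (block t j) c d
  have := hC.four_dvd_weightOn_block ht hc hck j
  have := hC.four_dvd_weightOn_block ht hd hdk j
  have := hC.four_dvd_weightOn_block ht (C.add_mem hc hd) (k := k)
    (fun i hi ↦ by simp [hck i hi, hdk i hi]) j
  change ∑ i ∈ block t j, (c * d) i = 0
  rw [sum_eq_weightOn, ZMod.natCast_eq_zero_iff]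
  lia

lemma IsGolayCode.exists_mem_turynCode (hC : IsGolayCode C) (ht : IsTrio C t) {c : ι → ZMod 2}
    {k : Fin 3} (hc : c ∈ C) (hck : ∀ i, t i = k → c i = 0) :
    ∃ d ∈ turynCode C t, ∀ i, t i ≠ k → d i = c i := by
  have eq_of_ne : ∀ {l k : Fin 3}, l ≠ k → l ≠ k + 1 → l = k + 2 := by decide
  obtain ⟨w, hw, w_eq⟩ := hC.exists_mem_eq_of_notMem (block t k)
    (v := fun i ↦ if t i = k + 1 then c i else 0) fun d hd hdk ↦ by
      simpa [dotProduct, block, Finset.sum_filter] using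
        hC.sum_block_mul_eq_zero ht hd (fun i hi ↦ hdk i (mem_block.2 hi)) hc hck (k + 1)
  simp only [mem_block] at w_eq
  refine ⟨fun i ↦ if t i = k then w i else c i, mem_turynCode.2 fun l ↦ ?_,
    fun i hi ↦ if_neg hi⟩
  rcases eq_or_ne l k with rfl | hlk
  · convert hc using 1
    ext i
    by_cases hi : t i = l <;> simp [eraseBlock_apply, hi, hck]
  rcases eq_or_ne l (k + 1) with rfl | hlj
  · convert C.add_mem hc hw using 1
    ext i
    by_cases hi : t i = k
    · simp [eraseBlock_apply, hi, hck]
    · by_cases hi' : t i = k + 1 <;>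
        simp [eraseBlock_apply, w_eq, hi, hi', CharTwo.add_self_eq_zero]
  · obtain rfl := eq_of_ne hlk hlj
    convert hw using 1
    ext i
    by_cases hi : t i = k
    · simp [eraseBlock_apply, hi]
    · by_cases hi' : t i = k + 1
      · simp [eraseBlock_apply, w_eq, hi']
      · simp [eraseBlock_apply, w_eq, eq_of_ne hi hi']

lemma IsTrio.blockWord_mem_turynCode (ht : IsTrio C t) (k : Fin 3) :
    blockWord t k ∈ turynCode C t := mem_turynCode.2 fun l ↦ by
  rcases eq_or_ne l k with rfl | hlk
  · convert C.zero_mem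
    ext i
    simp [eraseBlock_apply, blockWord]
  · convert ht.blockWord_mem k using 1
    ext i
    by_cases hi : t i = l <;> simp [eraseBlock_apply, blockWord, hi, hlk]

variable {b : Fin 3 → ι}

lemma IsTrio.exists_mem_pointedCode (ht : IsTrio C t) (hb : ∀ k, t (b k) = k) {c : ι → ZMod 2}
    (hc : c ∈ turynCode C t) : ∃ d ∈ pointedCode C t b, ∀ i, c i = d i + c (b (t i)) := by
  let s : ι → ZMod 2 := ∑ k, c (b k) • blockWord t k
  have s_apply (i) : s i = c (b (t i)) := by simp [s, blockWord]
  have hs : s ∈ turynCode C t :=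
    sum_mem fun k _ ↦ Submodule.smul_mem _ _ (ht.blockWord_mem_turynCode k)
  exact ⟨c - s, mem_pointedCode.2 ⟨sub_mem hc hs, fun k ↦ by simp [s_apply, hb]⟩,
    fun i ↦ by simp [s_apply]⟩

lemma IsGolayCode.exists_mem_pointedCode_ne (hC : IsGolayCode C) (ht : IsTrio C t)
    (hb : ∀ k, t (b k) = k) {p q : ι} (hpq : p ≠ q) (block_eq : t p = t q) :
    ∃ c ∈ pointedCode C t b, c p ≠ c q := by
  obtain ⟨k, hk⟩ := exists_ne (t p)
  have weight_k : hammingNorm (blockWord t k) = 8 := by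
    simpa [blockWord, hammingNorm, block] using ht.card_block k
  obtain ⟨c, hc, c_eq, c_ne⟩ := hC.exists_ne_of_octad (ht.blockWord_mem k) weight_k hpq
    (if_neg hk.symm) (if_neg (block_eq ▸ hk.symm))
  obtain ⟨d, hd, d_eq⟩ := hC.exists_mem_turynCode ht hc (k := k) fun i hi ↦ c_eq i (if_pos hi)
  obtain ⟨e, he, e_eq⟩ := ht.exists_mem_pointedCode hb hd
  refine ⟨e, he, fun h ↦ c_ne ?_⟩
  rw [← d_eq p hk.symm, ← d_eq q (block_eq ▸ hk.symm), e_eq p, e_eq q, h, block_eq]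

lemma IsGolayCode.pointEval_injOn (hC : IsGolayCode C) (ht : IsTrio C t) (hb : ∀ k, t (b k) = k)
    (k : Fin 3) : Set.InjOn (pointEval C t b) (block t k) := fun p hp q hq h ↦ by
  by_contra hpq
  obtain ⟨c, hc, c_ne⟩ := hC.exists_mem_pointedCode_ne ht hb hpq
    ((mem_block.1 hp).trans (mem_block.1 hq).symm)
  exact c_ne (LinearMap.congr_fun h ⟨c, hc⟩)

lemma weightOn_block_eraseBlock (t : ι → Fin 3) (c : ι → ZMod 2) (k j : Fin 3) :
    weightOn (block t j) (eraseBlock t k c) = if j = k then 0 else weightOn (block t j) c := by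
  split_ifs with h
  · exact weightOn_eq_zero_iff.2 fun i hi ↦ if_pos ((mem_block.1 hi).trans h)
  · exact weightOn_congr fun i hi ↦ if_neg (mem_block.1 hi ▸ h)

lemma IsGolayCode.weightOn_block_of_mem_pointedCode (hC : IsGolayCode C) (ht : IsTrio C t)
    (hb : ∀ k, t (b k) = k) {c : ι → ZMod 2} (hc : c ∈ pointedCode C t b) (c_ne : c ≠ 0)
    (k : Fin 3) : weightOn (block t k) c = 4 := by
  obtain ⟨hc, c_base⟩ := mem_pointedCode.1 hc
  rw [mem_turynCode] at hc
  have weight (j) : weightOn (block t j) c = 0 ∨ weightOn (block t j) c = 4 := by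
    obtain ⟨l, hl⟩ := exists_ne j
    have := hC.four_dvd_weightOn_block ht (hc l) (fun i hi ↦ if_pos hi) j
    rw [weightOn_block_eraseBlock, if_neg hl.symm] at this
    have le_eight := weightOn_le_card (block t j) c
    have ne_eight : weightOn (block t j) c ≠ (block t j).card := fun h ↦ by
      simpa [c_base] using weightOn_eq_card_iff.1 h (b j) (mem_block.2 (hb j))
    rw [ht.card_block] at le_eight ne_eight
    lia
  have norm_erase (l) := hC.hammingNorm_eq_zero_or (hc l)
  have norm_ne := (hammingNorm_ne_zero_iff (x := c)).2 c_ne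
  simp only [← sum_weightOn_block t, Fin.sum_univ_three, weightOn_block_eraseBlock]
    at norm_erase norm_ne
  have erase_zero := norm_erase 0
  have erase_one := norm_erase 1
  have erase_two := norm_erase 2
  simp only [Fin.reduceEq, if_true, if_false, zero_add, add_zero] at erase_zero erase_one erase_two
  have := weight 0
  have := weight 1
  have := weight 2
  match k with
  | 0 | 1 | 2 => lia

lemma IsGolayCode.card_pointedCode (hC : IsGolayCode C) (ht : IsTrio C t)
    (hb : ∀ k, t (b k) = k) : Nat.card (pointedCode C t b) = 8 := by
  classical
  have : Fintype (pointedCode C t b) := Fintype.ofFinite _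
  have eval_eq_zero_iff {i} (hi : i ∈ block t 0) : pointEval C t b i = 0 ↔ i = b 0 := by
    refine ⟨fun h ↦ ?_, fun h ↦ h ▸ pointEval_base 0⟩
    exact hC.pointEval_injOn ht hb 0 hi (mem_block.2 (hb 0)) (h.trans (pointEval_base 0).symm)
  have sum_block (c : pointedCode C t b) :
      ∑ i ∈ block t 0, signChar (c.1 i) = if c = 0 then 8 else 0 := by
    rw [sum_signChar, ht.card_block]
    split_ifs with h
    · simp [h, weightOn]
    · have c_ne : c.1 ≠ 0 := fun h' ↦ h (Subtype.ext h')
      simp [hC.weightOn_block_of_mem_pointedCode ht hb c.2 c_ne]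
  have sum_code {i} (hi : i ∈ block t 0) : ∑ c : pointedCode C t b, signChar (c.1 i) =
      if i = b 0 then (Fintype.card (pointedCode C t b) : ℤ) else 0 := by
    simpa only [eval_eq_zero_iff hi] using! sum_signChar_dual (pointEval C t b i)
  have swap := Finset.sum_comm (s := Finset.univ) (t := block t 0)
    (f := fun (c : pointedCode C t b) i ↦ signChar (c.1 i))
  rw [Finset.sum_congr rfl fun c _ ↦ sum_block c, Finset.sum_congr rfl fun i ↦ sum_code] at swap
  simp only [Finset.sum_ite_eq', Finset.mem_univ, if_true, mem_block, hb] at swap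
  rw [Nat.card_eq_fintype_card]
  exact_mod_cast swap.symm

end Labelling

section TurynForm

open Matrix

variable {ι T : Type*} [AddCommGroup T] [Module (ZMod 2) T]

/-- Turyn's form of the Golay code, on three copies of the three-dimensional space `T`: the words
vanishing on one of the copies are given on the other two by affine functions with the same linear
part, and every linear form on `T` occurs as a linear part. -/
structure IsTurynForm (C : Submodule (ZMod 2) (Fin 3 × T → ZMod 2)) : Prop where
  blockWord_mem (k : Fin 3) : blockWord Prod.fst k ∈ C
  dual_mem (h : Dual (ZMod 2) T) (k : Fin 3) : eraseBlock Prod.fst k (fun p ↦ h p.2) ∈ C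
  exists_dual {c : Fin 3 × T → ZMod 2} {k : Fin 3} : c ∈ C → (∀ p, p.1 = k → c p = 0) →
    ∃ (h : Dual (ZMod 2) T) (a : Fin 3 → ZMod 2), ∀ p, p.1 ≠ k → c p = h p.2 + a p.1

section Existence

variable [Fintype ι] {C : Submodule (ZMod 2) (ι → ZMod 2)} {t : ι → Fin 3} {b : Fin 3 → ι}

lemma IsGolayCode.finrank_pointedCode (hC : IsGolayCode C) (ht : IsTrio C t)
    (hb : ∀ k, t (b k) = k) : finrank (ZMod 2) (pointedCode C t b) = 3 := by
  have card_eq := hC.card_pointedCode ht hb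
  rw [Module.natCard_eq_pow_finrank (K := ZMod 2), Nat.card_zmod] at card_eq
  exact Nat.pow_right_injective le_rfl (card_eq.trans (by norm_num : 8 = 2 ^ 3))

lemma IsGolayCode.bijective_pointEval (hC : IsGolayCode C) (ht : IsTrio C t)
    (hb : ∀ k, t (b k) = k) : Function.Bijective fun i ↦ (t i, pointEval C t b i) := by
  have : Finite (Dual (ZMod 2) (pointedCode C t b)) := Module.finite_of_finite (ZMod 2)
  refine Function.Injective.bijective_of_nat_card_le (fun p q hpq ↦ ?_) (le_of_eq ?_)
  · obtain ⟨block_eq, eval_eq⟩ := Prod.ext_iff.1 hpq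
    exact hC.pointEval_injOn ht hb _ (mem_block.2 block_eq) (mem_block.2 rfl) eval_eq
  · rw [Nat.card_prod, Module.natCard_eq_pow_finrank (K := ZMod 2)
      (V := Dual (ZMod 2) (pointedCode C t b)), Subspace.dual_finrank_eq,
      hC.finrank_pointedCode ht hb]
    simp [hC.card_eq]

lemma IsGolayCode.isTurynForm_comap (hC : IsGolayCode C) (ht : IsTrio C t)
    (hb : ∀ k, t (b k) = k) (φ : Dual (ZMod 2) (pointedCode C t b) ≃ₗ[ZMod 2] T)
    (e : ι ≃ Fin 3 × T) (he : ∀ i, e i = (t i, φ (pointEval C t b i))) :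
    IsTurynForm (C.comap (LinearMap.funLeft (ZMod 2) (ZMod 2) e)) := by
  refine ⟨fun k ↦ ?_, fun h k ↦ ?_, fun {c k} hc hck ↦ ?_⟩
  · rw [Submodule.mem_comap]
    convert ht.blockWord_mem k using 1
    ext i
    simp [LinearMap.funLeft_apply, blockWord, he]
  · let d := (evalEquiv (ZMod 2) (pointedCode C t b)).symm (h ∘ₗ φ.toLinearMap)
    have pointEval_d (i) : d.1 i = h (φ (pointEval C t b i)) :=
      apply_evalEquiv_symm_apply (f := pointEval C t b i) (g := h ∘ₗ φ.toLinearMap)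
    rw [Submodule.mem_comap]
    convert mem_turynCode.1 (mem_pointedCode.1 d.2).1 k using 1
    ext i
    simp [LinearMap.funLeft_apply, eraseBlock_apply, he, pointEval_d]
  · obtain ⟨d, hd, d_eq⟩ := hC.exists_mem_turynCode ht hc (k := k) fun i hi ↦
      hck _ (by simp [he, hi])
    obtain ⟨l, hl, l_eq⟩ := ht.exists_mem_pointedCode hb hd
    refine ⟨Dual.eval (ZMod 2) _ ⟨l, hl⟩ ∘ₗ φ.symm.toLinearMap, fun j ↦ d (b j), fun p hp ↦ ?_⟩
    obtain ⟨i, rfl⟩ := e.surjective p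
    have := d_eq i (by simpa [he] using hp)
    rw [l_eq i] at this
    simpa [he, pointEval_apply, LinearMap.funLeft_apply] using this.symm

theorem IsGolayCode.exists_isTurynForm (hC : IsGolayCode C) (hT : finrank (ZMod 2) T = 3) :
    ∃ e : ι ≃ Fin 3 × T, IsTurynForm (C.comap (LinearMap.funLeft (ZMod 2) (ZMod 2) e)) := by
  obtain ⟨t, ht⟩ := hC.exists_isTrio
  have exists_base (k) : ∃ i, t i = k := by
    obtain ⟨i, hi⟩ := Finset.card_pos.1 (show 0 < (block t k).card by simp [ht.card_block])
    exact ⟨i, mem_block.1 hi⟩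
  choose b hb using exists_base
  have : FiniteDimensional (ZMod 2) T := .of_finrank_pos (by lia)
  let φ : Dual (ZMod 2) (pointedCode C t b) ≃ₗ[ZMod 2] T :=
    LinearEquiv.ofFinrankEq _ _ (by rw [Subspace.dual_finrank_eq, hC.finrank_pointedCode ht hb, hT])
  exact ⟨(Equiv.ofBijective _ (hC.bijective_pointEval ht hb)).trans
    ((Equiv.refl _).prodCongr φ.toEquiv), hC.isTurynForm_comap ht hb φ _ fun i ↦ rfl⟩

end Existence

section CrossWords

variable [Fintype T] {C : Submodule (ZMod 2) (Fin 3 × T → ZMod 2)}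

lemma IsTurynForm.exists_dual_add_const (hT : IsTurynForm C) (hC : IsGolayCode C) {g : T → ZMod 2}
    (sum_eq : ∑ w, g w = 0) (sum_mul_eq : ∀ h : Dual (ZMod 2) T, ∑ w, h w * g w = 0) :
    ∃ (h : Dual (ZMod 2) T) (a : ZMod 2), ∀ w, g w = h w + a := by
  obtain ⟨c, hc, c_eq⟩ := hC.exists_mem_eq_of_notMem (block Prod.fst 0)
    (v := fun p ↦ if p.1 = 1 then g p.2 else 0) fun c hc hc0 ↦ by
      obtain ⟨h, a, c_eq⟩ := hT.exists_dual hc (k := 0) fun p hp ↦ hc0 p (mem_block.2 hp)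
      simp [dotProduct, Fintype.sum_prod_type, c_eq, add_mul, Finset.sum_add_distrib, sum_mul_eq,
        ← Finset.mul_sum, sum_eq]
  simp only [mem_block] at c_eq
  obtain ⟨h, a, c_eq'⟩ := hT.exists_dual hc (k := 2) fun p hp ↦ by simp [c_eq, hp]
  exact ⟨h, a 1, fun w ↦ by simpa [c_eq] using c_eq' (1, w)⟩

variable [DecidableEq T]

/-- The function on `T` with support `{0, d}`, or zero if `d = 0`. -/
def pairWord (d : T) : T → ZMod 2 := Pi.single 0 1 + Pi.single d 1

omit [Module (ZMod 2) T] in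
lemma sum_mul_pairWord (g : T → ZMod 2) (d : T) : ∑ w, g w * pairWord d w = g 0 + g d := by
  simp [pairWord, mul_add, Finset.sum_add_distrib, Pi.single_apply]

lemma IsTurynForm.exists_pairWord_add_mem (hT : IsTurynForm C) (hC : IsGolayCode C) (d : T) :
    ∃ ℓ : Dual (ZMod 2) T, (fun p ↦ pairWord d p.2 + ℓ p.2) ∈ C := by
  have sum_pairWord : ∑ w, pairWord d w = 0 := by
    simpa [CharTwo.add_self_eq_zero] using sum_mul_pairWord (fun _ ↦ 1) d
  obtain ⟨c, hc, c_eq⟩ := hC.exists_mem_eq_of_notMem (block Prod.fst 2)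
    (v := fun p ↦ if p.1 = 2 then 0 else pairWord d p.2) fun c hc hc0 ↦ by
      obtain ⟨h, a, c_eq⟩ := hT.exists_dual hc (k := 2) fun p hp ↦ hc0 p (mem_block.2 hp)
      simp [dotProduct, Fintype.sum_prod_type, Fin.sum_univ_three, c_eq, add_mul,
        Finset.sum_add_distrib, ← Finset.mul_sum, sum_pairWord, CharTwo.add_self_eq_zero]
  simp only [mem_block] at c_eq
  obtain ⟨ℓ, a, ℓ_eq⟩ := hT.exists_dual_add_const hC (g := fun w ↦ c (2, w) + pairWord d w)
    (by simpa [dotProduct, Fintype.sum_prod_type, Fin.sum_univ_three, blockWord,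
      Finset.sum_add_distrib, sum_pairWord] using hC.dotProduct_eq_zero hc (hT.blockWord_mem 2))
    fun h ↦ by
      simpa [dotProduct, Fintype.sum_prod_type, Fin.sum_univ_three, eraseBlock_apply, c_eq,
        add_mul, Finset.sum_add_distrib, add_comm, mul_comm] using
        hC.dotProduct_eq_zero hc (hT.dual_mem h 0)
  refine ⟨ℓ, ?_⟩
  convert C.add_mem (C.add_mem hc (hT.dual_mem ℓ 2)) (C.smul_mem a (hT.blockWord_mem 2)) using 1
  ext ⟨k, w⟩
  by_cases hk : k = 2
  · simp only [Pi.add_apply, Pi.smul_apply, eraseBlock_apply, blockWord, hk, if_true, smul_eq_mul,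
      mul_one, add_zero]
    linear_combination -ℓ_eq w + (pairWord d w - a) * CharTwo.two_eq_zero (R := ZMod 2)
  · simp [eraseBlock_apply, blockWord, hk, c_eq]

/-- A choice of linear forms `ℓ d` completing the functions `pairWord d` to words of the code. -/
structure IsCrossSystem (C : Submodule (ZMod 2) (Fin 3 × T → ZMod 2)) (ℓ : T → Dual (ZMod 2) T) :
    Prop where
  zero : ℓ 0 = 0
  pairWord_add_mem (d : T) : (fun p ↦ pairWord d p.2 + ℓ d p.2) ∈ C

lemma IsTurynForm.exists_isCrossSystem (hT : IsTurynForm C) (hC : IsGolayCode C) :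
    ∃ ℓ, IsCrossSystem C ℓ := by
  choose ℓ hℓ using hT.exists_pairWord_add_mem hC
  refine ⟨Function.update ℓ 0 0, Function.update_self .., fun d ↦ ?_⟩
  rcases eq_or_ne d 0 with rfl | hd
  · convert C.zero_mem
    simp [pairWord, CharTwo.add_self_eq_zero]
  · simpa [hd] using hℓ d

omit [AddCommGroup T] [Module (ZMod 2) T] [DecidableEq T] in
lemma IsGolayCode.card_copy (hC : IsGolayCode C) : Fintype.card T = 8 := by
  have := hC.card_eq
  rw [Fintype.card_prod, Fintype.card_fin] at this
  lia

omit [DecidableEq T] in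
lemma IsGolayCode.four_dvd_hammingNorm_dual (hC : IsGolayCode C) (h : Dual (ZMod 2) T) :
    4 ∣ hammingNorm h := by
  classical
  have := sum_signChar Finset.univ h
  rw [sum_signChar_dual, Finset.card_univ, weightOn_univ, hC.card_copy] at this
  split_ifs at this <;> lia

omit [Module (ZMod 2) T] in
lemma hammingNorm_pairWord {d : T} (hd : d ≠ 0) : hammingNorm (pairWord d) = 2 := by
  refine (congrArg Finset.card (Finset.ext fun w ↦ ?_)).trans (Finset.card_pair hd.symm)
  rw [Finset.mem_filter_univ]
  rcases eq_or_ne w 0 with rfl | hw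
  · simp [pairWord, hd.symm]
  · simp [pairWord, hw, Pi.single_apply]

namespace IsCrossSystem

variable {ℓ : T → Dual (ZMod 2) T} (hℓ : IsCrossSystem C ℓ)
include hℓ

lemma apply_self (hC : IsGolayCode C) {d : T} (hd : d ≠ 0) : ℓ d d = 1 := by
  have norm_word : hammingNorm (fun p : Fin 3 × T ↦ pairWord d p.2 + ℓ d p.2) =
      3 * hammingNorm (pairWord d + ⇑(ℓ d)) := by
    simp only [hammingNorm, Finset.card_filter, Fintype.sum_prod_type, Fin.sum_univ_three,
      Pi.add_apply]
    ring
  have odd_meet : weightOn Finset.univ (⇑(ℓ d) * pairWord d) % 2 = 1 := by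
    have word := hC.four_dvd_hammingNorm (hℓ.pairWord_add_mem d)
    have linear := hC.four_dvd_hammingNorm_dual (ℓ d)
    have pair := hammingNorm_pairWord hd
    have norm_add := weightOn_add Finset.univ (ℓ d) (pairWord d)
    rw [norm_word, add_comm] at word
    simp only [weightOn_univ] at *
    lia
  have sum_meet := sum_mul_pairWord (ℓ d) d
  rw [map_zero, zero_add] at sum_meet
  rw [← sum_meet, ← Nat.cast_one, ← odd_meet, ZMod.natCast_mod]
  exact sum_eq_weightOn _ _

lemma apply_add_apply (hT : IsTurynForm C) (hC : IsGolayCode C) {d d' : T} (hd : d ≠ 0)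
    (hd' : d' ≠ 0) (hne : d ≠ d') : ℓ d d' + ℓ d' d = 1 := by
  have three_ne : (3 : ZMod 2) ≠ 0 := by decide
  have sum_linear : ∑ w, ℓ d w * ℓ d' w = 0 := by
    simpa [dotProduct, Fintype.sum_prod_type, Fin.sum_univ_three, eraseBlock_apply] using
      hC.dotProduct_eq_zero (hT.dual_mem (ℓ d) 0) (hT.dual_mem (ℓ d') 1)
  have sum_word : ∑ w, (pairWord d w + ℓ d w) * (pairWord d' w + ℓ d' w) = 0 := by
    simpa [dotProduct, Fintype.sum_prod_type, three_ne] using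
      hC.dotProduct_eq_zero (hℓ.pairWord_add_mem d) (hℓ.pairWord_add_mem d')
  have sum_pair : ∑ w, pairWord d w * pairWord d' w = 1 := by
    simpa [pairWord, hd.symm, hd'.symm, hne] using sum_mul_pairWord (pairWord d) d'
  simp only [add_mul, mul_add, Finset.sum_add_distrib, sum_linear, sum_pair, sum_mul_pairWord,
    mul_comm (pairWord d _) (ℓ d' _), map_zero, zero_add, add_zero] at sum_word
  linear_combination sum_word - CharTwo.two_eq_zero (R := ZMod 2)

end IsCrossSystem

end CrossWords

end TurynForm

section CrossMatrix

open Matrix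

variable {T : Type*} [AddCommGroup T] [Module (ZMod 2) T] [DecidableEq T]

/-- The Hadamard matrix whose columns are the characters `(-1) ^ ℓ d`, with all rows but the one
at `0` negated, which makes it skew up to the diagonal. -/
def crossMatrix (ℓ : T → Dual (ZMod 2) T) : Matrix T T ℤ :=
  of fun w d ↦ signChar (ℓ d w + if w = 0 then 0 else 1)

lemma crossMatrix_apply (ℓ : T → Dual (ZMod 2) T) (w d : T) :
    crossMatrix ℓ w d = signChar (ℓ d w + if w = 0 then 0 else 1) := rfl

variable [Fintype T] {C : Submodule (ZMod 2) (Fin 3 × T → ZMod 2)} {ℓ : T → Dual (ZMod 2) T}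

namespace IsCrossSystem

variable (hℓ : IsCrossSystem C ℓ)
include hℓ

lemma injective (hT : IsTurynForm C) (hC : IsGolayCode C) : Function.Injective ℓ := by
  intro d d' h
  by_contra hne
  rcases eq_or_ne d 0 with rfl | hd
  · simpa [← h, hℓ.zero] using hℓ.apply_self hC (Ne.symm hne)
  rcases eq_or_ne d' 0 with rfl | hd'
  · simpa [h, hℓ.zero] using hℓ.apply_self hC hd
  have := hℓ.apply_add_apply hT hC hd hd' hne
  rw [h, hℓ.apply_self hC hd', ← h, hℓ.apply_self hC hd] at this
  exact absurd this (by decide)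

lemma crossMatrix_add_transpose (hT : IsTurynForm C) (hC : IsGolayCode C) :
    crossMatrix ℓ + (crossMatrix ℓ)ᵀ = 2 := by
  ext w d
  rw [Matrix.add_apply, transpose_apply, crossMatrix_apply, crossMatrix_apply, ofNat_apply]
  rcases eq_or_ne w d with rfl | hwd
  · rcases eq_or_ne w 0 with rfl | hw
    · simp
    · simp [hℓ.apply_self hC hw, hw, CharTwo.add_self_eq_zero]
  rcases eq_or_ne w 0 with rfl | hw
  · simp [hℓ.zero, hwd, hwd.symm, signChar_eq]
  rcases eq_or_ne d 0 with rfl | hd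
  · simp [hℓ.zero, hw, signChar_eq]
  have := hℓ.apply_add_apply hT hC hd hw hwd.symm
  have (a b : ZMod 2) (h : a + b = 1) : signChar (a + 1) + signChar (b + 1) = 0 := by
    revert a b; decide
  simp [*]

lemma transpose_mul_crossMatrix (hT : IsTurynForm C) (hC : IsGolayCode C) :
    (crossMatrix ℓ)ᵀ * crossMatrix ℓ = 8 := by
  ext d d'
  have entry_mul (w : T) :
      crossMatrix ℓ w d * crossMatrix ℓ w d' = signChar ((ℓ d - ℓ d') w) := by
    rw [crossMatrix_apply, crossMatrix_apply, ← AddChar.map_add_eq_mul, LinearMap.sub_apply]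
    congr 1
    linear_combination (ℓ d' w + if w = 0 then 0 else 1) * CharTwo.two_eq_zero (R := ZMod 2)
  classical
  simp only [mul_apply, transpose_apply, entry_mul, sum_signChar_dual, sub_eq_zero,
    (hℓ.injective hT hC).eq_iff, hC.card_copy, ofNat_apply]
  norm_cast

lemma crossMatrix_mulVec_one (hT : IsTurynForm C) (hC : IsGolayCode C) :
    crossMatrix ℓ *ᵥ 1 = Pi.single 0 8 := by
  have skew := hℓ.crossMatrix_add_transpose hT hC
  have orthogonal : crossMatrix ℓ * (crossMatrix ℓ)ᵀ = 8 := by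
    rw [← hℓ.transpose_mul_crossMatrix hT hC, eq_sub_of_add_eq' skew]
    noncomm_ring
  have row_zero : 1 = (crossMatrix ℓ)ᵀ *ᵥ Pi.single 0 1 := by
    ext d
    simp [crossMatrix_apply]
  rw [row_zero, mulVec_mulVec, orthogonal]
  ext w
  simp [Pi.single_apply]

lemma exists_crossMatrix_mulVec_eq (d : T) :
    ∃ z : T → ℤ, crossMatrix ℓ *ᵥ (Pi.single 0 1 + Pi.single d 1) = (2 : ℤ) • z ∧
      ∀ w, (z w : ZMod 2) = 1 + ℓ d w := by
  have signChar_add (a e : ZMod 2) :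
      signChar e + signChar (a + e) = 2 * if a = 0 then signChar e else 0 := by
    revert a e; decide
  have cast_half (a e : ZMod 2) : ((if a = 0 then signChar e else 0 : ℤ) : ZMod 2) = 1 + a := by
    revert a e; decide
  refine ⟨fun w ↦ if ℓ d w = 0 then signChar (if w = 0 then 0 else 1) else 0,
    funext fun w ↦ ?_, fun w ↦ cast_half _ _⟩
  simpa [mulVec_add, crossMatrix_apply, hℓ.zero] using signChar_add (ℓ d w) (if w = 0 then 0 else 1)

end IsCrossSystem

end CrossMatrix

section BlockLat

open Matrix

variable {T : Type*} [Zero T] [DecidableEq T]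

/-- The lattice which contains the restrictions of the coordinate vectors of a Leech lattice to the
three copies of `T`: the vectors with entries of equal parity and entry sum divisible by `4`. -/
def blockLat (T : Type*) [Zero T] [DecidableEq T] : Submodule ℤ (T → ℤ) :=
  Submodule.span ℤ (insert 1 (Set.range fun d ↦ (2 : ℤ) • (Pi.single 0 1 + Pi.single d 1)))

lemma dvd_mulVec_dotProduct_of_mem_blockLat [Fintype T] {n : ℤ} {B : Matrix T T ℤ} {v p : T → ℤ}
    (one : n ∣ B *ᵥ 1 ⬝ᵥ v) (pair : ∀ d, n ∣ 2 * (B *ᵥ (Pi.single 0 1 + Pi.single d 1) ⬝ᵥ v))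
    (hp : p ∈ blockLat T) : n ∣ B *ᵥ p ⬝ᵥ v := by
  induction hp using Submodule.span_induction with
  | mem p hp =>
    rcases hp with rfl | ⟨d, rfl⟩
    · exact one
    · simpa only [mulVec_smul, smul_dotProduct, smul_eq_mul] using pair d
  | zero => simp
  | add p q _ _ hp hq => simpa [mulVec_add] using dvd_add hp hq
  | smul a p _ hp => simpa only [mulVec_smul, smul_dotProduct, smul_eq_mul] using hp.mul_left a

lemma mem_blockLat [Fintype T] (card_eq : Fintype.card T = 8) {p : T → ℤ}
    (even : ∀ w, 2 ∣ p w - p 0) (four_dvd : 4 ∣ ∑ w, p w) : p ∈ blockLat T := by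
  choose u hu using even
  have p_eq : p = p 0 • 1 + (2 : ℤ) • u := by
    ext w
    simp only [Pi.add_apply, Pi.smul_apply, Pi.one_apply, smul_eq_mul, ← hu]
    ring
  obtain ⟨m, sum_u⟩ : 2 ∣ ∑ w, u w := by
    have sum_p : ∑ w, p w = 8 * p 0 + 2 * ∑ w, u w := by
      conv_lhs => rw [p_eq]
      simp [Finset.sum_add_distrib, ← Finset.mul_sum, card_eq]
    lia
  have pair_mem (d : T) : (2 : ℤ) • (Pi.single 0 1 + Pi.single d 1) ∈ blockLat T :=
    Submodule.subset_span (Or.inr ⟨d, rfl⟩)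
  have combination : p = p 0 • 1 + ∑ w, u w • (2 : ℤ) • (Pi.single 0 1 + Pi.single w 1) -
      m • (2 : ℤ) • (Pi.single 0 1 + Pi.single 0 1) := by
    have sum_single : ∑ w, u w • (Pi.single w 1 : T → ℤ) = u := by
      simp only [← Pi.single_smul, smul_eq_mul, mul_one, Finset.univ_sum_single]
    simp only [smul_comm _ (2 : ℤ), ← Finset.smul_sum, smul_add, Finset.sum_add_distrib,
      ← Finset.sum_smul, sum_u, sum_single]
    nth_rw 1 [p_eq]
    module
  rw [combination]
  exact sub_mem (add_mem (Submodule.smul_mem _ _ (Submodule.subset_span (Or.inl rfl)))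
    (sum_mem fun w _ ↦ Submodule.smul_mem _ _ (pair_mem w))) (Submodule.smul_mem _ _ (pair_mem 0))

end BlockLat

section CrossMatrixPairing

open Matrix

variable {T : Type*} [AddCommGroup T] [Module (ZMod 2) T] [DecidableEq T] [Fintype T]
  {K : Submodule ℤ (Fin 3 × T → ℤ)} {C : Submodule (ZMod 2) (Fin 3 × T → ZMod 2)}
  {ℓ : T → Dual (ZMod 2) T}

omit [DecidableEq T] in
lemma IsTurynForm.one_add_dual_mem (hT : IsTurynForm (code K))
    (hC : IsGolayCode (code K)) (h : Dual (ZMod 2) T) (l : Fin 3) :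
    eraseBlock Prod.fst l (fun p ↦ 1 + h p.2) ∈ code K := by
  convert (code K).add_mem (sub_mem hC.one_mem (hT.blockWord_mem l)) (hT.dual_mem h l) using 1
  ext p
  by_cases hp : p.1 = l <;> simp [eraseBlock_apply, blockWord, hp]

section CrossMatrixTranspose

variable (hT : IsTurynForm C) (hC : IsGolayCode C) (hℓ : IsCrossSystem C ℓ)
include hT hC hℓ

lemma IsCrossSystem.transpose_crossMatrix_mulVec (v : T → ℤ) :
    (crossMatrix ℓ)ᵀ *ᵥ v = (2 : ℤ) • v - crossMatrix ℓ *ᵥ v := by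
  rw [eq_sub_of_add_eq' (hℓ.crossMatrix_add_transpose hT hC), sub_mulVec, ofNat_mulVec]

lemma IsCrossSystem.transpose_crossMatrix_mulVec_one :
    (crossMatrix ℓ)ᵀ *ᵥ 1 = (2 : ℤ) • 1 - Pi.single 0 8 := by
  rw [hℓ.transpose_crossMatrix_mulVec hT hC, hℓ.crossMatrix_mulVec_one hT hC]

lemma IsCrossSystem.sum_of_crossMatrix_mulVec_eq {d : T} {z : T → ℤ}
    (z_eq : crossMatrix ℓ *ᵥ (Pi.single 0 1 + Pi.single d 1) = (2 : ℤ) • z) :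
    ∑ w, z w = -2 - 4 * (Pi.single d 1 : T → ℤ) 0 := by
  have sum_eq := dotProduct_mulVec 1 (crossMatrix ℓ) (Pi.single 0 1 + Pi.single d 1)
  rw [z_eq, ← mulVec_transpose, hℓ.transpose_crossMatrix_mulVec_one hT hC] at sum_eq
  simp only [dotProduct_add, one_dotProduct, dotProduct_single, mul_one, Pi.sub_apply,
    Pi.smul_apply, Pi.one_apply, smul_eq_mul, ← Finset.mul_sum, Pi.single_eq_same] at sum_eq
  simp only [Pi.single_apply, eq_comm (a := (0 : T))] at sum_eq ⊢
  grind

end CrossMatrixTranspose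

variable (hK : IsLeechCoordLat K) (h_one : ∀ i, 1 - Pi.single i 4 ∈ K)
  (hT : IsTurynForm (code K)) (hC : IsGolayCode (code K)) (hℓ : IsCrossSystem (code K) ℓ)
include hK h_one

omit [AddCommGroup T] [Module (ZMod 2) T] in
lemma IsLeechCoordLat.four_dvd_dotProduct_sum [Nonempty T] {a : Fin 3 → ℤ} {z : T → ℤ}
    (four_dvd : 4 ∣ (∑ k, a k) * ∑ w, z w)
    (mem : (fun p ↦ (a p.1 * z p.2 : ZMod 2)) ∈ code K) {y : Fin 3 × T → ℤ} (hy : y ∈ K) :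
    4 ∣ z ⬝ᵥ ∑ k, a k • y.curry k := by
  have := hK.dvd_dotProduct ((hK.two_smul_mem_iff h_one (w := fun p ↦ a p.1 * z p.2)).2
    ⟨by simpa using mem, by simpa [Fintype.sum_prod_type, Finset.sum_mul_sum] using four_dvd⟩) hy
  rw [smul_dotProduct, smul_eq_mul] at this
  have dot_eq : (fun p ↦ a p.1 * z p.2) ⬝ᵥ y = z ⬝ᵥ ∑ k, a k • y.curry k := by
    simp only [dotProduct_sum, dotProduct_smul]
    simp only [dotProduct, Fintype.sum_prod_type, smul_eq_mul, Finset.mul_sum, mul_assoc,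
      Function.curry]
  lia

include hT hC

lemma IsTurynForm.curry_mem_blockLat {x : Fin 3 × T → ℤ} (hx : x ∈ K) (k : Fin 3) :
    x.curry k ∈ blockLat T := by
  refine mem_blockLat hC.card_copy (fun w ↦ hK.even_sub hx _ _) ?_
  have := hK.four_dvd_dotProduct_sum h_one (a := Pi.single k 1) (z := 1)
    (by simp [hC.card_copy]) (by
      convert hT.blockWord_mem k using 1
      ext p
      simp [blockWord, Pi.single_apply]) hx
  simpa only [one_dotProduct, Pi.single_apply, ite_smul, one_smul, zero_smul, Finset.sum_ite_eq',
    Finset.mem_univ, if_true] using this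

include hℓ

lemma IsCrossSystem.dvd_crossMatrix_mulVec_dotProduct_sub {p : T → ℤ} (hp : p ∈ blockLat T)
    {y : Fin 3 × T → ℤ} (hy : y ∈ K) (l : Fin 3) :
    16 ∣ crossMatrix ℓ *ᵥ p ⬝ᵥ (y.curry (l + 1) - y.curry (l + 2)) := by
  refine dvd_mulVec_dotProduct_of_mem_blockLat ?_ (fun d ↦ ?_) hp
  · rw [hℓ.crossMatrix_mulVec_one hT hC, single_dotProduct]
    have := hK.even_sub hy (l + 1, 0) (l + 2, 0)
    simp only [Pi.sub_apply, Function.curry]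
    lia
  · obtain ⟨z, z_eq, hz⟩ := hℓ.exists_crossMatrix_mulVec_eq d
    have := hK.four_dvd_dotProduct_sum h_one (a := Pi.single (l + 1) 1 - Pi.single (l + 2) 1)
      (z := z) (by simp) (by
        convert hT.one_add_dual_mem hC (ℓ d) l using 1
        ext p
        fin_cases l <;> rcases p with ⟨k, w⟩ <;> fin_cases k <;> simp [eraseBlock_apply, hz]) hy
    simp only [Pi.sub_apply, sub_smul, Finset.sum_sub_distrib, Pi.single_apply, ite_smul, one_smul,
      zero_smul, Finset.sum_ite_eq', Finset.mem_univ, if_true] at this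
    rw [z_eq, smul_dotProduct, smul_eq_mul]
    lia

lemma IsCrossSystem.dvd_transpose_crossMatrix_mulVec_dotProduct_sum {q : T → ℤ}
    (hq : q ∈ blockLat T) {y : Fin 3 × T → ℤ} (hy : y ∈ K) :
    16 ∣ (crossMatrix ℓ)ᵀ *ᵥ q ⬝ᵥ ∑ k, y.curry k := by
  refine dvd_mulVec_dotProduct_of_mem_blockLat ?_ (fun d ↦ ?_) hq
  · have := hK.eight_dvd_sum_sub h_one hy (0, 0)
    have := hK.even_sub hy (1, 0) (0, 0)
    have := hK.even_sub hy (2, 0) (0, 0)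
    rw [hℓ.transpose_crossMatrix_mulVec_one hT hC, sub_dotProduct, smul_dotProduct,
      one_dotProduct, single_dotProduct]
    simp only [Fintype.sum_prod_type, Fin.sum_univ_three, Finset.sum_apply, Function.curry,
      Finset.sum_add_distrib, smul_eq_mul] at *
    lia
  · obtain ⟨z, z_eq, hz⟩ := hℓ.exists_crossMatrix_mulVec_eq d
    have sum_z := hℓ.sum_of_crossMatrix_mulVec_eq hT hC z_eq
    have := hK.four_dvd_dotProduct_sum h_one (a := 1) (z := Pi.single 0 1 + Pi.single d 1 - z) (by
        simp only [Pi.one_apply, Pi.sub_apply, Pi.add_apply, Finset.sum_sub_distrib,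
          Finset.sum_add_distrib, Fintype.sum_pi_single', sum_z]
        lia) (by
        convert (code K).add_mem hC.one_mem (hℓ.pairWord_add_mem d) using 1
        ext p
        simp only [Pi.one_apply, Int.cast_one, Pi.sub_apply, Pi.add_apply, Pi.single_apply,
          Int.cast_sub, Int.cast_add, Int.cast_ite, Int.cast_zero, hz, one_mul, pairWord]
        linear_combination -(1 + ℓ d p.2) * CharTwo.two_eq_zero (R := ZMod 2)) hy
    rw [hℓ.transpose_crossMatrix_mulVec hT hC, z_eq, ← smul_sub, smul_dotProduct, smul_eq_mul]
    simp only [Pi.one_apply, one_smul] at this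
    lia

theorem IsCrossSystem.dvd_sum_crossMatrix_mulVec_dotProduct {x y : Fin 3 × T → ℤ} (hx : x ∈ K)
    (hy : y ∈ K) : 16 ∣ ∑ k, crossMatrix ℓ *ᵥ x.curry k ⬝ᵥ y.curry k := by
  have hxk := hT.curry_mem_blockLat hK h_one hC hx
  have diff_one := hℓ.dvd_crossMatrix_mulVec_dotProduct_sub hK h_one hT hC (hxk 1) hy 2
  have diff_two := hℓ.dvd_crossMatrix_mulVec_dotProduct_sub hK h_one hT hC (hxk 2) hy 1
  have common := hℓ.dvd_transpose_crossMatrix_mulVec_dotProduct_sum hK h_one hT hC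
    (hT.curry_mem_blockLat hK h_one hC hy 0) hx
  have adjoint (v w : T → ℤ) :
      (crossMatrix ℓ)ᵀ *ᵥ v ⬝ᵥ w = crossMatrix ℓ *ᵥ w ⬝ᵥ v := by
    rw [mulVec_transpose, ← dotProduct_mulVec, dotProduct_comm]
  rw [adjoint] at common
  simp only [Fin.sum_univ_three, mulVec_add, add_dotProduct, dotProduct_sub, Fin.isValue,
    Fin.reduceAdd] at *
  lia

end CrossMatrixPairing

section Doubling

/-- `ψ` is a similarity which doubles norms. -/
def IsDoubling (ψ : V →ₗ[ℝ] V) : Prop := ∀ v w, ⟪ψ v, ψ w⟫ = 2 * ⟪v, w⟫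

lemma isDoubling_sqrt_two_smul : IsDoubling (√2 • LinearMap.id : V →ₗ[ℝ] V) := by
  intro v w
  simp [inner_smul_left, inner_smul_right, ← mul_assoc]

namespace IsDoubling

variable {ψ : V →ₗ[ℝ] V} (hψ : IsDoubling ψ)
include hψ

lemma injective : Function.Injective ψ :=
  (injective_iff_map_eq_zero ψ).2 fun v hv ↦ by simpa [hv] using hψ v v

variable [FiniteDimensional ℝ V] {Υ : Submodule ℤ V}

lemma isLat_map (hlat : IsLat Υ) : IsLat (Υ.map (ψ.restrictScalars ℤ)) := by
  refine ⟨hlat.1.map _, ?_⟩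
  rw [Submodule.map_coe, LinearMap.coe_restrictScalars, ← Submodule.map_span, hlat.2,
    Submodule.map_top, LinearMap.range_eq_top]
  exact LinearMap.injective_iff_surjective.1 hψ.injective

lemma isLeechLat_map (hdim : finrank ℝ V = 24) (hlat : IsLat Υ) (hΥ : SqrtTwoEvenUnimod Υ)
    (four_le : ∀ v ∈ Υ, v ≠ 0 → 4 ≤ 2 * ⟪v, v⟫) : IsLeechLat (Υ.map (ψ.restrictScalars ℤ)) where
  isLat := hψ.isLat_map hlat
  isEvenLat := by
    refine ⟨?_, ?_⟩
    · rintro _ ⟨x, hx, rfl⟩ _ ⟨y, hy, rfl⟩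
      simpa [hψ x y] using hΥ.2.1 x hx y hy
    · rintro _ ⟨x, hx, rfl⟩
      obtain ⟨n, hn⟩ := hΥ.1 x hx
      exact ⟨n, hn ▸ hψ x x⟩
  isUnimodularLat := by
    obtain ⟨n, b, hb⟩ := hΥ.2.2
    refine ⟨n, b.map (Υ.equivMapOfInjective (ψ.restrictScalars ℤ) hψ.injective), ?_⟩
    rw [← hb]
    congr 1
    ext i j
    exact hψ _ _
  finrank_eq := hdim
  four_le_inner_self := by
    rintro _ ⟨x, hx, rfl⟩ hne
    exact (four_le x hx fun h ↦ hne (by simp [h])).trans_eq (hψ x x).symm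

end IsDoubling

lemma IsLeechLat.minNorm_eq [FiniteDimensional ℝ V] {L : Submodule ℤ V} (hL : IsLeechLat L) :
    minNorm L = 4 := by
  obtain ⟨x, hx, norm_eq⟩ : (shell L 4).Nonempty :=
    Set.nonempty_of_ncard_ne_zero (by simp [hL.ncard_shell.1])
  refine IsLeast.csInf_eq ⟨⟨x, hx, ?_, norm_eq⟩, ?_⟩
  · rintro rfl
    simp at norm_eq
  · rintro _ ⟨y, hy, y_ne, rfl⟩
    exact hL.four_le_inner_self hy y_ne

end Doubling

section Kleinian

/-- `φ` makes `V` a Hermitian space over the Kleinian integers: it is the multiplication by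
`(1 + √-7) / 2`, whose minimal polynomial is `X ^ 2 - X + 2` and whose norm is `2`. -/
structure IsKleinian (φ : V →ₗ[ℝ] V) : Prop where
  isDoubling : IsDoubling φ
  apply_apply (v : V) : φ (φ v) = φ v - (2 : ℤ) • v

namespace IsKleinian

variable {φ : V →ₗ[ℝ] V} (hφ : IsKleinian φ)
include hφ

lemma isDoubling_id_sub : IsDoubling (LinearMap.id - φ) := by
  intro v w
  have adjoint := hφ.isDoubling (φ v) w
  rw [hφ.apply_apply, ← Int.cast_smul_eq_zsmul ℝ, inner_sub_left, inner_smul_left,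
    hφ.isDoubling v w] at adjoint
  simp only [LinearMap.sub_apply, LinearMap.id_apply, inner_sub_left, inner_sub_right,
    hφ.isDoubling v w]
  push_cast [conj_trivial] at adjoint
  linarith

lemma map_id_sub (v : V) : φ (v - φ v) = (2 : ℤ) • v := by
  rw [map_sub, hφ.apply_apply]
  abel

variable {Υ : Submodule ℤ V} (stable : ∀ x ∈ Υ, φ x ∈ Υ)
include stable

lemma map_inf_map_id_sub : Υ.map (φ.restrictScalars ℤ) ⊓
    Υ.map ((LinearMap.id - φ).restrictScalars ℤ) = (2 : ℤ) • Υ := by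
  apply le_antisymm
  · rintro _ ⟨⟨a, ha, rfl⟩, ⟨c, hc, eq : c - φ c = φ a⟩⟩
    refine (Submodule.mem_smul_pointwise_iff_exists _ _ _).2 ⟨a + c, Υ.add_mem ha hc, ?_⟩
    have two_c := hφ.map_id_sub c
    rw [eq, hφ.apply_apply, sub_eq_iff_eq_add] at two_c
    simp only [LinearMap.coe_restrictScalars, two_c, smul_add]
    abel
  · rintro _ ⟨a, ha, rfl⟩
    refine ⟨⟨a - φ a, Υ.sub_mem ha (stable a ha), hφ.map_id_sub a⟩, φ a, stable a ha, ?_⟩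
    change φ a - φ (φ a) = (2 : ℤ) • a
    rw [← map_sub, hφ.map_id_sub]

lemma isPolarization (integral : IsIntegralLat (Υ.map (φ.restrictScalars ℤ)))
    (integral' : IsIntegralLat (Υ.map ((LinearMap.id - φ).restrictScalars ℤ))) :
    IsPolarization Υ (Υ.map (φ.restrictScalars ℤ))
      (Υ.map ((LinearMap.id - φ).restrictScalars ℤ)) := by
  have map_le : Υ.map (φ.restrictScalars ℤ) ≤ Υ := Submodule.map_le_iff_le_comap.2 stable
  have map_le' : Υ.map ((LinearMap.id - φ).restrictScalars ℤ) ≤ Υ :=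
    Submodule.map_le_iff_le_comap.2 fun x hx ↦ Υ.sub_mem hx (stable x hx)
  refine ⟨map_le, map_le', integral, integral', le_antisymm (sup_le map_le map_le') fun x hx ↦ ?_,
    hφ.map_inf_map_id_sub stable⟩
  exact Submodule.mem_sup.2 ⟨φ x, ⟨x, hx, rfl⟩, x - φ x, ⟨x, hx, rfl⟩, add_sub_cancel _ _⟩

end IsKleinian

end Kleinian

section KleinianMatrix

open Matrix

variable {ι : Type*} [DecidableEq ι]

lemma IsFrame.comp_equiv {κ : Type*} [DecidableEq κ] {L : Submodule ℤ V} {f : ι → V}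
    (hf : IsFrame L f) (e : κ ≃ ι) : IsFrame L (f ∘ e) where
  mem i := hf.mem (e i)
  inner_eq i j := by simp [hf.inner_eq]
  sub_mem i j := hf.sub_mem (e i) (e j)

namespace IsFrame

variable [Fintype ι] [FiniteDimensional ℝ V] {L : Submodule ℤ V} {f : ι → V}
  (hf : IsFrame L f) (card_eq : Fintype.card ι = finrank ℝ V)
include hf card_eq

lemma exists_basis : ∃ b : Basis ι ℝ V, ∀ j, b j = ofCoord f (Pi.single j 8) :=
  ⟨basisOfLinearIndependentOfCardEqFinrank' f hf.linearIndependent card_eq, fun j ↦ by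
    simp [ofCoord, ← Int.cast_smul_eq_zsmul ℝ]⟩

lemma exists_map_ofCoord (B : Matrix ι ι ℤ) :
    ∃ φ : V →ₗ[ℝ] V, ∀ x, φ (ofCoord f x) = (2⁻¹ : ℝ) • ofCoord f (B *ᵥ x) := by
  obtain ⟨b, hb⟩ := hf.exists_basis card_eq
  let φ := b.constr ℝ fun j ↦ (2⁻¹ : ℝ) • ofCoord f (B *ᵥ Pi.single j 8)
  suffices φ.restrictScalars ℤ ∘ₗ ofCoord f = (2⁻¹ : ℝ) • (ofCoord f ∘ₗ mulVecLin B) from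
    ⟨φ, fun x ↦ congr($this x)⟩
  refine LinearMap.pi_ext' fun j ↦ LinearMap.ext_ring ?_
  have single_eight : Pi.single j 8 = (8 : ℤ) • (Pi.single j 1 : ι → ℤ) := by
    rw [← Pi.single_smul, smul_eq_mul, mul_one]
  have map_basis : φ (b j) = _ := b.constr_basis ..
  rw [hb, single_eight, map_smul, map_zsmul, mulVec_smul, map_smul, smul_comm,
    ← Int.cast_smul_eq_zsmul ℝ, ← Int.cast_smul_eq_zsmul ℝ] at map_basis
  exact smul_right_injective V (by norm_num) map_basis

theorem exists_isKleinian {B : Matrix ι ι ℤ} (add_transpose : B + Bᵀ = 2)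
    (transpose_mul : Bᵀ * B = 8) :
    ∃ φ : V →ₗ[ℝ] V, IsKleinian φ ∧
      ∀ x, φ (ofCoord f x) = (2⁻¹ : ℝ) • ofCoord f (B *ᵥ x) := by
  obtain ⟨b, hb⟩ := hf.exists_basis card_eq
  obtain ⟨φ, map_ofCoord⟩ := hf.exists_map_ofCoord card_eq B
  refine ⟨φ, ⟨fun v w ↦ ?_, fun v ↦ ?_⟩, map_ofCoord⟩
  · suffices (innerₗ V).compl₁₂ φ φ = (2 : ℝ) • innerₗ V from congr($this v w)
    refine LinearMap.ext_basis b b fun i j ↦ ?_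
    have dotProduct_eq (x y : ι → ℤ) : (B *ᵥ x) ⬝ᵥ (B *ᵥ y) = 8 * (x ⬝ᵥ y) := by
      rw [dotProduct_mulVec, ← mulVec_transpose, mulVec_mulVec, transpose_mul, ofNat_mulVec,
        smul_dotProduct, smul_eq_mul]
    simp only [LinearMap.compl₁₂_apply, LinearMap.smul_apply, innerₗ_apply_apply, hb, map_ofCoord,
      real_inner_smul_left, real_inner_smul_right, hf.inner_ofCoord, dotProduct_eq, smul_eq_mul]
    push_cast
    ring
  · suffices φ ∘ₗ φ = φ - (2 : ℤ) • LinearMap.id from congr($this v)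
    have mulVec_mulVec_eq (x : ι → ℤ) : B *ᵥ B *ᵥ x = (2 : ℤ) • B *ᵥ x - (8 : ℤ) • x := by
      rw [mulVec_mulVec, ← ofNat_mulVec, ← ofNat_mulVec, mulVec_mulVec, ← sub_mulVec,
        ← transpose_mul, ← add_transpose]
      noncomm_ring
    refine b.ext fun j ↦ ?_
    simp only [LinearMap.comp_apply, LinearMap.sub_apply, LinearMap.smul_apply, LinearMap.id_apply,
      hb, map_ofCoord, map_smul, mulVec_mulVec_eq, map_sub]
    module

end IsFrame

end KleinianMatrix

section LeechKleinian

open Matrix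
open scoped Kronecker

lemma one_kronecker_ofNat {κ T : Type*} [DecidableEq κ] [DecidableEq T] (n : ℕ) [n.AtLeastTwo] :
    (1 : Matrix κ κ ℤ) ⊗ₖ (ofNat(n) : Matrix T T ℤ) = ofNat(n) := by
  have := natCast_kronecker_natCast (m := κ) (n := T) (α := ℤ) 1 (OfNat.ofNat n)
  rwa [Nat.cast_one, one_mul] at this

lemma one_kronecker_mulVec_dotProduct {κ T : Type*} [Fintype κ] [DecidableEq κ] [Fintype T]
    (B : Matrix T T ℤ) (x y : κ × T → ℤ) :
    ((1 : Matrix κ κ ℤ) ⊗ₖ B) *ᵥ x ⬝ᵥ y = ∑ k, B *ᵥ x.curry k ⬝ᵥ y.curry k := by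
  simp [dotProduct, mulVec, Fintype.sum_prod_type, one_apply, Function.curry]

lemma code_coordLat_comp_equiv {ι κ : Type*} [Fintype ι] [Fintype κ] (L : Submodule ℤ V)
    (f : ι → V) (e : κ ≃ ι) : code (coordLat L (f ∘ e)) =
      (code (coordLat L f)).comap (LinearMap.funLeft (ZMod 2) (ZMod 2) e.symm) := by
  ext c
  simp only [mem_code, Submodule.mem_comap, mem_coordLat_comp_equiv]
  constructor
  · rintro ⟨w, hw, rfl⟩
    exact ⟨w ∘ e.symm, hw, rfl⟩
  · rintro ⟨w, hw, eq⟩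
    exact ⟨w ∘ e, by convert hw using 1; ext; simp, by
      ext i; simpa using congr($eq (e i))⟩

lemma one_sub_single_mem_coordLat_comp_equiv {ι κ : Type*} [Fintype ι] [DecidableEq ι]
    [Fintype κ] [DecidableEq κ] {L : Submodule ℤ V} {f : ι → V}
    (h_one : ∀ i, 1 - Pi.single i 4 ∈ coordLat L f) (e : κ ≃ ι) (k : κ) :
    1 - Pi.single k 4 ∈ coordLat L (f ∘ e) := by
  rw [mem_coordLat_comp_equiv]
  convert h_one (e k) using 1
  ext i
  simp [Pi.single_apply, Equiv.symm_apply_eq]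

namespace IsLeechLat

variable [FiniteDimensional ℝ V] {L : Submodule ℤ V} (hL : IsLeechLat L)
include hL

theorem exists_isFrame_isTurynForm : ∃ f : Fin 3 × (Fin 3 → ZMod 2) → V, IsFrame L f ∧
    (∀ p, 1 - Pi.single p 4 ∈ coordLat L f) ∧ IsTurynForm (code (coordLat L f)) := by
  obtain ⟨f, hf, h_one⟩ := hL.exists_isFrame_one_sub_single_mem
  have hC := (hf.isLeechCoordLat_coordLat hL (by simp)).isGolayCode_code h_one (by simp)
  obtain ⟨e, hT⟩ := hC.exists_isTurynForm (T := Fin 3 → ZMod 2) (by simp)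
  rw [← e.symm_symm, ← code_coordLat_comp_equiv] at hT
  exact ⟨f ∘ e.symm, hf.comp_equiv e.symm,
    one_sub_single_mem_coordLat_comp_equiv h_one e.symm, hT⟩

theorem exists_isKleinian : ∃ φ : V →ₗ[ℝ] V, IsKleinian φ ∧ ∀ x ∈ L, φ x ∈ L := by
  obtain ⟨f, hf, h_one, hT⟩ := hL.exists_isFrame_isTurynForm
  have card_eq : Fintype.card (Fin 3 × (Fin 3 → ZMod 2)) = 24 := by simp
  have card_eq_finrank := card_eq.trans hL.finrank_eq.symm
  have hK := hf.isLeechCoordLat_coordLat hL card_eq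
  have hC := hK.isGolayCode_code h_one card_eq
  obtain ⟨ℓ, hℓ⟩ := hT.exists_isCrossSystem hC
  let B : Matrix (Fin 3 × (Fin 3 → ZMod 2)) (Fin 3 × (Fin 3 → ZMod 2)) ℤ := 1 ⊗ₖ crossMatrix ℓ
  have add_transpose : B + Bᵀ = 2 := by
    rw [← kroneckerMap_transpose, transpose_one, ← kronecker_add,
      hℓ.crossMatrix_add_transpose hT hC, one_kronecker_ofNat]
  have transpose_mul : Bᵀ * B = 8 := by
    rw [← kroneckerMap_transpose, transpose_one, ← mul_kronecker_mul, one_mul,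
      hℓ.transpose_mul_crossMatrix hT hC, one_kronecker_ofNat]
  obtain ⟨φ, hφ, map_ofCoord⟩ :=
    hf.exists_isKleinian card_eq_finrank add_transpose transpose_mul
  refine ⟨φ, hφ, fun v hv ↦ hL.mem_of_forall_inner fun w hw ↦ ?_⟩
  have exists_coord {v : V} (hv : v ∈ L) := hf.exists_ofCoord_eq card_eq_finrank
    fun i ↦ hL.isEvenLat.1 v hv _ (hf.mem i)
  obtain ⟨x, rfl⟩ := exists_coord hv
  obtain ⟨y, rfl⟩ := exists_coord hw
  obtain ⟨k, hk⟩ := hℓ.dvd_sum_crossMatrix_mulVec_dotProduct hK h_one hT hC hv hw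
  refine ⟨k, ?_⟩
  rw [real_inner_comm, map_ofCoord, real_inner_smul_left, hf.inner_ofCoord,
    one_kronecker_mulVec_dotProduct, hk]
  push_cast
  ring

end IsLeechLat

end LeechKleinian

/-- a Leech-rescaled lattice `Υ` admits a polarization by two copies of the
Leech lattice. -/
theorem statement17 [FiniteDimensional ℝ V] (hdim : finrank ℝ V = 24)
    (Υ : Submodule ℤ V) (hΥlat : IsLat Υ) (hΥ : SqrtTwoEvenUnimod Υ)
    (hΥ4 : ∀ v ∈ Υ, v ≠ 0 → 4 ≤ 2 * ⟪v, v⟫) :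
    ∃ M N : Submodule ℤ V, IsPolarization Υ M N ∧
      IsLat M ∧ IsEvenLat M ∧ IsUnimodularLat M ∧ minNorm M = 4 ∧
      IsLat N ∧ IsEvenLat N ∧ IsUnimodularLat N ∧ minNorm N = 4 := by
  have isLeechLat_map {ψ : V →ₗ[ℝ] V} (hψ : IsDoubling ψ) :=
    hψ.isLeechLat_map hdim hΥlat hΥ hΥ4
  obtain ⟨φ, hφ, stable_map⟩ := (isLeechLat_map isDoubling_sqrt_two_smul).exists_isKleinian
  have stable : ∀ x ∈ Υ, φ x ∈ Υ := fun x hx ↦ by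
    obtain ⟨y, hy, eq⟩ := stable_map _ ⟨x, hx, rfl⟩
    have : y = φ x := isDoubling_sqrt_two_smul.injective (eq.trans (map_smul φ √2 x))
    exact this ▸ hy
  have hM := isLeechLat_map hφ.isDoubling
  have hN := isLeechLat_map hφ.isDoubling_id_sub
  exact ⟨_, _, hφ.isPolarization stable hM.isEvenLat.1 hN.isEvenLat.1,
    hM.isLat, hM.isEvenLat, hM.isUnimodularLat, hM.minNorm_eq,
    hN.isLat, hN.isEvenLat, hN.isUnimodularLat, hN.minNorm_eq⟩
end
end

section
/- There exist a 32-dimensional real inner product space V, a lattice Υ in V such that √2·Υ is even unimodular with minimum norm 4, and a polarization M, N of Υ (integral sublattices with M + N = Υ and M ∩ N = 2Υ) such that M and N are both rank 32 even unimodular lattices, μ(M) = 4, and μ(N) ∈ {2, 4}. -/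
noncomputable section

open scoped RealInnerProductSpace Pointwise
open Module

variable {V : Type*} [NormedAddCommGroup V] [InnerProductSpace ℝ V]

/-!
Let `α = (1 + √-7) / 2`, so that the conjugate of `α` is `1 - α` and `α (1 - α) = 2`. If `α` acts
on an even unimodular lattice `K` with its conjugate as adjoint, then `α` and `1 - α` double norms.
Put `Υ = K / √2`. The sublattices `α Υ` and `(1 - α) Υ` are isometric to `K`; their sum is `Υ`
because `α + (1 - α) = 1`, and their intersection is `2 Υ` because `α x = (1 - α) y` implies
`α x = (1 - α) α x + α (1 - α) y = 2 (x + y)`.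

In rank 32 take `K = E₈ ⊗ H` over `ℤ[α]`, where `H` is a positive definite unimodular Hermitian
lattice of rank 4. A factorization `2 H = P* P` embeds `K`, with doubled norms, in `E₈⁴` as a set
of vectors `x` whose entries agree modulo `α` and satisfy `x₀ - x₁ - x₂ + x₃ ∈ 2 E₈`. A nonzero
such `x` has norm at least `8`: four nonzero entries contribute at least `2` each; if some entry
vanishes then the others lie in `α E₈` and have norm at least `4` when nonzero; and an entry that
is the only nonzero one lies in `2 E₈`.
-/

open Matrix

section IntegralForm

theorem mulVec_dotProduct_mulVec_mulVec {R κ ι : Type*} [CommSemiring R] [Fintype κ] [Fintype ι]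
    (D : Matrix κ κ R) (C : Matrix κ ι R) (x y : ι → R) :
    (C *ᵥ x) ⬝ᵥ D *ᵥ C *ᵥ y = x ⬝ᵥ (Cᵀ * D * C) *ᵥ y := by
  rw [← vecMul_transpose, ← dotProduct_mulVec, mulVec_mulVec, mulVec_mulVec]

theorem posSemidef_map_intCast_of_smul_eq {κ ι : Type*} [Fintype κ] [Finite ι]
    {K : Matrix ι ι ℤ} {D : Matrix κ κ ℤ} {C : Matrix κ ι ℤ} {n : ℤ} (hn : 0 < n)
    (hK : n • K = Cᵀ * D * C) (hD : (D.map (Int.cast : ℤ → ℝ)).PosSemidef) :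
    (K.map (Int.cast : ℤ → ℝ)).PosSemidef := by
  have hcast : (n : ℝ) • K.map (Int.cast : ℤ → ℝ)
      = (C.map (Int.cast : ℤ → ℝ))ᴴ * D.map (Int.cast : ℤ → ℝ) * C.map (Int.cast : ℤ → ℝ) := by
    have hmap := congrArg (fun M ↦ M.map (Int.castRingHom ℝ)) hK
    rw [Matrix.map_mul, Matrix.map_mul] at hmap
    rw [conjTranspose_eq_transpose_of_trivial, ← transpose_map]
    refine Eq.trans ?_ hmap
    ext i j
    simp
  have hn' : (0 : ℝ) < n := Int.cast_pos.mpr hn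
  have hpos := hD.conjTranspose_mul_mul_same (C.map (Int.cast : ℤ → ℝ))
  rw [← hcast] at hpos
  simpa [smul_smul, hn'.ne'] using hpos.smul (inv_nonneg.mpr hn'.le)

variable {ι : Type*} [Fintype ι]

theorem even_dotProduct_mulVec_self {G : Matrix ι ι ℤ} (hG : Gᵀ = G) (hdiag : ∀ i, Even (G i i))
    (x : ι → ℤ) : Even (x ⬝ᵥ G *ᵥ x) := by
  have hexpand : x ⬝ᵥ G *ᵥ x = ∑ p : ι × ι, x p.1 * G p.1 p.2 * x p.2 := by
    simp only [dotProduct, mulVec, Finset.mul_sum, Fintype.sum_prod_type, mul_assoc]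
  have hsymm (i j : ι) : G j i = G i j := congrFun (congrFun hG i) j
  rw [← ZMod.intCast_eq_zero_iff_even, hexpand, Int.cast_sum]
  -- Off-diagonal terms cancel in pairs modulo 2.
  refine Finset.sum_involution (fun p _ ↦ p.swap) (fun p _ ↦ ?_) (fun p _ hp hswap ↦ hp ?_)
    (fun _ _ ↦ Finset.mem_univ _) (fun p _ ↦ p.swap_swap)
  · have hp : x p.2 * G p.2 p.1 * x p.1 = x p.1 * G p.1 p.2 * x p.2 := by rw [hsymm]; ring
    rw [Prod.fst_swap, Prod.snd_swap, hp, CharTwo.add_self_eq_zero]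
  · have hp' : p.2 = p.1 := congrArg Prod.fst hswap
    rw [ZMod.intCast_eq_zero_iff_even, hp']
    exact ((hdiag _).mul_left _).mul_right _

/-- The values at nonzero vectors of the form `xᵀ G x`; the least of them is the minimum norm. -/
def nonzeroValues (G : Matrix ι ι ℤ) : Set ℤ :=
  {n | ∃ x : ι → ℤ, x ≠ 0 ∧ x ⬝ᵥ G *ᵥ x = n}

/-- `G` is the Gram matrix of an even positive definite lattice. -/
structure IsEvenPosDef (G : Matrix ι ι ℤ) : Prop where
  posDef : (G.map (Int.cast : ℤ → ℝ)).PosDef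
  even : ∀ x, Even (x ⬝ᵥ G *ᵥ x)

namespace IsEvenPosDef

variable {G : Matrix ι ι ℤ}

theorem of_posSemidef [DecidableEq ι] (hG : (G.map (Int.cast : ℤ → ℝ)).PosSemidef)
    (hdet : G.det ≠ 0) (hdiag : ∀ i, Even (G i i)) : IsEvenPosDef G where
  posDef := by
    rw [hG.posDef_iff_det_ne_zero, ← Int.cast_det]
    exact Int.cast_ne_zero.mpr hdet
  even := by
    have hsymm := hG.isHermitian.eq
    rw [conjTranspose_eq_transpose_of_trivial, ← transpose_map] at hsymm
    exact even_dotProduct_mulVec_self (map_injective Int.cast_injective hsymm) hdiag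

theorem dotProduct_mulVec_pos (hG : IsEvenPosDef G) {x : ι → ℤ} (hx : x ≠ 0) :
    0 < x ⬝ᵥ G *ᵥ x := by
  have hcast : (fun i ↦ (x i : ℝ)) ≠ 0 := fun h ↦
    hx (funext fun i ↦ Int.cast_eq_zero.mp (congrFun h i))
  have hpos := hG.posDef.dotProduct_mulVec_pos hcast
  simp only [dotProduct, mulVec, Pi.star_apply, star_trivial, map_apply] at hpos
  exact_mod_cast hpos

theorem dotProduct_mulVec_nonneg (hG : IsEvenPosDef G) (x : ι → ℤ) : 0 ≤ x ⬝ᵥ G *ᵥ x := by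
  rcases eq_or_ne x 0 with rfl | hx
  · rw [zero_dotProduct]
  · exact (hG.dotProduct_mulVec_pos hx).le

theorem two_le_dotProduct_mulVec (hG : IsEvenPosDef G) {x : ι → ℤ} (hx : x ≠ 0) :
    2 ≤ x ⬝ᵥ G *ᵥ x :=
  Int.le_of_dvd (hG.dotProduct_mulVec_pos hx) (hG.even x).two_dvd

theorem eight_le_dotProduct_mulVec_two_smul (hG : IsEvenPosDef G) {x : ι → ℤ} (hx : x ≠ 0) :
    8 ≤ ((2 : ℤ) • x) ⬝ᵥ G *ᵥ ((2 : ℤ) • x) := by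
  rw [mulVec_smul, dotProduct_smul, smul_dotProduct, smul_eq_mul, smul_eq_mul]
  linarith [hG.two_le_dotProduct_mulVec hx]

end IsEvenPosDef

end IntegralForm

section Realization

variable {ι : Type*} [Fintype ι]

theorem exists_gram_eq_of_posSemidef (e : OrthonormalBasis ι ℝ V) {S : Matrix ι ι ℝ}
    (hS : S.PosSemidef) : ∃ v : ι → V, gram ℝ v = S := by
  classical
  open scoped MatrixOrder in
  obtain ⟨C, rfl⟩ := CStarAlgebra.nonneg_iff_eq_star_mul_self.mp hS.nonneg
  refine ⟨fun j ↦ e.repr.symm (WithLp.toLp 2 (C.col j)), ?_⟩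
  rw [gram_eq_conjTranspose_mul e, star_eq_conjTranspose]
  congr <;> ext i j <;> simp

/-- An isometric `ℤ`-linear copy in `V` of the lattice `ℤ^ι` with bilinear form `s · xᵀ G y`. -/
def IsRealization (s : ℝ) (G : Matrix ι ι ℤ) (f : (ι → ℤ) →ₗ[ℤ] V) : Prop :=
  ∀ x y, ⟪f x, f y⟫ = s * ((x ⬝ᵥ G *ᵥ y : ℤ) : ℝ)

theorem exists_isRealization (e : OrthonormalBasis ι ℝ V) {s : ℝ} (hs : 0 ≤ s)
    {G : Matrix ι ι ℤ} (hG : (G.map (Int.cast : ℤ → ℝ)).PosSemidef) :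
    ∃ f : (ι → ℤ) →ₗ[ℤ] V, IsRealization s G f := by
  obtain ⟨v, hv⟩ := exists_gram_eq_of_posSemidef e (hG.smul hs)
  refine ⟨Fintype.linearCombination ℤ v, fun x y ↦ ?_⟩
  have hcast (z : ι → ℤ) : ∑ i, (z i : ℝ) • v i = Fintype.linearCombination ℤ v z := by
    simp only [Fintype.linearCombination_apply, Int.cast_smul_eq_zsmul]
  have hgram := star_dotProduct_gram_mulVec (𝕜 := ℝ) v (fun i ↦ (x i : ℝ)) (fun i ↦ (y i : ℝ))
  rw [hcast, hcast, hv] at hgram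
  rw [← hgram, smul_mulVec, dotProduct_smul, smul_eq_mul]
  simp [dotProduct, mulVec]

namespace IsRealization

variable {s : ℝ} {G : Matrix ι ι ℤ} {f : (ι → ℤ) →ₗ[ℤ] V}

theorem injective [DecidableEq ι] (hf : IsRealization s G f) (hs : s ≠ 0) (hG : G.det ≠ 0) :
    Function.Injective f := by
  refine (injective_iff_map_eq_zero f).mpr fun y hy ↦ ?_
  refine eq_zero_of_mulVec_eq_zero hG (dotProduct_eq_zero _ fun x ↦ ?_)
  have hinner : s * ((x ⬝ᵥ G *ᵥ y : ℤ) : ℝ) = 0 := by rw [← hf x y, hy, inner_zero_right]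
  rw [dotProduct_comm]
  exact_mod_cast (mul_eq_zero.mp hinner).resolve_left hs

theorem gram_single [DecidableEq ι] (hf : IsRealization s G f) :
    gram ℝ (fun i ↦ f (Pi.single i 1)) = s • G.map (Int.cast : ℤ → ℝ) := by
  ext i j
  simp [gram_apply, hf _ _]

theorem exists_basis_det_eq_one [DecidableEq ι] (hf : IsRealization s G f) (hG : G.det = 1) {r : ℝ}
    (hrs : r * s = 1) :
    ∃ (n : ℕ) (b : Basis (Fin n) ℤ (LinearMap.range f)),
      (Matrix.of fun i j ↦ r * ⟪(b i : V), (b j : V)⟫).det = 1 := by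
  have hinj := hf.injective (right_ne_zero_of_mul_eq_one hrs) (hG ▸ one_ne_zero)
  let σ := Fintype.equivFin ι
  let b := ((Pi.basisFun ℤ ι).map (LinearEquiv.ofInjective f hinj)).reindex σ
  refine ⟨_, b, ?_⟩
  have hgram : (Matrix.of fun i j ↦ r * ⟪(b i : V), (b j : V)⟫)
      = (G.map (Int.cast : ℤ → ℝ)).submatrix σ.symm σ.symm := by
    ext i j
    simp [b, hf _ _, ← mul_assoc, hrs]
  rw [hgram, det_submatrix_equiv_self, ← Int.cast_det, hG, Int.cast_one]

theorem isLat_range [FiniteDimensional ℝ V] [DecidableEq ι] (hf : IsRealization s G f)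
    (hs : s ≠ 0) (hG : G.det ≠ 0) (hV : Fintype.card ι = finrank ℝ V) :
    IsLat (LinearMap.range f) := by
  have hindep : LinearIndependent ℝ fun i ↦ f (Pi.single i 1) := by
    apply linearIndependent_of_det_gram_ne_zero
    rw [hf.gram_single, det_smul, ← Int.cast_det]
    exact mul_ne_zero (pow_ne_zero _ hs) (Int.cast_ne_zero.mpr hG)
  refine ⟨.of_finite, top_unique ((hindep.span_eq_top_of_card_eq_finrank' hV).ge.trans ?_)⟩
  exact Submodule.span_mono (Set.range_subset_iff.mpr fun i ↦ ⟨_, rfl⟩)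

theorem minNorm_range (hf : IsRealization s G f) (hs : 0 ≤ s) (hinj : Function.Injective f)
    {m : ℤ} (hm : IsLeast (nonzeroValues G) m) : minNorm (LinearMap.range f) = s * m := by
  have hvalues : {r : ℝ | ∃ x ∈ LinearMap.range f, x ≠ 0 ∧ ⟪x, x⟫ = r}
      = (fun n : ℤ ↦ s * n) '' nonzeroValues G := by
    ext r
    constructor
    · rintro ⟨_, ⟨x, rfl⟩, hx, rfl⟩
      exact ⟨_, ⟨x, fun h ↦ hx (h ▸ map_zero f), rfl⟩, (hf x x).symm⟩
    · rintro ⟨_, ⟨x, hx, rfl⟩, rfl⟩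
      exact ⟨f x, ⟨x, rfl⟩, (map_ne_zero_iff f hinj).mpr hx, hf x x⟩
  have hmono : Monotone fun n : ℤ ↦ s * (n : ℝ) := fun m n hmn ↦
    mul_le_mul_of_nonneg_left (Int.cast_le.mpr hmn) hs
  rw [minNorm, hvalues]
  exact (hmono.map_isLeast hm).csInf_eq

theorem isIntegralLat_range (hf : IsRealization 1 G f) : IsIntegralLat (LinearMap.range f) := by
  rintro _ ⟨x, rfl⟩ _ ⟨y, rfl⟩
  exact ⟨x ⬝ᵥ G *ᵥ y, by rw [hf, one_mul]⟩

theorem isEvenLat_range (hf : IsRealization 1 G f) (hG : ∀ x, Even (x ⬝ᵥ G *ᵥ x)) :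
    IsEvenLat (LinearMap.range f) := by
  refine ⟨hf.isIntegralLat_range, ?_⟩
  rintro _ ⟨x, rfl⟩
  obtain ⟨n, hn⟩ := (hG x).two_dvd
  exact ⟨n, by rw [hf, one_mul, hn, Int.cast_mul, Int.cast_ofNat]⟩

theorem isUnimodularLat_range [DecidableEq ι] (hf : IsRealization 1 G f) (hG : G.det = 1) :
    IsUnimodularLat (LinearMap.range f) := by
  simpa only [IsUnimodularLat, one_mul] using hf.exists_basis_det_eq_one hG (mul_one 1)

theorem sqrtTwoEvenUnimod_range [DecidableEq ι] (hf : IsRealization (1 / 2) G f)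
    (hG : ∀ x, Even (x ⬝ᵥ G *ᵥ x)) (hdet : G.det = 1) :
    SqrtTwoEvenUnimod (LinearMap.range f) := by
  refine ⟨?_, ?_, hf.exists_basis_det_eq_one hdet (by norm_num)⟩
  · rintro _ ⟨x, rfl⟩
    obtain ⟨n, hn⟩ := (hG x).two_dvd
    exact ⟨n, by rw [hf, hn]; push_cast; ring⟩
  · rintro _ ⟨x, rfl⟩ _ ⟨y, rfl⟩
    exact ⟨x ⬝ᵥ G *ᵥ y, by rw [hf]; ring⟩

end IsRealization

end Realization

section Kleinian

section Endomorphism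

variable {R W W' : Type*} [CommRing R] [AddCommGroup W] [Module R W] [AddCommGroup W'] [Module R W']

theorem range_comp_sup_range_comp_one_sub (f : W →ₗ[R] W') (a : Module.End R W) :
    LinearMap.range (f ∘ₗ a) ⊔ LinearMap.range (f ∘ₗ (1 - a)) = LinearMap.range f := by
  have hle (b : Module.End R W) : LinearMap.range (f ∘ₗ b) ≤ LinearMap.range f :=
    LinearMap.range_comp_le_range b f
  refine le_antisymm (sup_le (hle a) (hle (1 - a))) ?_
  rintro _ ⟨x, rfl⟩
  rw [← add_sub_cancel (a x) x, map_add]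
  exact Submodule.add_mem_sup ⟨x, rfl⟩ ⟨x, rfl⟩

theorem range_comp_inf_range_comp_one_sub {f : W →ₗ[R] W'} (hf : Function.Injective f)
    {a : Module.End R W} (ha : a * (1 - a) = 2) :
    LinearMap.range (f ∘ₗ a) ⊓ LinearMap.range (f ∘ₗ (1 - a)) = (2 : R) • LinearMap.range f := by
  have hconj (x : W) : a ((1 - a) x) = (2 : R) • x := by
    rw [← Module.End.mul_apply, ha, ofNat_smul_eq_nsmul, Module.End.ofNat_apply]
  have hconj' (x : W) : (1 - a) (a x) = (2 : R) • x := by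
    rw [← hconj, LinearMap.sub_apply, LinearMap.sub_apply, map_sub]; rfl
  ext v
  rw [Submodule.mem_inf, Submodule.mem_smul_pointwise_iff_exists]
  constructor
  · rintro ⟨⟨x, rfl⟩, y, hy⟩
    have hxy : (1 - a) y = a x := hf hy
    have hsum : a x = (2 : R) • (x + y) := by
      calc a x = (1 - a) (a x) + a (a x) := by simp
        _ = (1 - a) (a x) + a ((1 - a) y) := by rw [hxy]
        _ = (2 : R) • (x + y) := by rw [hconj, hconj', smul_add]
    exact ⟨f (x + y), ⟨_, rfl⟩, by rw [← map_smul, ← hsum, LinearMap.comp_apply]⟩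
  · rintro ⟨_, ⟨x, rfl⟩, rfl⟩
    rw [← map_smul]
    exact ⟨⟨_, congrArg f (hconj x)⟩, ⟨_, congrArg f (hconj' x)⟩⟩

end Endomorphism

variable {ι : Type*} [Fintype ι] [DecidableEq ι]

/-- `A` is multiplication by `α = (1 + √-7) / 2` for a `ℤ[α]`-module structure on `ℤ^ι`, with
the adjoint of `α` under `xᵀ G y` equal to its conjugate `1 - α`; note `α * (1 - α) = 2`. -/
structure IsKleinian_s18 (G A : Matrix ι ι ℤ) : Prop where
  adjoint : Aᵀ * G = G * (1 - A)
  mul_conj : A * (1 - A) = 2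

namespace IsKleinian_s18

variable {G A : Matrix ι ι ℤ}

theorem conj_mul (h : IsKleinian_s18 G A) : (1 - A) * A = 2 := by
  rw [← h.mul_conj, mul_sub, sub_mul, mul_one, one_mul]

theorem conj (h : IsKleinian_s18 G A) : IsKleinian_s18 G (1 - A) where
  adjoint := by
    rw [transpose_sub, transpose_one, sub_mul, h.adjoint]; noncomm_ring
  mul_conj := by rw [sub_sub_cancel, h.conj_mul]

theorem dotProduct_mulVec_mulVec (h : IsKleinian_s18 G A) (x y : ι → ℤ) :
    (A *ᵥ x) ⬝ᵥ G *ᵥ A *ᵥ y = 2 * (x ⬝ᵥ G *ᵥ y) := by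
  have hform : Aᵀ * G * A = 2 * G := by
    rw [h.adjoint, mul_assoc, h.conj_mul, (Commute.ofNat_right G 2).eq]
  rw [mulVec_dotProduct_mulVec_mulVec, hform, ← mulVec_mulVec, ofNat_mulVec, dotProduct_smul,
    smul_eq_mul]

theorem isRealization_comp (h : IsKleinian_s18 G A) {s : ℝ} {f : (ι → ℤ) →ₗ[ℤ] V}
    (hf : IsRealization (s / 2) G f) : IsRealization s G (f ∘ₗ toLin' A) := fun x y ↦ by
  rw [LinearMap.comp_apply, LinearMap.comp_apply, toLin'_apply, toLin'_apply, hf,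
    h.dotProduct_mulVec_mulVec]
  push_cast
  ring

theorem isPolarization_range (h : IsKleinian_s18 G A) {f : (ι → ℤ) →ₗ[ℤ] V}
    (hf : IsRealization (1 / 2) G f) (hinj : Function.Injective f) :
    IsPolarization (LinearMap.range f) (LinearMap.range (f ∘ₗ toLin' A))
      (LinearMap.range (f ∘ₗ toLin' (1 - A))) := by
  have hA : toLin' A * (1 - toLin' A) = 2 := by
    have hmap := congrArg toLinAlgEquiv' h.mul_conj
    rwa [map_mul, map_sub, map_one, map_ofNat] at hmap
  have hsub : toLin' (1 - A) = 1 - toLin' A := by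
    rw [map_sub, toLin'_one]; rfl
  have hM : IsRealization 1 G (f ∘ₗ toLin' A) := h.isRealization_comp hf
  have hN : IsRealization 1 G (f ∘ₗ toLin' (1 - A)) := h.conj.isRealization_comp hf
  refine ⟨LinearMap.range_comp_le_range _ _, LinearMap.range_comp_le_range _ _,
    hM.isIntegralLat_range, hN.isIntegralLat_range, ?_, ?_⟩
  · rw [hsub, range_comp_sup_range_comp_one_sub]
  · rw [hsub, range_comp_inf_range_comp_one_sub hinj hA]

end IsKleinian_s18

theorem IsKleinian_s18.exists_polarization {G A : Matrix ι ι ℤ} (h : IsKleinian_s18 G A)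
    (hG : IsEvenPosDef G) (hdet : G.det = 1) {m : ℤ} (hm : IsLeast (nonzeroValues G) m)
    (e : OrthonormalBasis ι ℝ V) :
    ∃ Υ M N : Submodule ℤ V,
      IsLat Υ ∧ SqrtTwoEvenUnimod Υ ∧ 2 * minNorm Υ = m ∧ IsPolarization Υ M N ∧
      IsLat M ∧ IsEvenLat M ∧ IsUnimodularLat M ∧
      IsLat N ∧ IsEvenLat N ∧ IsUnimodularLat N ∧ minNorm M = m ∧ minNorm N = m := by
  have : FiniteDimensional ℝ V := e.toBasis.finiteDimensional_of_finite
  have hV : Fintype.card ι = finrank ℝ V := (finrank_eq_card_basis e.toBasis).symm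
  have hdet₀ : G.det ≠ 0 := hdet ▸ one_ne_zero
  obtain ⟨f, hf⟩ := exists_isRealization e one_half_pos.le hG.posDef.posSemidef
  have hM : IsRealization 1 G (f ∘ₗ toLin' A) := h.isRealization_comp hf
  have hN : IsRealization 1 G (f ∘ₗ toLin' (1 - A)) := h.conj.isRealization_comp hf
  have hinj := hf.injective one_half_pos.ne' hdet₀
  refine ⟨LinearMap.range f, LinearMap.range (f ∘ₗ toLin' A),
    LinearMap.range (f ∘ₗ toLin' (1 - A)), hf.isLat_range one_half_pos.ne' hdet₀ hV,
    hf.sqrtTwoEvenUnimod_range hG.even hdet, ?_, h.isPolarization_range hf hinj,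
    hM.isLat_range one_ne_zero hdet₀ hV, hM.isEvenLat_range hG.even,
    hM.isUnimodularLat_range hdet, hN.isLat_range one_ne_zero hdet₀ hV,
    hN.isEvenLat_range hG.even, hN.isUnimodularLat_range hdet, ?_, ?_⟩
  · rw [hf.minNorm_range one_half_pos.le hinj hm]; ring
  · rw [hM.minNorm_range zero_le_one (hM.injective one_ne_zero hdet₀) hm, one_mul]
  · rw [hN.minNorm_range zero_le_one (hN.injective one_ne_zero hdet₀) hm, one_mul]

end Kleinian

section HermitianGram

variable {R : Type*} [Ring R]

/-- The Gram matrix of a unimodular Hermitian form of rank 4 over `ℤ[α]`, with `a` and `b` in the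
roles of `α` and its conjugate. -/
def hermitianGram (a b : R) : Matrix (Fin 4) (Fin 4) R :=
  !![2, a, a, 1; b, 2, 1, b; b, 1, 2, b; 1, a, a, 2]

/-- A matrix `P` with `P* P = 2 H`, where `H` is `hermitianGram`. It embeds the lattice of `2 H`
into the standard one, as the vectors with entries congruent modulo `α` and
`x₀ - x₁ - x₂ + x₃` divisible by `2`. -/
def glueMatrix (a : R) : Matrix (Fin 4) (Fin 4) R :=
  !![1, 0, 0, 0; 1, a, 0, 0; 1, 0, a, 0; 1, a, a, 2]

/-- The conjugate transpose of `glueMatrix a`, with `b` in the role of the conjugate of `a`. -/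
def glueMatrixStar (b : R) : Matrix (Fin 4) (Fin 4) R :=
  !![1, 1, 1, 1; 0, b, 0, b; 0, 0, b, b; 0, 0, 0, 2]

theorem hermitianGram_mul_hermitianGram_neg {a b : R} (hab : a * b = 2) (hba : b * a = 2) :
    hermitianGram a b * hermitianGram (-a) (-b) = 1 := by
  ext i j
  fin_cases i <;> fin_cases j <;>
    simp [hermitianGram, mul_apply, Fin.sum_univ_four, hab, hba, mul_two, two_mul] <;> norm_num

theorem glueMatrixStar_mul_glueMatrix {a b : R} (hba : b * a = 2) :
    glueMatrixStar b * glueMatrix a = 2 * hermitianGram a b := by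
  rw [two_mul]
  ext i j
  fin_cases i <;> fin_cases j <;>
    simp [glueMatrixStar, glueMatrix, hermitianGram, mul_apply, Fin.sum_univ_four, hba, mul_two,
      two_mul] <;>
    norm_num

end HermitianGram

section BlockMatrix

open scoped Kronecker

variable {R κ ι : Type*} [CommRing R] [Fintype κ] [Fintype ι]

theorem compRingEquiv_mulVec_uncurry (M : Matrix κ κ (Matrix ι ι R)) (x : κ → ι → R) :
    compRingEquiv κ ι R M *ᵥ Function.uncurry x
      = Function.uncurry fun k ↦ ∑ l, M k l *ᵥ x l := by
  ext ⟨k, i⟩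
  simp [mulVec, dotProduct, Fintype.sum_prod_type]

variable [DecidableEq κ]

theorem uncurry_dotProduct_one_kronecker_mulVec_uncurry (G : Matrix ι ι R) (x y : κ → ι → R) :
    Function.uncurry x ⬝ᵥ ((1 : Matrix κ κ R) ⊗ₖ G) *ᵥ Function.uncurry y
      = ∑ k, x k ⬝ᵥ G *ᵥ y k := by
  simp [mulVec, dotProduct, Fintype.sum_prod_type, one_apply, ite_mul]

theorem one_kronecker_mul_compRingEquiv_apply (G : Matrix ι ι R) (M : Matrix κ κ (Matrix ι ι R))
    (k l : κ) (i j : ι) :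
    (((1 : Matrix κ κ R) ⊗ₖ G) * compRingEquiv κ ι R M) (k, i) (l, j) = (G * M k l) i j := by
  simp [mul_apply, Fintype.sum_prod_type, one_apply]

theorem transpose_compRingEquiv_mul_one_kronecker {G : Matrix ι ι R}
    {M N : Matrix κ κ (Matrix ι ι R)} (h : ∀ k l, (M l k)ᵀ * G = G * N k l) :
    (compRingEquiv κ ι R M)ᵀ * ((1 : Matrix κ κ R) ⊗ₖ G)
      = ((1 : Matrix κ κ R) ⊗ₖ G) * compRingEquiv κ ι R N := by
  ext ⟨k, i⟩ ⟨l, j⟩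
  rw [one_kronecker_mul_compRingEquiv_apply, ← h k l]
  simp [mul_apply, Fintype.sum_prod_type, one_apply]

end BlockMatrix

section TensorGram

open scoped Kronecker

variable {ι : Type*} [Fintype ι] [DecidableEq ι] {G A : Matrix ι ι ℤ}

/-- The Gram matrix of the tensor product over `ℤ[α]` of the `ℤ[α]`-lattice `(G, A)` with the
Hermitian lattice `hermitianGram`. -/
def tensorGram (G A : Matrix ι ι ℤ) : Matrix (Fin 4 × ι) (Fin 4 × ι) ℤ :=
  (1 ⊗ₖ G) * compRingEquiv (Fin 4) ι ℤ (hermitianGram A (1 - A))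

theorem even_tensorGram_diag (G A : Matrix ι ι ℤ) (p : Fin 4 × ι) : Even (tensorGram G A p p) := by
  have hdiag : hermitianGram A (1 - A) p.1 p.1 = 2 := by
    rcases p with ⟨k, -⟩
    fin_cases k <;> rfl
  rw [tensorGram, one_kronecker_mul_compRingEquiv_apply, hdiag, mul_two]
  exact ⟨_, rfl⟩

namespace IsKleinian_s18

theorem transpose_conj_mul (h : IsKleinian_s18 G A) : (1 - Aᵀ) * G = G * A := by
  simpa using h.conj.adjoint

theorem transpose_glueMatrix_mul (h : IsKleinian_s18 G A) :
    (compRingEquiv (Fin 4) ι ℤ (glueMatrix A))ᵀ * (1 ⊗ₖ G)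
      = (1 ⊗ₖ G) * compRingEquiv (Fin 4) ι ℤ (glueMatrixStar (1 - A)) := by
  have htwo : 2 * G = G * 2 := (Commute.ofNat_left 2 G).eq
  refine transpose_compRingEquiv_mul_one_kronecker fun k l ↦ ?_
  fin_cases k <;> fin_cases l <;> simp [glueMatrix, glueMatrixStar, h.adjoint, htwo]

theorem two_smul_tensorGram (h : IsKleinian_s18 G A) :
    (2 : ℤ) • tensorGram G A = (compRingEquiv (Fin 4) ι ℤ (glueMatrix A))ᵀ * (1 ⊗ₖ G)
      * compRingEquiv (Fin 4) ι ℤ (glueMatrix A) := by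
  rw [h.transpose_glueMatrix_mul, mul_assoc, ← map_mul, glueMatrixStar_mul_glueMatrix h.conj_mul,
    two_mul, map_add, mul_add, two_smul, tensorGram]

theorem posSemidef_tensorGram (h : IsKleinian_s18 G A)
    (hG : (G.map (Int.cast : ℤ → ℝ)).PosSemidef) :
    ((tensorGram G A).map (Int.cast : ℤ → ℝ)).PosSemidef := by
  refine posSemidef_map_intCast_of_smul_eq two_pos h.two_smul_tensorGram ?_
  have hD : ((1 : Matrix (Fin 4) (Fin 4) ℤ) ⊗ₖ G).map (Int.cast : ℤ → ℝ)
      = 1 ⊗ₖ G.map (Int.cast : ℤ → ℝ) := by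
    ext p q
    simp [one_apply]
  exact hD ▸ PosSemidef.one.kronecker hG

theorem det_tensorGram (h : IsKleinian_s18 G A) (hG : (G.map (Int.cast : ℤ → ℝ)).PosDef) :
    (tensorGram G A).det = G.det ^ 4 := by
  have hG_pos : 0 < G.det := by
    have hcast := hG.det_pos
    rwa [← Int.cast_det, Int.cast_pos] at hcast
  have hnonneg : 0 ≤ (tensorGram G A).det := by
    have hcast := (h.posSemidef_tensorGram hG.posSemidef).det_nonneg
    rwa [← Int.cast_det, Int.cast_nonneg_iff] at hcast
  have hinv : compRingEquiv (Fin 4) ι ℤ (hermitianGram A (1 - A))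
      * compRingEquiv (Fin 4) ι ℤ (hermitianGram (-A) (-(1 - A))) = 1 := by
    rw [← map_mul, hermitianGram_mul_hermitianGram_neg h.mul_conj h.conj_mul, map_one]
  rw [tensorGram, det_mul, det_kronecker, det_one, one_pow, one_mul, Fintype.card_fin] at hnonneg ⊢
  rcases Int.isUnit_iff.mp (isUnit_det_of_right_inverse hinv) with hone | hneg
  · rw [hone, mul_one]
  · rw [hneg] at hnonneg
    linarith [pow_pos hG_pos 4]

theorem isEvenPosDef_tensorGram (h : IsKleinian_s18 G A)
    (hG : (G.map (Int.cast : ℤ → ℝ)).PosDef) : IsEvenPosDef (tensorGram G A) := by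
  refine .of_posSemidef (h.posSemidef_tensorGram hG.posSemidef) ?_ (even_tensorGram_diag G A)
  rw [h.det_tensorGram hG]
  refine pow_ne_zero 4 fun hdet ↦ hG.det_pos.ne' ?_
  rw [← Int.cast_det, hdet, Int.cast_zero]

theorem isKleinian_tensorGram (h : IsKleinian_s18 G A) :
    IsKleinian_s18 (tensorGram G A) (compRingEquiv (Fin 4) ι ℤ (scalar (Fin 4) A)) where
  adjoint := by
    have hadj : (compRingEquiv (Fin 4) ι ℤ (scalar (Fin 4) A))ᵀ * (1 ⊗ₖ G)
        = (1 ⊗ₖ G) * compRingEquiv (Fin 4) ι ℤ (scalar (Fin 4) (1 - A)) := by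
      refine transpose_compRingEquiv_mul_one_kronecker fun k l ↦ ?_
      rcases eq_or_ne k l with rfl | hkl
      · simp [h.adjoint]
      · simp [hkl, hkl.symm]
    have hcomm : Commute (scalar (Fin 4) (1 - A)) (hermitianGram A (1 - A)) := by
      rw [scalar_commute_iff]
      ext1 k l
      fin_cases k <;> fin_cases l <;>
        simp [hermitianGram, mul_sub, sub_mul, mul_two, two_mul, sub_add_sub_comm,
          one_add_one_eq_two]
    rw [tensorGram, ← mul_assoc, hadj, mul_assoc, ← map_mul, hcomm.eq, map_mul, mul_assoc,
      map_sub, map_sub, map_one, map_one]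
  mul_conj := by
    rw [← map_one (compRingEquiv (Fin 4) ι ℤ), ← map_one (scalar (Fin 4)), ← map_sub, ← map_sub,
      ← map_mul, ← map_mul, h.mul_conj, map_ofNat, map_ofNat]

end IsKleinian_s18

end TensorGram

section Minimum

variable {ι : Type*} [Fintype ι]

/-- Multiplication by `glueMatrix A` on `(ℤ^ι)⁴`. -/
def glueMap (A : Matrix ι ι ℤ) (c : Fin 4 → ι → ℤ) : Fin 4 → ι → ℤ :=
  ![c 0, c 0 + A *ᵥ c 1, c 0 + A *ᵥ c 2, c 0 + A *ᵥ c 1 + A *ᵥ c 2 + (2 : ℤ) • c 3]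

theorem sum_smul_glueMap (A : Matrix ι ι ℤ) (c : Fin 4 → ι → ℤ) :
    ∑ k, (![1, -1, -1, 1] : Fin 4 → ℤˣ) k • glueMap A c k = (2 : ℤ) • c 3 := by
  simp [Fin.sum_univ_four, glueMap]
  abel

variable [DecidableEq ι] {G A : Matrix ι ι ℤ}

namespace IsKleinian_s18

theorem four_le_dotProduct_mulVec (h : IsKleinian_s18 G A) (hG : IsEvenPosDef G) {y : ι → ℤ}
    (hy : A *ᵥ y ≠ 0) : 4 ≤ (A *ᵥ y) ⬝ᵥ G *ᵥ A *ᵥ y := by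
  have hy0 : y ≠ 0 := fun h0 ↦ hy (by rw [h0, mulVec_zero])
  rw [h.dotProduct_mulVec_mulVec]
  linarith [hG.two_le_dotProduct_mulVec hy0]

section Sum

variable {κ : Type*} [Fintype κ] {x : κ → ι → ℤ} {s : κ → ℤˣ} {z : ι → ℤ}

theorem eight_le_sum_of_apply_eq_zero (h : IsKleinian_s18 G A) (hG : IsEvenPosDef G) (hx : x ≠ 0)
    (hsub : ∀ k l, ∃ y, x k - x l = A *ᵥ y) (hsum : ∑ k, s k • x k = (2 : ℤ) • z) {k₀ : κ}
    (hk₀ : x k₀ = 0) : 8 ≤ ∑ k, x k ⬝ᵥ G *ᵥ x k := by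
  classical
  have hfour {k : κ} (hk : x k ≠ 0) : 4 ≤ x k ⬝ᵥ G *ᵥ x k := by
    obtain ⟨y, hy⟩ := hsub k k₀
    rw [hk₀, sub_zero] at hy
    rw [hy] at hk ⊢
    exact h.four_le_dotProduct_mulVec hG hk
  obtain ⟨k, hk⟩ := Function.ne_iff.mp hx
  by_cases hex : ∃ l ≠ k, x l ≠ 0
  · obtain ⟨l, hlk, hl⟩ := hex
    calc (8 : ℤ) ≤ ∑ m ∈ {k, l}, x m ⬝ᵥ G *ᵥ x m := by
          rw [Finset.sum_pair hlk.symm]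
          linarith [hfour hk, hfour hl]
      _ ≤ ∑ m, x m ⬝ᵥ G *ᵥ x m :=
          Finset.sum_le_univ_sum_of_nonneg fun m ↦ hG.dotProduct_mulVec_nonneg (x m)
  · have hzero (l : κ) (hl : l ≠ k) : x l = 0 := of_not_not fun hne ↦ hex ⟨l, hl, hne⟩
    have hxk : x k = (2 : ℤ) • (s k • z) := by
      rw [Finset.sum_eq_single k (fun l _ hl ↦ by rw [hzero l hl, smul_zero]) (by simp)] at hsum
      rw [smul_comm, ← hsum, smul_smul, Int.units_mul_self, one_smul]
    have hz : s k • z ≠ 0 := fun h0 ↦ hk (by rw [hxk, h0, smul_zero]; rfl)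
    calc (8 : ℤ) ≤ x k ⬝ᵥ G *ᵥ x k := hxk ▸ hG.eight_le_dotProduct_mulVec_two_smul hz
      _ ≤ ∑ m, x m ⬝ᵥ G *ᵥ x m :=
          Finset.single_le_sum (fun m _ ↦ hG.dotProduct_mulVec_nonneg (x m)) (Finset.mem_univ k)

theorem eight_le_sum_dotProduct_mulVec (h : IsKleinian_s18 G A) (hG : IsEvenPosDef G)
    (hκ : 4 ≤ Fintype.card κ) (hx : x ≠ 0) (hsub : ∀ k l, ∃ y, x k - x l = A *ᵥ y)
    (hsum : ∑ k, s k • x k = (2 : ℤ) • z) : 8 ≤ ∑ k, x k ⬝ᵥ G *ᵥ x k := by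
  by_cases hall : ∀ k, x k ≠ 0
  · calc (8 : ℤ) ≤ ∑ _k : κ, 2 := by
          rw [Finset.sum_const, Finset.card_univ, nsmul_eq_mul]
          omega
      _ ≤ ∑ k, x k ⬝ᵥ G *ᵥ x k :=
          Finset.sum_le_sum fun k _ ↦ hG.two_le_dotProduct_mulVec (hall k)
  · obtain ⟨k₀, hk₀⟩ := not_forall_not.mp hall
    exact h.eight_le_sum_of_apply_eq_zero hG hx hsub hsum hk₀

end Sum

theorem exists_glueMap_sub_eq_mulVec (h : IsKleinian_s18 G A) (c : Fin 4 → ι → ℤ) (k l : Fin 4) :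
    ∃ y, glueMap A c k - glueMap A c l = A *ᵥ y := by
  have htwo (v : ι → ℤ) : (2 : ℤ) • v = A *ᵥ ((1 - A) *ᵥ v) := by
    rw [mulVec_mulVec, h.mul_conj, ofNat_mulVec]
  have hzero (k : Fin 4) : ∃ y, glueMap A c k = c 0 + A *ᵥ y := by
    fin_cases k
    · exact ⟨0, by simp [glueMap]⟩
    · exact ⟨c 1, rfl⟩
    · exact ⟨c 2, rfl⟩
    · exact ⟨c 1 + c 2 + (1 - A) *ᵥ c 3, by simp [glueMap, htwo, mulVec_add, add_assoc]⟩
  obtain ⟨y, hy⟩ := hzero k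
  obtain ⟨z, hz⟩ := hzero l
  exact ⟨y - z, by rw [hy, hz, mulVec_sub, add_sub_add_left_eq_sub]⟩

theorem two_mul_dotProduct_tensorGram_mulVec (h : IsKleinian_s18 G A) (c : Fin 4 → ι → ℤ) :
    2 * (Function.uncurry c ⬝ᵥ tensorGram G A *ᵥ Function.uncurry c)
      = ∑ k, glueMap A c k ⬝ᵥ G *ᵥ glueMap A c k := by
  have hglue : compRingEquiv (Fin 4) ι ℤ (glueMatrix A) *ᵥ Function.uncurry c
      = Function.uncurry (glueMap A c) := by
    rw [compRingEquiv_mulVec_uncurry]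
    congr with k
    fin_cases k <;> simp [glueMatrix, glueMap, Fin.sum_univ_four, ofNat_mulVec, add_assoc]
  rw [← uncurry_dotProduct_one_kronecker_mulVec_uncurry, ← hglue, mulVec_dotProduct_mulVec_mulVec,
    ← h.two_smul_tensorGram, smul_mulVec, dotProduct_smul, smul_eq_mul]

theorem isLeast_nonzeroValues_tensorGram (h : IsKleinian_s18 G A) (hG : IsEvenPosDef G)
    (hmin : 2 ∈ nonzeroValues G) : IsLeast (nonzeroValues (tensorGram G A)) 4 := by
  constructor
  · obtain ⟨r, hr, hr2⟩ := hmin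
    refine ⟨Function.uncurry (Pi.single 0 r), ?_, ?_⟩
    · intro h0
      exact hr (funext fun i ↦ by simpa using congrFun h0 (0, i))
    · have hsum := h.two_mul_dotProduct_tensorGram_mulVec (Pi.single 0 r)
      simp [glueMap, Fin.sum_univ_four, hr2] at hsum
      linarith
  · rintro _ ⟨x, hx, rfl⟩
    obtain ⟨c, rfl⟩ : ∃ c : Fin 4 → ι → ℤ, Function.uncurry c = x :=
      ⟨Function.curry x, Function.uncurry_curry x⟩
    have hpos := (h.isEvenPosDef_tensorGram hG.posDef).dotProduct_mulVec_pos hx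
    have hsum := h.two_mul_dotProduct_tensorGram_mulVec c
    have hglue : glueMap A c ≠ 0 := by
      intro h0
      simp [h0] at hsum
      linarith
    have height := h.eight_le_sum_dotProduct_mulVec hG (by simp) hglue
      (h.exists_glueMap_sub_eq_mulVec c) (sum_smul_glueMap A c)
    linarith

end IsKleinian_s18

end Minimum

section E8

/-- Multiplication by `α` on the `E₈` lattice, in the basis of simple roots; the rows listed are the
images of the simple roots. Label the coordinates of `ℝ⁸` by `∞` and the residues modulo `7`, and
let `S` be the skew matrix with `S ∞ j = 1`, `S i ∞ = -1` and `S i j` the Legendre symbol of `i - j`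
for residues `i`, `j`. Then `S² = -7`, and `α` is `(1 + S) / 2` acting on column vectors. -/
def e8Kleinian : Matrix (Fin 8) (Fin 8) ℤ :=
  !![0, -2, -1, -3, -3, -2, -2, -1;
     -2, -3, -5, -7, -6, -5, -3, -2;
     0, 2, 2, 3, 2, 1, 1, 0;
     0, 0, 0, 1, 1, 1, 0, 1;
     2, 2, 3, 4, 4, 3, 2, 0;
     -2, -2, -3, -5, -4, -2, -1, 0;
     2, 2, 3, 5, 3, 2, 2, 1;
     0, 0, 0, -1, 0, -1, -1, 0]ᵀ

theorem isKleinian_E₈ : IsKleinian_s18 CartanMatrix.E₈ e8Kleinian where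
  adjoint := by decide +kernel
  mul_conj := by decide +kernel

/-- Twice the simple roots of `E₈`, as columns, in orthonormal coordinates. -/
def e8Roots : Matrix (Fin 8) (Fin 8) ℤ :=
  !![1, -1, -1, -1, -1, -1, -1, 1;
     2, 2, 0, 0, 0, 0, 0, 0;
     -2, 2, 0, 0, 0, 0, 0, 0;
     0, -2, 2, 0, 0, 0, 0, 0;
     0, 0, -2, 2, 0, 0, 0, 0;
     0, 0, 0, -2, 2, 0, 0, 0;
     0, 0, 0, 0, -2, 2, 0, 0;
     0, 0, 0, 0, 0, -2, 2, 0]ᵀ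

theorem four_smul_E₈ : (4 : ℤ) • CartanMatrix.E₈ = e8Rootsᵀ * 1 * e8Roots := by
  decide +kernel

theorem isEvenPosDef_E₈ : IsEvenPosDef CartanMatrix.E₈ := by
  have hpos : (CartanMatrix.E₈.map (Int.cast : ℤ → ℝ)).PosSemidef :=
    posSemidef_map_intCast_of_smul_eq four_pos four_smul_E₈ (by simpa using PosSemidef.one)
  refine .of_posSemidef hpos (CartanMatrix.E₈_det ▸ one_ne_zero) fun i ↦ ?_
  rw [CartanMatrix.E₈_diag]
  exact even_two

theorem two_mem_nonzeroValues_E₈ : 2 ∈ nonzeroValues CartanMatrix.E₈ :=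
  ⟨Pi.single 0 1, by simp, by simp [CartanMatrix.E₈_diag]⟩

end E8

theorem statement18_general (hV : finrank ℝ V = 32) :
    ∃ Υ M N : Submodule ℤ V,
      IsLat Υ ∧ SqrtTwoEvenUnimod Υ ∧ 2 * minNorm Υ = 4 ∧
      IsPolarization Υ M N ∧
      IsLat M ∧ IsEvenLat M ∧ IsUnimodularLat M ∧
      IsLat N ∧ IsEvenLat N ∧ IsUnimodularLat N ∧
      minNorm M = 4 ∧ minNorm N = 4 := by
  have : FiniteDimensional ℝ V := .of_finrank_pos (hV ▸ by norm_num)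
  let e : OrthonormalBasis (Fin 4 × Fin 8) ℝ V :=
    (stdOrthonormalBasis ℝ V).reindex (Fintype.equivOfCardEq (by simp [hV]))
  have hK := isKleinian_E₈.isKleinian_tensorGram
  have hK_even := isKleinian_E₈.isEvenPosDef_tensorGram isEvenPosDef_E₈.posDef
  have hK_det : (tensorGram CartanMatrix.E₈ e8Kleinian).det = 1 := by
    rw [isKleinian_E₈.det_tensorGram isEvenPosDef_E₈.posDef, CartanMatrix.E₈_det, one_pow]
  have hK_min := isKleinian_E₈.isLeast_nonzeroValues_tensorGram isEvenPosDef_E₈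
    two_mem_nonzeroValues_E₈
  exact_mod_cast hK.exists_polarization hK_even hK_det hK_min e

/-- there exist a rank 32 lattice `Υ` with `√2·Υ` even unimodular of minimum
norm 4, and a polarization `M, N` of `Υ` by rank 32 even unimodular lattices with
`μ(M) = 4` and `μ(N) ∈ {2, 4}`. -/
theorem statement18 :
    ∃ Υ M N : Submodule ℤ (EuclideanSpace ℝ (Fin 32)),
      IsLat Υ ∧ SqrtTwoEvenUnimod Υ ∧ 2 * minNorm Υ = 4 ∧
      IsPolarization Υ M N ∧
      IsLat M ∧ IsEvenLat M ∧ IsUnimodularLat M ∧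
      IsLat N ∧ IsEvenLat N ∧ IsUnimodularLat N ∧
      minNorm M = 4 ∧ (minNorm N = 2 ∨ minNorm N = 4) := by
  obtain ⟨Υ, M, N, hΥ, hΥ_unimod, hΥ_min, hpol, hM, hM_even, hM_unimod, hN, hN_even, hN_unimod,
    hM_min, hN_min⟩ := statement18_general (finrank_euclideanSpace_fin (𝕜 := ℝ) (n := 32))
  exact ⟨Υ, M, N, hΥ, hΥ_unimod, hΥ_min, hpol, hM, hM_even, hM_unimod, hN, hN_even, hN_unimod,
    hM_min, .inr hN_min⟩
end
end
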